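/- Assume S ⊆ ℝ is discrete, Y ⊆ L²([0,a)) is a perfect set, Z ⊆ ℝ∖{0} is compact, and λY is gap-rich with exceptional set S for every λ ∈ Z. For any x ∈ per(ℤ,Y) of minimal period p, any ε > 0, and any compact K ⊆ ℝ∖S, there exist constants N₀ = N₀(x,K,ε,Z) ∈ ℕ and c₀ = c₀(x,K,ε,Z) > 0 such that for every N ≥ N₀ there exists y ∈ per(ℤ,Y) of period Np with sup_{j∈ℤ} ‖x_j − y_j‖_{L²} < ε and Leb(K ∩ σ(L_{λy})) ≤ e^{−c₀N} for all λ ∈ Z, where Leb denotes Lebesgue measure on ℝ. -/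

import Mathlib

/-!
Let `V` have period `L`, and let `D(E)` be its discriminant, the trace of the transfer matrix of
`-u'' + V u = E u` over one period. The spectrum is `{E | |D(E)| ≤ 2}`. For `|D| > 2` the resolvent comes from
the delay equation `g (x + L) + g (x - L) - D g x = F`, which is uniquely solvable in `L²` because the sum of
the two translations has norm at most `2` (`ThinSpec.not_mem_spec`); for `|D| ≤ 2` cut-off bounded solutions
form a Weyl sequence (`ThinSpec.mem_spec`).

Gap-richness provides, for every coupling `lam ∈ Z` and energy `E ∈ K`, an `ε`-approximant of `x` whose
discriminant at `(lam, E)` exceeds `2` in modulus (`ThinSpec.local_gap`). The discriminant is continuous in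
`(lam, E)` and `Z × K` is compact, so finitely many approximants `z i` and one `δ > 0` suffice, with
`|D| ≥ 2 (1 + δ)` for some `i` at every point (`ThinSpec.cover'`). The sequence `y` of period `N p` is obtained by
placing one after the other, for each `i`, a block consisting of many repetitions of `z i`
(`ThinSpec.blocks`). At each `(lam, E)` the transfer matrix across one of the blocks then has trace at least
`2 (1 + δ) ^ n`, with `n` proportional to `N` (`ThinSpec.block_disc`).

It remains to show that a large trace `G` across a part of the period makes the bands thin
(`ThinSpec.measure_bound`). Inside a band, `|D'| ≥ κ G √(4 - D²)` (`ThinSpec.deriv_lower`): the derivative is an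
integral of squares of solutions, and the `L²` norm of a solution over one cell controls its Cauchy data
(`ThinSpec.kappa`). Hence `arcsin (D / 2)` has derivative at least `κ G` in modulus on the bands, and the area
formula bounds their measure by `π n / (κ G)`, where `n` is the largest number of solutions of `D(E) = τ` in the
range of energies considered (`ThinSpec.band_measure`). This number is polynomial in the period by Jensen's
formula applied to the entire function `D - τ` (`ThinSpec.count`): `D` grows at most exponentially in a
polynomial of the period, and at the energy `i` it has a positive distance from `[-2, 2]` that does not depend
on the period (`ThinSpec.disc_lower`). Altogether the measure is at most a polynomial in `N` times
`(1 + δ) ^ (-n)`, which is exponentially small (`ThinSpec.final_arith`).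
-/

open Set MeasureTheory BoundedContinuousFunction

noncomputable section

/-- `L²(ℝ)`. -/
abbrev L2R := Lp ℝ 2 (volume : Measure ℝ)

/-- `L²([0,a))`. -/
abbrev L2I (a : ℝ) := Lp ℝ 2 (volume.restrict (Ico (0 : ℝ) a))

/-- `g` and `h` satisfy `(-d²/dx² + (V - E)) g = h` in the distributional sense. -/
def WeakSchrodingerEq (V : ℝ → ℝ) (E : ℝ) (g h : L2R) : Prop :=
  ∀ φ : ℝ → ℝ, ContDiff ℝ (⊤ : ℕ∞) φ → HasCompactSupport φ →
    ∫ x, g x * (-(deriv (deriv φ) x) + (V x - E) * φ x) = ∫ x, h x * φ x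

/-- The spectrum of the continuum Schrödinger operator `L_V = -d²/dx² + V` on
`L²(ℝ)`: `E` is in the spectrum iff there is no bounded operator `T` inverting
`L_V - E` (in the distributional sense). -/
def ContSpectrum (V : ℝ → ℝ) : Set ℝ :=
  {E : ℝ | ¬ ∃ T : L2R →L[ℝ] L2R,
      (∀ f : L2R, WeakSchrodingerEq V E (T f) f) ∧
      (∀ g h : L2R, WeakSchrodingerEq V E g h → T h = g)}

/-- A subset of ℝ is discrete if it has no accumulation points. -/
def IsDiscreteSet (S : Set ℝ) : Prop := ∀ x : ℝ, ¬ AccPt x (Filter.principal S)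

/-- Periodic extension `w^{♯ℤ}` of a finite word `w`. -/
def perExt {α : Type*} [Zero α] {m : ℕ} (w : Fin m → α) : ℤ → α :=
  fun n =>
    if h : 0 < m then
      w ⟨(n % (m : ℤ)).toNat, by
        have h1 : 0 ≤ n % (m : ℤ) := Int.emod_nonneg n (by exact_mod_cast h.ne')
        have h2 : n % (m : ℤ) < (m : ℤ) := Int.emod_lt_of_pos n (by exact_mod_cast h)
        omega⟩
    else 0

/-- Concatenation `y^♮ : ℝ → ℝ` of a bi-infinite sequence of pieces in
`L²([0,a))`: `y^♮(ja + t) = y_j(t)` for `t ∈ [0,a)`. -/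
def aggC (a : ℝ) (y : ℤ → L2I a) : ℝ → ℝ :=
  fun t => (y ⌊t / a⌋) (t - (⌊t / a⌋ : ℝ) * a)

/-- `Y ⊆ L²([0,a))` is gap-rich with exceptional set `S`. -/
def GapRichC (a : ℝ) (Y : Set (L2I a)) (S : Set ℝ) : Prop :=
  IsDiscreteSet S ∧
  ∀ E : ℝ, E ∉ S → ∀ m : ℕ, 0 < m → ∀ x : Fin m → L2I a, (∀ i, x i ∈ Y) →
    ∀ ε : ℝ, 0 < ε →
      ∃ l : ℕ, 0 < l ∧ ∃ y : Fin l → L2I a,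
        (∀ i, y i ∈ Y) ∧
        (∀ j : ℤ, dist (perExt x j) (perExt y j) < ε) ∧
        E ∉ ContSpectrum (aggC a (perExt y))

/-- The periodic elements of `Y^ℤ`. -/
def PerC (a : ℝ) (Y : Set (L2I a)) : Set (ℤ →ᵇ L2I a) :=
  {x | (∃ q : ℕ, 0 < q ∧ ∀ n : ℤ, x (n + q) = x n) ∧ ∀ n : ℤ, x n ∈ Y}

/-- The limit-periodic elements of `Y^ℤ`. -/
def LPC (a : ℝ) (Y : Set (L2I a)) : Set (ℤ →ᵇ L2I a) := closure (PerC a Y)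

/-- Cantor set of zero Hausdorff dimension (continuum case: closed, possibly
unbounded). -/
def IsZeroDimCantorC (s : Set ℝ) : Prop :=
  s.Nonempty ∧ IsClosed s ∧ Preperfect s ∧ interior s = ∅ ∧ dimH s = 0

/-! ### Integration by parts and the Volterra operator -/

namespace ThinSpec

variable {𝕜 : Type*} [RCLike 𝕜]

lemma _root_.MeasureTheory.LocallyIntegrable.ii {f : ℝ → 𝕜} (hf : LocallyIntegrable f volume)
    {a b : ℝ} : IntervalIntegrable f volume a b :=
  intervalIntegrable_iff.mpr <|
    (hf.integrableOn_isCompact isCompact_uIcc).mono_set uIoc_subset_uIcc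

lemma _root_.MeasureTheory.LocallyIntegrable.nrm {f : ℝ → 𝕜} (hf : LocallyIntegrable f volume) :
    LocallyIntegrable (fun x => ‖f x‖) volume := fun x => (hf x).norm

lemma ac_integral {f : ℝ → 𝕜} (hf : LocallyIntegrable f volume) (a b : ℝ) :
    AbsolutelyContinuousOnInterval (fun x ↦ ∫ v in (a)..x, f v) a b := by
  have h := (hf.nrm.ii (a := a) (b := b)).absolutelyContinuousOnInterval_intervalIntegral
    (c := a) (by simp)
  refine squeeze_zero (fun E => Finset.sum_nonneg fun _ _ => dist_nonneg) (fun E => ?_) h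
  refine Finset.sum_le_sum fun i _ => ?_
  rw [dist_eq_norm, dist_eq_norm, intervalIntegral.integral_interval_sub_left
    hf.ii hf.ii,
    intervalIntegral.integral_interval_sub_left
    hf.nrm.ii hf.nrm.ii]
  exact intervalIntegral.norm_integral_le_abs_integral_norm

lemma LI_mul_cont {q u : ℝ → 𝕜} (hq : LocallyIntegrable q volume) (hu : Continuous u) :
    LocallyIntegrable (fun t => q t * u t) volume := by
  have := hq.mul_continuous hu
  exact this

lemma LI_cont_mul {q u : ℝ → 𝕜} (hq : LocallyIntegrable q volume) (hu : Continuous u) :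
    LocallyIntegrable (fun t => u t * q t) volume := by
  simpa only [mul_comm] using LI_mul_cont hq hu

lemma prim_continuous {f F : ℝ → 𝕜} (hf : LocallyIntegrable f volume)
    (hF : ∀ x, F x = F 0 + ∫ t in (0:ℝ)..x, f t) : Continuous F := by
  have : F = fun x => F 0 + ∫ t in (0:ℝ)..x, f t := funext hF
  rw [this]
  exact continuous_const.add (intervalIntegral.continuous_primitive (fun a b => hf.ii) 0)

/-- Product rule for indefinite integrals of locally integrable functions. -/
lemma prod_rule {F G f g : ℝ → 𝕜} (hf : LocallyIntegrable f volume)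
    (hg : LocallyIntegrable g volume)
    (hF : ∀ x, F x = F 0 + ∫ t in (0:ℝ)..x, f t) (hG : ∀ x, G x = G 0 + ∫ t in (0:ℝ)..x, g t)
    (x : ℝ) : F x * G x = F 0 * G 0 + ∫ t in (0:ℝ)..x, (f t * G t + F t * g t) := by
  have cF := prim_continuous hf hF
  have cG := prim_continuous hg hG
  have hh : LocallyIntegrable (fun t => f t * G t + F t * g t) volume :=
    (LI_mul_cont hf cG).add (LI_cont_mul hg cF)
  have acF : AbsolutelyContinuousOnInterval F 0 x := by
    have : F = fun x => F 0 + ∫ t in (0:ℝ)..x, f t := funext hF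
    rw [this]
    exact AbsolutelyContinuousOnInterval.fun_add
      ((LipschitzWith.const (F 0)).lipschitzOnWith.absolutelyContinuousOnInterval) (ac_integral hf 0 x)
  have acG : AbsolutelyContinuousOnInterval G 0 x := by
    have : G = fun x => G 0 + ∫ t in (0:ℝ)..x, g t := funext hG
    rw [this]
    exact AbsolutelyContinuousOnInterval.fun_add
      ((LipschitzWith.const (G 0)).lipschitzOnWith.absolutelyContinuousOnInterval) (ac_integral hg 0 x)
  have acH := (acF.fun_smul acG).fun_sub (ac_integral hh 0 x)
  have hd : ∀ᵐ y, y ∈ uIcc 0 x → HasDerivAt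
      (fun y => F y • G y - ∫ t in (0:ℝ)..y, (f t * G t + F t * g t)) 0 y := by
    filter_upwards [LocallyIntegrable.ae_hasDerivAt_integral hf, LocallyIntegrable.ae_hasDerivAt_integral hg,
      LocallyIntegrable.ae_hasDerivAt_integral hh] with y h1 h2 h3 _
    have e1 : HasDerivAt F (f y) y := by
      have : F = fun x => F 0 + ∫ t in (0:ℝ)..x, f t := funext hF
      rw [this]
      exact (h1 0).const_add _
    have e2 : HasDerivAt G (g y) y := by
      have : G = fun x => G 0 + ∫ t in (0:ℝ)..x, g t := funext hG
      rw [this]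
      exact (h2 0).const_add _
    have := (e1.mul e2).sub (h3 0)
    simp only [sub_self] at this
    exact this
  obtain ⟨C, hC⟩ := acH.const_of_ae_hasDerivAt_zero hd
  have h0 := hC 0 (by simp)
  have hx := hC x (by simp)
  simp only [smul_eq_mul, intervalIntegral.integral_same, sub_zero] at h0 hx
  rw [h0, ← hx]; ring

/-- `u` solves `-u'' + q u = f` in the sense of Carathéodory, with derivative `v`. The equation is stated
in integral form, `u = u 0 + ∫ v` and `v = v 0 + ∫ (q u - f)`, since `q` and `f` are only locally
integrable. -/
structure IsSol (q f u v : ℝ → 𝕜) : Prop where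
  cu : Continuous u
  cv : Continuous v
  hu : ∀ x, u x = u 0 + ∫ t in (0:ℝ)..x, v t
  hv : ∀ x, v x = v 0 + ∫ t in (0:ℝ)..x, (q t * u t - f t)

/-- Integrating twice: the iterated integral of `r` as a single integral against the kernel `x - t`. -/
lemma taylor_form {v r : ℝ → 𝕜} (hr : LocallyIntegrable r volume)
    (hv : ∀ x, v x = v 0 + ∫ t in (0:ℝ)..x, r t) (x : ℝ) :
    ∫ t in (0:ℝ)..x, v t = v 0 * x + ∫ t in (0:ℝ)..x, ((x - t : ℝ) : 𝕜) * r t := by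
  have cv := prim_continuous hr hv
  have hG : ∀ y : ℝ, ((x - y : ℝ) : 𝕜) = ((x - 0 : ℝ) : 𝕜) + ∫ t in (0:ℝ)..y, (-1 : 𝕜) := by
    intro y; simp [sub_eq_add_neg, Algebra.smul_def]
  have := prod_rule (g := fun _ => (-1 : 𝕜)) (G := fun y => ((x - y : ℝ) : 𝕜)) hr
    (continuous_const.locallyIntegrable) hv hG x
  simp only [sub_self, RCLike.ofReal_zero, mul_zero, sub_zero, mul_neg, mul_one] at this
  rw [intervalIntegral.integral_add, intervalIntegral.integral_neg] at this
  · have e : ∀ t, r t * ((x - t : ℝ) : 𝕜) = ((x - t : ℝ) : 𝕜) * r t := fun t => mul_comm _ _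
    simp only [e] at this
    linear_combination this
  · exact (LI_mul_cont hr (u := fun t : ℝ => ((x - t : ℝ) : 𝕜)) (by fun_prop)).ii
  · exact (cv.neg).intervalIntegrable _ _

/-- The Volterra operator `u ↦ ∫₀ˣ (x - t) q(t) u(t) dt`, whose fixed-point equation encodes
`u'' = q u`. -/
def volt (q u : ℝ → 𝕜) (x : ℝ) : 𝕜 := ∫ t in (0:ℝ)..x, ((x - t : ℝ) : 𝕜) * (q t * u t)

lemma cont_ker {r : ℝ → 𝕜} (hr : LocallyIntegrable r volume) :
    Continuous (fun x => ∫ t in (0:ℝ)..x, ((x - t : ℝ) : 𝕜) * r t) := by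
  have : (fun x : ℝ => ∫ t in (0:ℝ)..x, ((x - t : ℝ) : 𝕜) * r t) =
      fun x : ℝ => (x : 𝕜) * (∫ t in (0:ℝ)..x, r t) - ∫ t in (0:ℝ)..x, (t : 𝕜) * r t := by
    funext x
    rw [← intervalIntegral.integral_const_mul, ← intervalIntegral.integral_sub]
    · congr 1; funext t; push_cast; ring
    · exact (LI_cont_mul hr continuous_const).ii
    · exact (LI_cont_mul hr (u := fun t : ℝ => ((t : ℝ) : 𝕜)) (by fun_prop)).ii
  rw [this]
  refine Continuous.sub (Continuous.mul (by fun_prop) ?_) ?_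
  · exact intervalIntegral.continuous_primitive (fun a b => hr.ii) 0
  · exact intervalIntegral.continuous_primitive
      (fun a b => (LI_cont_mul hr (u := fun t : ℝ => ((t : ℝ) : 𝕜)) (by fun_prop)).ii) 0

lemma volt_le {q u : ℝ → 𝕜} (hq : LocallyIntegrable q volume) {x α B : ℝ}
    (hα : |∫ t in (0:ℝ)..x, ‖q t‖| ≤ α) (hB0 : 0 ≤ B)
    (hB : ∀ t ∈ uIoc 0 x, |x - t| * ‖u t‖ ≤ B) : ‖volt q u x‖ ≤ α * B := by
  have h1 : ‖volt q u x‖ ≤ |∫ t in (0:ℝ)..x, ‖q t‖ * B| := by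
    refine intervalIntegral.norm_integral_le_abs_of_norm_le ?_ ?_
    · refine (ae_restrict_iff' measurableSet_uIoc).2 (Filter.Eventually.of_forall fun t ht => ?_)
      rw [norm_mul, norm_mul, RCLike.norm_ofReal]
      have := hB t ht
      calc |x - t| * (‖q t‖ * ‖u t‖) = ‖q t‖ * (|x - t| * ‖u t‖) := by ring
        _ ≤ _ := by gcongr
    · exact (hq.nrm.ii).mul_const _
  rw [intervalIntegral.integral_mul_const, abs_mul, abs_of_nonneg hB0] at h1
  exact h1.trans (by gcongr)

lemma pow_aux {x t : ℝ} (ht : t ∈ uIoc 0 x) (n : ℕ) :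
    |x - t| * |t| ^ n ≤ |x| ^ (n + 1) / (n + 1) := by
  have key : ∀ s y : ℝ, 0 ≤ s → s ≤ y → (y - s) * s ^ n ≤ y ^ (n + 1) / (n + 1) := by
    intro s y hs hsy
    rw [le_div_iff₀ (by positivity)]
    have h1 : (n + 1) * s ^ n * (y - s) ≤ y ^ (n + 1) - s ^ (n + 1) := by
      have hg := (Commute.all y s).mul_geom_sum₂ (n + 1)
      rw [← hg]
      have : (n + 1) * s ^ n ≤ ∑ i ∈ Finset.range (n + 1), y ^ i * s ^ (n + 1 - 1 - i) := by
        calc (n + 1) * s ^ n = ∑ i ∈ Finset.range (n + 1), s ^ n := by simp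
          _ ≤ _ := by
            refine Finset.sum_le_sum fun i hi => ?_
            have hi' : i ≤ n := by simpa [Nat.lt_succ_iff] using hi
            calc s ^ n = s ^ i * s ^ (n + 1 - 1 - i) := by rw [← pow_add]; congr 1; omega
              _ ≤ _ := by gcongr
      nlinarith [sub_nonneg.2 hsy]
    have : 0 ≤ s ^ (n + 1) := by positivity
    nlinarith
  rcases le_total 0 x with hx | hx
  · rw [uIoc_of_le hx] at ht
    rw [abs_of_nonneg (by linarith [ht.2] : 0 ≤ x - t), abs_of_nonneg ht.1.le, abs_of_nonneg hx]
    exact key t x ht.1.le ht.2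
  · rw [uIoc_of_ge hx] at ht
    rw [abs_of_nonpos (by linarith [ht.1] : x - t ≤ 0), abs_of_nonpos ht.2, abs_of_nonpos hx]
    have := key (-t) (-x) (by linarith [ht.2]) (by linarith [ht.1])
    convert this using 2; ring

lemma mono_abs_int {g : ℝ → ℝ} (hg : LocallyIntegrable g volume) (h0 : ∀ t, 0 ≤ g t) {x X : ℝ}
    (hx : x ∈ uIcc 0 X) : |∫ t in (0:ℝ)..x, g t| ≤ |∫ t in (0:ℝ)..X, g t| := by
  refine intervalIntegral.abs_integral_mono_interval ?_ (Filter.Eventually.of_forall h0)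
    hg.ii
  rcases le_total 0 X with h | h
  · rw [uIcc_of_le h] at hx; rw [uIoc_of_le hx.1, uIoc_of_le h]; exact Ioc_subset_Ioc_right hx.2
  · rw [uIcc_of_ge h] at hx; rw [uIoc_of_ge hx.2, uIoc_of_ge h]; exact Ioc_subset_Ioc_left hx.1

lemma uIoc_mem_uIcc {x X t : ℝ} (hx : x ∈ uIcc 0 X) (ht : t ∈ uIoc 0 x) : t ∈ uIcc 0 X := by
  rcases le_total 0 X with h | h
  · rw [uIcc_of_le h] at *; rw [uIoc_of_le hx.1] at ht
    exact ⟨ht.1.le, ht.2.trans hx.2⟩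
  · rw [uIcc_of_ge h] at *; rw [uIoc_of_ge hx.2] at ht
    exact ⟨hx.1.trans ht.1.le, ht.2⟩

lemma abs_le_of_mem {x X : ℝ} (hx : x ∈ uIcc 0 X) : |x| ≤ |X| := by
  rcases le_total 0 X with h | h
  · rw [uIcc_of_le h] at hx; rw [abs_of_nonneg hx.1, abs_of_nonneg h]; exact hx.2
  · rw [uIcc_of_ge h] at hx; rw [abs_of_nonpos hx.2, abs_of_nonpos h]; linarith [hx.1]

/-- A Grönwall estimate for the Volterra equation `u = g + volt q u`. Iterating the equation gains a factor
`(α |x|) ^ n / n!` at the `n`-th step. -/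
lemma gronwall {q u g : ℝ → 𝕜} (hq : LocallyIntegrable q volume) (cu : Continuous u) {X C α : ℝ}
    (hα : |∫ t in (0:ℝ)..X, ‖q t‖| ≤ α)
    (hg : ∀ x ∈ uIcc 0 X, ‖g x‖ ≤ C) (hu : ∀ x ∈ uIcc 0 X, u x = g x + volt q u x) :
    ∀ x ∈ uIcc 0 X, ‖u x‖ ≤ C * Real.exp (α * |X|) := by
  have hα0 : 0 ≤ α := (abs_nonneg _).trans hα
  have hC0 : 0 ≤ C := (norm_nonneg _).trans (hg 0 (by simp))
  obtain ⟨B, hB⟩ := (isCompact_uIcc (a := (0:ℝ)) (b := X)).exists_bound_of_continuousOn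
    (f := u) cu.continuousOn
  have hB0 : 0 ≤ B := (norm_nonneg _).trans (hB 0 (by simp))
  have step : ∀ n : ℕ, ∀ x ∈ uIcc 0 X, ‖u x‖ ≤
      C * ∑ k ∈ Finset.range n, (α * |x|) ^ k / k.factorial + B * ((α * |x|) ^ n / n.factorial) := by
    intro n
    induction n with
    | zero => intro x hx; simpa using hB x hx
    | succ n ih =>
      intro x hx
      rw [hu x hx]
      have hv : ‖volt q u x‖ ≤ α * (C * ∑ k ∈ Finset.range n, α ^ k / k.factorial * (|x| ^ (k + 1) / (k + 1)) +
          B * (α ^ n / n.factorial * (|x| ^ (n + 1) / (n + 1)))) := by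
        refine volt_le hq ((mono_abs_int hq.nrm (fun _ => norm_nonneg _) hx).trans hα) (by positivity) ?_
        intro t ht
        calc |x - t| * ‖u t‖ ≤ |x - t| * (C * ∑ k ∈ Finset.range n, (α * |t|) ^ k / k.factorial + B * ((α * |t|) ^ n / n.factorial)) := by
              gcongr; exact ih t (uIoc_mem_uIcc hx ht)
          _ = C * ∑ k ∈ Finset.range n, α ^ k / k.factorial * (|x - t| * |t| ^ k) + B * (α ^ n / n.factorial * (|x - t| * |t| ^ n)) := by
              rw [mul_add, Finset.mul_sum, Finset.mul_sum, Finset.mul_sum]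
              congr 1
              · refine Finset.sum_congr rfl fun k _ => ?_
                rw [mul_pow]; ring
              · rw [mul_pow]; ring
          _ ≤ _ := by
              gcongr with k _
              · exact pow_aux ht k
              · exact pow_aux ht n
      have e : ∀ k : ℕ, α * (α ^ k / k.factorial * (|x| ^ (k + 1) / (k + 1))) = (α * |x|) ^ (k + 1) / (k + 1).factorial := by
        intro k
        rw [Nat.factorial_succ]; push_cast
        have : (k.factorial : ℝ) ≠ 0 := by positivity
        have : (k : ℝ) + 1 ≠ 0 := by positivity
        field_simp
        ring
      calc ‖g x + volt q u x‖ ≤ C + _ := (norm_add_le _ _).trans (add_le_add (hg x hx) hv)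
        _ = _ := by
          rw [Finset.sum_range_succ', mul_add α, ← e n]
          simp only [← e]
          rw [← Finset.mul_sum]
          simp; ring
  intro x hx
  have hle : ‖u x‖ ≤ C * Real.exp (α * |x|) := by
    have hs := Real.summable_pow_div_factorial (α * |x|)
    have t1 : Filter.Tendsto (fun n : ℕ => C * ∑ k ∈ Finset.range n, (α * |x|) ^ k / k.factorial + B * ((α * |x|) ^ n / n.factorial)) Filter.atTop (nhds (C * Real.exp (α * |x|) + B * 0)) := by
      refine Filter.Tendsto.add (Filter.Tendsto.const_mul _ ?_) (Filter.Tendsto.const_mul _ ?_)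
      · have := hs.hasSum.tendsto_sum_nat
        rwa [← congrFun (NormedSpace.exp_eq_tsum_div (𝔸 := ℝ)) , ← Real.exp_eq_exp_ℝ] at this
      · exact FloorSemiring.tendsto_pow_div_factorial_atTop _
    have := ge_of_tendsto' t1 (fun n => step n x hx)
    simpa using this
  exact hle.trans (mul_le_mul_of_nonneg_left
    (Real.exp_le_exp.2 (mul_le_mul_of_nonneg_left (abs_le_of_mem hx) hα0)) hC0)

end ThinSpec

/-! ### Existence and bounds for solutions of `-u'' + q u = f` -/

namespace ThinSpec
variable {𝕜 : Type*} [RCLike 𝕜]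

lemma IsSol.li {q f u v : ℝ → 𝕜} (h : IsSol q f u v) (hq : LocallyIntegrable q volume)
    (hf : LocallyIntegrable f volume) : LocallyIntegrable (fun t => q t * u t - f t) volume :=
  (LI_mul_cont hq h.cu).sub hf

/-- A solution of the differential equation solves the associated Volterra equation. -/
lemma IsSol.volterra {q f u v : ℝ → 𝕜} (h : IsSol q f u v) (hq : LocallyIntegrable q volume)
    (hf : LocallyIntegrable f volume) (x : ℝ) :
    u x = (u 0 + v 0 * x - ∫ t in (0:ℝ)..x, ((x - t : ℝ) : 𝕜) * f t) + volt q u x := by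
  rw [h.hu x, taylor_form (h.li hq hf) h.hv x, volt]
  have : ∀ t : ℝ, ((x - t : ℝ) : 𝕜) * (q t * u t - f t) =
    ((x - t : ℝ) : 𝕜) * (q t * u t) - ((x - t : ℝ) : 𝕜) * f t := fun t => mul_sub _ _ _
  simp only [this]
  rw [intervalIntegral.integral_sub]
  · ring
  · exact (LI_cont_mul (LI_mul_cont hq h.cu) (u := fun t : ℝ => ((x - t : ℝ) : 𝕜)) (by fun_prop)).ii
  · exact (LI_cont_mul hf (u := fun t : ℝ => ((x - t : ℝ) : 𝕜)) (by fun_prop)).ii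

lemma isSol_of_volterra {q f u : ℝ → 𝕜} (cu : Continuous u) (α β : 𝕜)
    (hq : LocallyIntegrable q volume) (hf : LocallyIntegrable f volume)
    (h : ∀ x : ℝ, u x = (α + β * x - ∫ t in (0:ℝ)..x, ((x - t : ℝ) : 𝕜) * f t) + volt q u x) :
    IsSol q f u (fun x => β + ∫ t in (0:ℝ)..x, (q t * u t - f t)) := by
  have hr : LocallyIntegrable (fun t => q t * u t - f t) volume := (LI_mul_cont hq cu).sub hf
  have h2 : ∀ x, (fun x => β + ∫ t in (0:ℝ)..x, (q t * u t - f t)) x =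
    (fun x => β + ∫ t in (0:ℝ)..x, (q t * u t - f t)) 0 + ∫ t in (0:ℝ)..x, (q t * u t - f t) := by
    intro x; simp
  refine ⟨cu, prim_continuous hr h2, fun x => ?_, h2⟩
  have h0 : u 0 = α := by rw [h 0]; simp [volt]
  rw [taylor_form hr h2 x, h x, h0]
  have : ∀ t : ℝ, ((x - t : ℝ) : 𝕜) * (q t * u t - f t) =
    ((x - t : ℝ) : 𝕜) * (q t * u t) - ((x - t : ℝ) : 𝕜) * f t := fun t => mul_sub _ _ _
  simp only [this, intervalIntegral.integral_same, add_zero]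
  rw [intervalIntegral.integral_sub]
  · simp only [volt]; ring
  · exact (LI_cont_mul (LI_mul_cont hq cu) (u := fun t : ℝ => ((x - t : ℝ) : 𝕜)) (by fun_prop)).ii
  · exact (LI_cont_mul hf (u := fun t : ℝ => ((x - t : ℝ) : 𝕜)) (by fun_prop)).ii

/-- The Volterra equation is solved by its Neumann series. -/
lemma exists_sol_volt {q g : ℝ → 𝕜} (hq : LocallyIntegrable q volume) (cg : Continuous g) :
    ∃ u : ℝ → 𝕜, Continuous u ∧ ∀ x, u x = g x + volt q u x := by
  let w : ℕ → ℝ → 𝕜 := fun n => (volt q)^[n] g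
  have ws : ∀ n, w (n + 1) = volt q (w n) := fun n => Function.iterate_succ_apply' _ _ _
  have wc : ∀ n, Continuous (w n) := by
    intro n
    induction n with
    | zero => exact cg
    | succ n ih => rw [ws]; exact cont_ker (LI_mul_cont hq ih)
  have bound : ∀ R : ℝ, 0 < R → ∃ C α : ℝ, 0 ≤ C ∧ 0 ≤ α ∧ ∀ n, ∀ x ∈ Icc (-R) R,
      ‖w n x‖ ≤ C * ((α * |x|) ^ n / n.factorial) := by
    intro R hR
    obtain ⟨C, hC⟩ := (isCompact_Icc (a := -R) (b := R)).exists_bound_of_continuousOn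
      (f := g) cg.continuousOn
    have hC0 : 0 ≤ C := (norm_nonneg _).trans (hC 0 ⟨by linarith, by linarith⟩)
    set α := max (|∫ t in (0:ℝ)..R, ‖q t‖|) (|∫ t in (0:ℝ)..(-R), ‖q t‖|) with hα
    have hα0 : 0 ≤ α := (abs_nonneg _).trans (le_max_left _ _)
    have hxα : ∀ x ∈ Icc (-R) R, |∫ t in (0:ℝ)..x, ‖q t‖| ≤ α := by
      intro x hx
      rcases le_total 0 x with h | h
      · exact (mono_abs_int hq.nrm (fun _ => norm_nonneg _)
          (by rw [uIcc_of_le hR.le]; exact ⟨h, hx.2⟩)).trans (le_max_left _ _)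
      · exact (mono_abs_int hq.nrm (fun _ => norm_nonneg _)
          (by rw [uIcc_of_ge (by linarith)]; exact ⟨hx.1, h⟩)).trans (le_max_right _ _)
    refine ⟨C, α, hC0, hα0, fun n => ?_⟩
    induction n with
    | zero => intro x hx; simpa [w] using hC x hx
    | succ n ih =>
      intro x hx
      rw [ws]
      have := volt_le (u := w n) (x := x) hq (hxα x hx) (B := C * (α ^ n / n.factorial * (|x| ^ (n + 1) / (n + 1)))) (by positivity) ?_
      · refine this.trans (le_of_eq ?_)
        rw [Nat.factorial_succ]; push_cast
        have : (n.factorial : ℝ) ≠ 0 := by positivity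
        have : (n : ℝ) + 1 ≠ 0 := by positivity
        field_simp
        ring
      · intro t ht
        have htm : t ∈ Icc (-R) R := by
          have := abs_le_of_mem (uIoc_mem_uIcc (X := x) (by simp) ht)
          exact abs_le.1 (this.trans (abs_le.2 hx))
        calc |x - t| * ‖w n t‖ ≤ |x - t| * (C * ((α * |t|) ^ n / n.factorial)) := by
              gcongr; exact ih t htm
          _ = C * (α ^ n / n.factorial * (|x - t| * |t| ^ n)) := by rw [mul_pow]; ring
          _ ≤ _ := by gcongr; exact pow_aux ht n
  have bound2 : ∀ R : ℝ, 0 < R → ∃ C α : ℝ, 0 ≤ C ∧ 0 ≤ α ∧ ∀ n, ∀ x ∈ Icc (-R) R,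
      ‖w n x‖ ≤ C * ((α * R) ^ n / n.factorial) := by
    intro R hR
    obtain ⟨C, α, h1, h2, h3⟩ := bound R hR
    refine ⟨C, α, h1, h2, fun n x hx => (h3 n x hx).trans ?_⟩
    have := abs_le.2 hx
    gcongr
  have summ : ∀ x, Summable fun n => w n x := by
    intro x
    obtain ⟨C, α, h1, h2, h3⟩ := bound2 (|x| + 1) (by positivity)
    exact Summable.of_norm_bounded ((Real.summable_pow_div_factorial _).mul_left C)
      (fun n => h3 n x (abs_le.1 (by linarith)))
  refine ⟨fun x => ∑' n, w n x, ?_, fun x => ?_⟩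
  · rw [continuous_iff_continuousAt]
    intro x
    obtain ⟨C, α, h1, h2, h3⟩ := bound2 (|x| + 1) (by positivity)
    have := continuousOn_tsum (s := Icc (-(|x|+1)) (|x|+1)) (fun n => (wc n).continuousOn)
      ((Real.summable_pow_div_factorial _).mul_left C) h3
    refine this.continuousAt (Icc_mem_nhds ?_ ?_)
    · linarith [neg_abs_le x]
    · linarith [le_abs_self x]
  · show ∑' n, w n x = g x + volt q (fun x => ∑' n, w n x) x
    rw [(summ x).tsum_eq_zero_add]
    congr 1
    simp only [ws, volt]
    obtain ⟨C, α, h1, h2, h3⟩ := bound2 (|x| + 1) (by positivity)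
    have hs := ((Real.summable_pow_div_factorial (α * (|x| + 1))).mul_left C)
    refine (intervalIntegral.hasSum_integral_of_dominated_convergence
      (fun n t => |x - t| * (‖q t‖ * (C * ((α * (|x| + 1)) ^ n / n.factorial)))) ?_ ?_ ?_ ?_ ?_).tsum_eq
    · intro n
      exact (LI_cont_mul (LI_mul_cont hq (wc n)) (u := fun t : ℝ => ((x - t : ℝ) : 𝕜)) (by fun_prop)).aestronglyMeasurable.restrict
    · intro n
      refine Filter.Eventually.of_forall fun t ht => ?_
      rw [norm_mul, norm_mul, RCLike.norm_ofReal]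
      gcongr
      refine h3 n t ?_
      have := abs_le_of_mem (uIoc_mem_uIcc (X := x) (by simp) ht)
      exact abs_le.1 (by linarith)
    · refine Filter.Eventually.of_forall fun t ht => ?_
      exact (hs.mul_left _).mul_left _
    · have : (fun t => ∑' n : ℕ, |x - t| * (‖q t‖ * (C * ((α * (|x| + 1)) ^ n / n.factorial)))) =
        fun t => |x - t| * (‖q t‖ * ∑' n : ℕ, (C * ((α * (|x| + 1)) ^ n / n.factorial))) := by
        funext t; rw [tsum_mul_left, tsum_mul_left]
      rw [this]
      exact (LI_cont_mul (𝕜 := ℝ) (LI_mul_cont hq.nrm continuous_const) (u := fun t : ℝ => |x - t|) (by fun_prop)).ii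
    · refine Filter.Eventually.of_forall fun t ht => ?_
      exact ((summ t).hasSum.mul_left _).mul_left _

lemma exists_sol {q f : ℝ → 𝕜} (hq : LocallyIntegrable q volume)
    (hf : LocallyIntegrable f volume) (α β : 𝕜) :
    ∃ u v : ℝ → 𝕜, IsSol q f u v ∧ u 0 = α ∧ v 0 = β := by
  obtain ⟨u, cu, hu⟩ := exists_sol_volt hq
    (g := fun x : ℝ => α + β * x - ∫ t in (0:ℝ)..x, ((x - t : ℝ) : 𝕜) * f t)
    (by have := cont_ker hf; fun_prop)
  refine ⟨u, _, isSol_of_volterra cu α β hq hf hu, ?_, ?_⟩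
  · rw [hu 0]; simp [volt]
  · simp

lemma IsSol.bound {q f u v : ℝ → 𝕜} (h : IsSol q f u v) (hq : LocallyIntegrable q volume)
    (hf : LocallyIntegrable f volume) (X : ℝ) {x : ℝ} (hx : x ∈ uIcc 0 X) :
    ‖u x‖ ≤ (‖u 0‖ + ‖v 0‖ * |X| + |∫ t in (0:ℝ)..X, ‖f t‖| * |X|) *
      Real.exp (|∫ t in (0:ℝ)..X, ‖q t‖| * |X|) := by
  refine gronwall hq h.cu le_rfl ?_ (fun x _ => h.volterra hq hf x) x hx
  intro y hy
  refine (norm_sub_le _ _).trans (add_le_add ((norm_add_le _ _).trans (add_le_add le_rfl ?_)) ?_)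
  · rw [norm_mul, RCLike.norm_ofReal]
    exact mul_le_mul_of_nonneg_left (abs_le_of_mem hy) (norm_nonneg _)
  · have := volt_le (u := fun _ => (1 : 𝕜)) (x := y) (B := |X|) hf
      (mono_abs_int hf.nrm (fun _ => norm_nonneg _) hy) (abs_nonneg _) ?_
    · simpa [volt] using this
    · intro t ht
      simp only [norm_one, mul_one]
      refine le_trans ?_ (abs_le_of_mem hy)
      rcases le_total 0 y with h | h
      · rw [uIoc_of_le h] at ht; rw [abs_of_nonneg h, abs_of_nonneg (by linarith [ht.2])]; linarith [ht.1]
      · rw [uIoc_of_ge h] at ht; rw [abs_of_nonpos h, abs_of_nonpos (by linarith [ht.1])]; linarith [ht.2]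

lemma IsSol.sub {q f f' u v u' v' : ℝ → 𝕜} (h : IsSol q f u v) (h' : IsSol q f' u' v')
    (hq : LocallyIntegrable q volume)
    (hf : LocallyIntegrable f volume) (hf' : LocallyIntegrable f' volume) :
    IsSol q (fun x => f x - f' x) (fun x => u x - u' x) (fun x => v x - v' x) := by
  refine ⟨h.cu.sub h'.cu, h.cv.sub h'.cv, fun x => ?_, fun x => ?_⟩
  · rw [intervalIntegral.integral_sub (h.cv.intervalIntegrable _ _) (h'.cv.intervalIntegrable _ _),
      h.hu x, h'.hu x]; ring
  · have := intervalIntegral.integral_sub (μ := volume) (a := 0) (b := x) (h.li hq hf).ii (h'.li hq hf').ii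
    have e : ∀ t, q t * (u t - u' t) - (f t - f' t) = (q t * u t - f t) - (q t * u' t - f' t) := by
      intro t; ring
    simp only [e]
    rw [this, h.hv x, h'.hv x]; ring

lemma IsSol.add {q f f' u v u' v' : ℝ → 𝕜} (h : IsSol q f u v) (h' : IsSol q f' u' v')
    (hq : LocallyIntegrable q volume)
    (hf : LocallyIntegrable f volume) (hf' : LocallyIntegrable f' volume) :
    IsSol q (fun x => f x + f' x) (fun x => u x + u' x) (fun x => v x + v' x) := by
  refine ⟨h.cu.add h'.cu, h.cv.add h'.cv, fun x => ?_, fun x => ?_⟩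
  · rw [intervalIntegral.integral_add (h.cv.intervalIntegrable _ _) (h'.cv.intervalIntegrable _ _),
      h.hu x, h'.hu x]; ring
  · have := intervalIntegral.integral_add (μ := volume) (a := 0) (b := x) (h.li hq hf).ii (h'.li hq hf').ii
    have e : ∀ t, q t * (u t + u' t) - (f t + f' t) = (q t * u t - f t) + (q t * u' t - f' t) := by
      intro t; ring
    simp only [e]
    rw [this, h.hv x, h'.hv x]; ring

lemma IsSol.smul {q f u v : ℝ → 𝕜} (h : IsSol q f u v) (k : 𝕜) :
    IsSol q (fun x => k * f x) (fun x => k * u x) (fun x => k * v x) := by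
  refine ⟨continuous_const.mul h.cu, continuous_const.mul h.cv, fun x => ?_, fun x => ?_⟩
  · rw [intervalIntegral.integral_const_mul, h.hu x]; ring
  · have e : ∀ t, q t * (k * u t) - k * f t = k * (q t * u t - f t) := by
      intro t; ring
    simp only [e]
    rw [intervalIntegral.integral_const_mul, h.hv x]; ring

lemma li_shift {q : ℝ → 𝕜} (hq : LocallyIntegrable q volume) (s : ℝ) :
    LocallyIntegrable (fun x => q (x + s)) volume := by
  rw [MeasureTheory.locallyIntegrable_iff]
  intro k hk
  have h1 := hq.integrableOn_isCompact (hk.image (f := fun x => x + s) (by fun_prop))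
  have := (measurePreserving_add_right (volume : Measure ℝ) s).integrableOn_image
    (measurableEmbedding_addRight s) (f := q) (s := k)
  exact this.1 h1

lemma IsSol.shift {q f u v : ℝ → 𝕜} (h : IsSol q f u v) (hq : LocallyIntegrable q volume)
    (hf : LocallyIntegrable f volume) (s : ℝ) :
    IsSol (fun x => q (x + s)) (fun x => f (x + s)) (fun x => u (x + s)) (fun x => v (x + s)) := by
  refine ⟨by have := h.cu; fun_prop, by have := h.cv; fun_prop, fun x => ?_, fun x => ?_⟩
  · simp only [zero_add]
    rw [intervalIntegral.integral_comp_add_right (fun t => v t), h.hu (x + s), h.hu s,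
      ← intervalIntegral.integral_add_adjacent_intervals (a := 0) (b := s) (c := x + s)
      (h.cv.intervalIntegrable _ _) (h.cv.intervalIntegrable _ _)]; simp; ring
  · simp only [zero_add]
    rw [intervalIntegral.integral_comp_add_right (fun t => q t * u t - f t), h.hv (x + s), h.hv s,
      ← intervalIntegral.integral_add_adjacent_intervals (a := 0) (b := s) (c := x + s)
      (h.li hq hf).ii (h.li hq hf).ii]; simp; ring

lemma IsSol.unique {q f u v u' v' : ℝ → 𝕜} (h : IsSol q f u v) (h' : IsSol q f u' v')
    (hq : LocallyIntegrable q volume)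
    (hf : LocallyIntegrable f volume) (s : ℝ) (hu : u s = u' s) (hv : v s = v' s) :
    u = u' ∧ v = v' := by
  have h1 := (h.sub h' hq hf hf).shift hq (hf.sub hf) s
  have key : ∀ x, u x - u' x = 0 := by
    intro x
    have := h1.bound (li_shift hq s) (li_shift (hf.sub hf) s) (x - s) (x := x - s) (by simp)
    simpa [hu, hv] using this
  have hu' : u = u' := funext fun x => sub_eq_zero.1 (key x)
  refine ⟨hu', funext fun x => ?_⟩
  have a1 := h.hv x
  have a2 := h'.hv x
  have b1 := h.hv s
  have b2 := h'.hv s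
  rw [hu'] at a1 b1
  have : v 0 = v' 0 := by
    have := b1.symm.trans (hv.trans b2)
    exact add_right_cancel this
  rw [a1, a2, this]

/-- The Lagrange identity for the Wronskian of solutions of two different equations. -/
lemma lagrange {q f u v q' f' u' v' : ℝ → 𝕜} (h : IsSol q f u v) (h' : IsSol q' f' u' v')
    (hq : LocallyIntegrable q volume) (hf : LocallyIntegrable f volume)
    (hq' : LocallyIntegrable q' volume) (hf' : LocallyIntegrable f' volume) (x : ℝ) :
    v x * u' x - u x * v' x = v 0 * u' 0 - u 0 * v' 0 +
      ∫ t in (0:ℝ)..x, ((q t - q' t) * u t * u' t - f t * u' t + u t * f' t) := by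
  have h1 := prod_rule (h.li hq hf) h'.cv.locallyIntegrable h.hv h'.hu x
  have h2 := prod_rule h.cv.locallyIntegrable (h'.li hq' hf') h.hu h'.hv x
  rw [h1, h2]
  have i1 : LocallyIntegrable (fun t => (q t * u t - f t) * u' t + v t * v' t) volume :=
    (LI_mul_cont (h.li hq hf) h'.cu).add (h.cv.mul h'.cv).locallyIntegrable
  have i2 : LocallyIntegrable (fun t => v t * v' t + u t * (q' t * u' t - f' t)) volume :=
    (h.cv.mul h'.cv).locallyIntegrable.add (LI_cont_mul (h'.li hq' hf') h.cu)
  have := intervalIntegral.integral_sub (μ := volume) (a := 0) (b := x) i1.ii i2.ii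
  have e : ∀ t, (q t - q' t) * u t * u' t - f t * u' t + u t * f' t = ((q t * u t - f t) * u' t + v t * v' t) -
    (v t * v' t + u t * (q' t * u' t - f' t)) := by intro t; ring
  simp only [e]
  rw [this]; ring

end ThinSpec

/-! ### Transfer matrices and the discriminant -/

namespace ThinSpec
variable {𝕜 : Type*} [RCLike 𝕜]

/-- Solutions of the homogeneous equation `u'' = q u`. -/
abbrev HSol (q u v : ℝ → 𝕜) : Prop := IsSol q (fun _ => 0) u v

lemma li_zero : LocallyIntegrable (fun _ : ℝ => (0 : 𝕜)) volume := continuous_const.locallyIntegrable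

lemma HSol.lin {q u v u' v' : ℝ → 𝕜} (h : HSol q u v) (h' : HSol q u' v')
    (hq : LocallyIntegrable q volume) (k l : 𝕜) :
    HSol q (fun x => k * u x + l * u' x) (fun x => k * v x + l * v' x) := by
  have h1 := h.smul k
  have h2 := h'.smul l
  simp only [mul_zero] at h1 h2
  simpa using h1.add h2 hq li_zero li_zero

lemma HSol.shift {q u v : ℝ → 𝕜} (h : HSol q u v) (hq : LocallyIntegrable q volume) (s : ℝ) :
    HSol (fun x => q (x + s)) (fun x => u (x + s)) (fun x => v (x + s)) :=
  IsSol.shift h hq li_zero s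

lemma HSol.lagrange {q u v q' u' v' : ℝ → 𝕜} (h : HSol q u v) (h' : HSol q' u' v')
    (hq : LocallyIntegrable q volume)
    (hq' : LocallyIntegrable q' volume) (x : ℝ) :
    v x * u' x - u x * v' x = v 0 * u' 0 - u 0 * v' 0 +
      ∫ t in (0:ℝ)..x, (q t - q' t) * u t * u' t := by
  simpa using ThinSpec.lagrange h h' hq li_zero hq' li_zero x

/-- A chosen solution of `u'' = q u` with `u 0 = α`, `u' 0 = β`, paired with its derivative;
zero when `q` is not locally integrable. -/
def sol (q : ℝ → 𝕜) (α β : 𝕜) : (ℝ → 𝕜) × (ℝ → 𝕜) :=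
  open Classical in
  if h : LocallyIntegrable q volume then
    ((exists_sol h li_zero α β).choose, (exists_sol h li_zero α β).choose_spec.choose)
  else 0

lemma sol_spec {q : ℝ → 𝕜} (hq : LocallyIntegrable q volume) (α β : 𝕜) :
    HSol q (sol q α β).1 (sol q α β).2 ∧ (sol q α β).1 0 = α ∧ (sol q α β).2 0 = β := by
  unfold sol
  rw [dif_pos hq]
  exact (exists_sol hq li_zero α β).choose_spec.choose_spec

/-- The cosine-type solution. -/
def cc (q : ℝ → 𝕜) : ℝ → 𝕜 := (sol q 1 0).1
/-- The derivative of the cosine-type solution. -/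
def cd (q : ℝ → 𝕜) : ℝ → 𝕜 := (sol q 1 0).2
/-- The sine-type solution. -/
def ss (q : ℝ → 𝕜) : ℝ → 𝕜 := (sol q 0 1).1
/-- The derivative of the sine-type solution. -/
def sd (q : ℝ → 𝕜) : ℝ → 𝕜 := (sol q 0 1).2

/-- The discriminant, i.e. the trace of the transfer matrix over `[0, L]`. -/
def Disc (q : ℝ → 𝕜) (L : ℝ) : 𝕜 := cc q L + sd q L

lemma hc {q : ℝ → 𝕜} (hq : LocallyIntegrable q volume) : HSol q (cc q) (cd q) := (sol_spec hq 1 0).1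
lemma hs {q : ℝ → 𝕜} (hq : LocallyIntegrable q volume) : HSol q (ss q) (sd q) := (sol_spec hq 0 1).1
lemma cc0 {q : ℝ → 𝕜} (hq : LocallyIntegrable q volume) : cc q 0 = 1 := (sol_spec hq 1 0).2.1
lemma cd0 {q : ℝ → 𝕜} (hq : LocallyIntegrable q volume) : cd q 0 = 0 := (sol_spec hq 1 0).2.2
lemma ss0 {q : ℝ → 𝕜} (hq : LocallyIntegrable q volume) : ss q 0 = 0 := (sol_spec hq 0 1).2.1
lemma sd0 {q : ℝ → 𝕜} (hq : LocallyIntegrable q volume) : sd q 0 = 1 := (sol_spec hq 0 1).2.2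

lemma HSol.unique {q : ℝ → 𝕜} (hq : LocallyIntegrable q volume)
    {u v u' v' : ℝ → 𝕜} (h : HSol q u v) (h' : HSol q u' v')
    (s : ℝ) (hu : u s = u' s) (hv : v s = v' s) : u = u' ∧ v = v' :=
  IsSol.unique h h' hq li_zero s hu hv

/-- The transfer matrix has determinant `1`. -/
lemma wronski {q : ℝ → 𝕜} (hq : LocallyIntegrable q volume)
    (x : ℝ) : cc q x * sd q x - ss q x * cd q x = 1 := by
  have := (hc hq).lagrange (hs hq) hq hq x
  simp only [sub_self, zero_mul, intervalIntegral.integral_zero, cc0 hq, cd0 hq, ss0 hq, sd0 hq] at this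
  linear_combination -this

lemma HSol.rep {q : ℝ → 𝕜} (hq : LocallyIntegrable q volume) {u v : ℝ → 𝕜} (h : HSol q u v) :
    u = (fun x => u 0 * cc q x + v 0 * ss q x) ∧ v = (fun x => u 0 * cd q x + v 0 * sd q x) :=
  HSol.unique hq h ((hc hq).lin (hs hq) hq _ _) 0 (by simp [cc0 hq, ss0 hq]) (by simp [cd0 hq, sd0 hq])

/-- The Cauchy data at `x + b` are obtained from those at `b` by the transfer matrix of the translated
potential. -/
lemma HSol.transfer {q : ℝ → 𝕜} (hq : LocallyIntegrable q volume)
    {u v : ℝ → 𝕜} (h : HSol q u v) (b x : ℝ) :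
    u (x + b) = u b * cc (fun y => q (y + b)) x + v b * ss (fun y => q (y + b)) x ∧
    v (x + b) = u b * cd (fun y => q (y + b)) x + v b * sd (fun y => q (y + b)) x := by
  have h1 := (h.shift hq b)
  have h2 := h1.rep (li_shift hq b)
  have a1 := congrFun h2.1 x
  have a2 := congrFun h2.2 x
  simp only [zero_add] at a1 a2
  exact ⟨a1, a2⟩

/-- The Cayley–Hamilton identity `M + M⁻¹ = (tr M) I` for the monodromy matrix `M`, applied to the Cauchy
data of a solution of the periodic equation. -/
lemma cayley {q : ℝ → 𝕜} (hq : LocallyIntegrable q volume)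
    {L : ℝ} (hL : ∀ x, q (x + L) = q x) {u v : ℝ → 𝕜} (h : HSol q u v) (x : ℝ) :
    u (x + L) + u (x - L) = Disc q L * u x ∧ v (x + L) + v (x - L) = Disc q L * v x := by
  have e : (fun y => q (y + L)) = q := funext hL
  have e2 : (fun y => q (y + (-L))) = q := funext fun y => by
    have := hL (y + -L); simp only [neg_add_cancel_right] at this; exact this.symm
  have key : ∀ y, u (y + L) = u L * cc q y + v L * ss q y ∧ v (y + L) = u L * cd q y + v L * sd q y := by
    intro y; have := HSol.transfer hq h L y; rwa [e] at this
  have hp := h.shift hq L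
  have hm := h.shift hq (-L)
  rw [e] at hp
  rw [e2] at hm
  have hw := (hp.lin hm hq 1 1).lin h hq 1 (-Disc q L)
  have W := wronski hq L
  have r := h.rep hq
  have r1 := congrFun r.1 L
  have r2 := congrFun r.2 L
  have k1 := key L
  have z := HSol.unique hq hw (u' := fun _ => 0) (v' := fun _ => 0)
    ⟨continuous_const, continuous_const, by simp, by simp⟩ L ?_ ?_
  · have z1 := congrFun z.1 x
    have z2 := congrFun z.2 x
    simp only [sub_eq_add_neg]
    constructor
    · linear_combination z1
    · linear_combination z2
  · simp only [add_neg_cancel]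
    rw [k1.1, Disc, r2, r1]
    linear_combination -(u 0) * W
  · simp only [add_neg_cancel]
    rw [k1.2, Disc, r1, r2]
    linear_combination -(v 0) * W

lemma disc_rec {q : ℝ → 𝕜} (hq : LocallyIntegrable q volume)
    {L : ℝ} (hL : ∀ x, q (x + L) = q x) (x : ℝ) :
    Disc q (x + L) + Disc q (x - L) = Disc q L * Disc q x := by
  have h1 := (cayley hq hL (hc hq) x).1
  have h2 := (cayley hq hL (hs hq) x).2
  simp only [Disc] at *
  linear_combination h1 + h2

lemma disc_zero {q : ℝ → 𝕜} (hq : LocallyIntegrable q volume) : Disc q 0 = 2 := by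
  rw [Disc, cc0 hq, sd0 hq]; norm_num

/-- Exact perturbation formula for the discriminant. -/
lemma disc_sub {q : ℝ → 𝕜} (hq : LocallyIntegrable q volume)
    {q' : ℝ → 𝕜} (hq' : LocallyIntegrable q' volume) (L : ℝ) :
    Disc q' L - Disc q L =
      -cc q L * (∫ t in (0:ℝ)..L, (q' t - q t) * cc q' t * ss q t)
      + ss q L * (∫ t in (0:ℝ)..L, (q' t - q t) * cc q' t * cc q t)
      + sd q L * (∫ t in (0:ℝ)..L, (q' t - q t) * ss q' t * cc q t)
      - cd q L * (∫ t in (0:ℝ)..L, (q' t - q t) * ss q' t * ss q t) := by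
  have h1 := (hc hq').lagrange (hc hq) hq' hq L
  have h2 := (hc hq').lagrange (hs hq) hq' hq L
  have h3 := (hs hq').lagrange (hc hq) hq' hq L
  have h4 := (hs hq').lagrange (hs hq) hq' hq L
  simp only [cc0 hq, cd0 hq, ss0 hq, sd0 hq, cc0 hq', cd0 hq', ss0 hq', sd0 hq'] at h1 h2 h3 h4
  have W := wronski hq L
  simp only [Disc]
  linear_combination (-(cc q L)) * h2 + ss q L * h1 + sd q L * h3 - cd q L * h4
    - W * (cc q' L + sd q' L) * (1 : 𝕜)

/-- Stability of solutions with respect to the potential. -/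
lemma sol_diff {q : ℝ → 𝕜} (hq : LocallyIntegrable q volume)
    {q' u v u' v' : ℝ → 𝕜} (hq' : LocallyIntegrable q' volume)
    (h : HSol q u v) (h' : HSol q' u' v') (h0 : u' 0 = u 0) (h1 : v' 0 = v 0) (X : ℝ) {x : ℝ}
    (hx : x ∈ uIcc 0 X) :
    ‖u' x - u x‖ ≤ |∫ t in (0:ℝ)..X, ‖(q' t - q t) * u t‖| * |X| *
      Real.exp (|∫ t in (0:ℝ)..X, ‖q' t‖| * |X|) := by
  have hf : LocallyIntegrable (fun t => -((q' t - q t) * u t)) volume :=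
    (LI_mul_cont (hq'.sub hq) h.cu).neg
  have : IsSol q' (fun t => -((q' t - q t) * u t)) (fun x => u' x - u x) (fun x => v' x - v x) := by
    refine ⟨h'.cu.sub h.cu, h'.cv.sub h.cv, fun x => ?_, fun x => ?_⟩
    · rw [intervalIntegral.integral_sub (h'.cv.intervalIntegrable _ _) (h.cv.intervalIntegrable _ _),
        h'.hu x, h.hu x]; ring
    · have := intervalIntegral.integral_sub (μ := volume) (a := 0) (b := x) (h'.li hq' li_zero).ii (h.li hq li_zero).ii
      have e : ∀ t, q' t * (u' t - u t) - -((q' t - q t) * u t) = (q' t * u' t - 0) - (q t * u t - 0) := by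
        intro t; ring
      simp only [e]
      rw [this, h'.hv x, h.hv x]; ring
  have := this.bound hq' hf X hx
  simpa [h0, h1] using this


/-- Lipschitz dependence of the discriminant on the potential, near a fixed one. -/
lemma disc_lip {q : ℝ → 𝕜} (hq : LocallyIntegrable q volume) (L A : ℝ) (hL : 0 ≤ L) :
    ∃ K : ℝ, 0 ≤ K ∧ ∀ q' : ℝ → 𝕜, LocallyIntegrable q' volume → (∫ t in (0:ℝ)..L, ‖q' t‖) ≤ A →
      ‖Disc q' L - Disc q L‖ ≤ K * ∫ t in (0:ℝ)..L, ‖q' t - q t‖ := by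
  obtain ⟨C1, hC1⟩ := (isCompact_Icc (a := 0) (b := L)).exists_bound_of_continuousOn
      (f := cc q) (hc hq).cu.continuousOn
  obtain ⟨C2, hC2⟩ := (isCompact_Icc (a := 0) (b := L)).exists_bound_of_continuousOn
      (f := ss q) (hs hq).cu.continuousOn
  set C := max C1 C2
  have hC0 : 0 ≤ C := le_max_of_le_left ((norm_nonneg _).trans (hC1 0 ⟨le_rfl, hL⟩))
  set B := (1 + L) * Real.exp (A * L)
  refine ⟨(‖cc q L‖ + ‖ss q L‖ + ‖sd q L‖ + ‖cd q L‖) * (B * C), by positivity, fun q' hq' hA => ?_⟩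
  have hI0 : 0 ≤ ∫ t in (0:ℝ)..L, ‖q' t‖ := intervalIntegral.integral_nonneg hL fun _ _ => norm_nonneg _
  have hb : ∀ u' v' : ℝ → 𝕜, HSol q' u' v' → ‖u' 0‖ + ‖v' 0‖ * L ≤ 1 + L → ∀ t ∈ Icc 0 L, ‖u' t‖ ≤ B := by
    intro u' v' h h1 t ht
    have := h.bound hq' li_zero L (x := t) (by rwa [uIcc_of_le hL])
    simp only [norm_zero, intervalIntegral.integral_zero, abs_zero, zero_mul, add_zero, abs_of_nonneg hL,
      abs_of_nonneg hI0] at this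
    exact this.trans (mul_le_mul h1 (Real.exp_le_exp.2 (mul_le_mul_of_nonneg_right hA hL))
      (Real.exp_pos _).le (by positivity))
  have hB1 := hb _ _ (hc hq') (by simp [cc0 hq', cd0 hq', hL])
  have hB2 := hb _ _ (hs hq') (by simp [ss0 hq', sd0 hq'])
  have key : ∀ u u' : ℝ → 𝕜, (∀ t ∈ Icc 0 L, ‖u t‖ ≤ C) → (∀ t ∈ Icc 0 L, ‖u' t‖ ≤ B) →
      ‖∫ t in (0:ℝ)..L, (q' t - q t) * u' t * u t‖ ≤ (B * C) * ∫ t in (0:ℝ)..L, ‖q' t - q t‖ := by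
    intro u u' h1 h2
    rw [← intervalIntegral.integral_const_mul]
    refine intervalIntegral.norm_integral_le_of_norm_le hL ?_ ?_
    · refine Filter.Eventually.of_forall fun t ht => ?_
      have ht' : t ∈ Icc 0 L := ⟨ht.1.le, ht.2⟩
      rw [norm_mul, norm_mul]
      have a1 := h1 t ht'
      have a2 := h2 t ht'
      calc ‖q' t - q t‖ * ‖u' t‖ * ‖u t‖ ≤ ‖q' t - q t‖ * B * C := by gcongr
        _ = _ := by ring
    · exact (LocallyIntegrable.nrm (hq'.sub hq)).ii.const_mul _
  have c1 : ∀ t ∈ Icc 0 L, ‖cc q t‖ ≤ C := fun t ht => (hC1 t ht).trans (le_max_left _ _)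
  have c2 : ∀ t ∈ Icc 0 L, ‖ss q t‖ ≤ C := fun t ht => (hC2 t ht).trans (le_max_right _ _)
  rw [disc_sub hq hq' L]
  set I := ∫ t in (0:ℝ)..L, ‖q' t - q t‖
  have k1 := key _ _ c2 hB1
  have k2 := key _ _ c1 hB1
  have k3 := key _ _ c1 hB2
  have k4 := key _ _ c2 hB2
  refine (norm_sub_le _ _).trans ?_
  refine (add_le_add ((norm_add_le _ _).trans (add_le_add ((norm_add_le _ _)) le_rfl)) le_rfl).trans ?_
  rw [norm_mul, norm_mul, norm_mul, norm_mul, norm_neg]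
  have m1 := mul_le_mul_of_nonneg_left k1 (norm_nonneg (cc q L))
  have m2 := mul_le_mul_of_nonneg_left k2 (norm_nonneg (ss q L))
  have m3 := mul_le_mul_of_nonneg_left k3 (norm_nonneg (sd q L))
  have m4 := mul_le_mul_of_nonneg_left k4 (norm_nonneg (cd q L))
  linarith

/-- The discriminant only depends on the potential on the interval. -/
lemma disc_congr {q q' : ℝ → 𝕜} (hq : LocallyIntegrable q volume) (hq' : LocallyIntegrable q' volume)
    {L : ℝ} (hL : 0 ≤ L) (h : ∀ᵐ t, t ∈ Ioo 0 L → q' t = q t) : Disc q' L = Disc q L := by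
  obtain ⟨K, hK, h1⟩ := disc_lip hq L (∫ t in (0:ℝ)..L, ‖q' t‖) hL
  have h2 := h1 q' hq' le_rfl
  have : ∫ t in (0:ℝ)..L, ‖q' t - q t‖ = 0 := by
    rw [intervalIntegral.integral_of_le hL, integral_Ioc_eq_integral_Ioo]
    refine integral_eq_zero_of_ae ((ae_restrict_iff' measurableSet_Ioo).2 ?_)
    filter_upwards [h] with t ht hm
    simp [ht hm]
  rw [this, mul_zero] at h2
  exact sub_eq_zero.1 (norm_le_zero_iff.1 h2)

/-- Exponential growth of the solution of the recursion satisfied by the traces `tr (M ^ k)`, where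
`det M = 1` and `tr M = D`. -/
lemma pow_lower {D δ : ℝ} (t : ℕ → ℝ) (h0 : t 0 = 2) (h1 : t 1 = D)
    (hr : ∀ k, t (k + 2) + t k = D * t (k + 1)) (hδ : 0 ≤ δ) (hD : 2 * (1 + δ) ≤ |D|) (k : ℕ) :
    2 * (1 + δ) ^ k ≤ |t k| := by
  -- `|t (k+1)| ≥ (1 + 2δ)|t k|`
  have key : ∀ k, (1 + δ) * |t k| ≤ |t (k + 1)| := by
    intro k
    induction k with
    | zero => rw [h0, h1, abs_two]; linarith
    | succ k ih =>
      have h2 : t (k + 2) = D * t (k + 1) - t k := by linarith [hr k]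
      have h3 : |D| * |t (k + 1)| - |t k| ≤ |t (k + 2)| := by
        rw [h2, ← abs_mul]; exact abs_sub_abs_le_abs_sub _ _
      have h4 : |t k| ≤ |t (k + 1)| := by nlinarith [abs_nonneg (t k)]
      have h5 := mul_le_mul_of_nonneg_right hD (abs_nonneg (t (k + 1)))
      show (1 + δ) * |t (k + 1)| ≤ |t (k + 2)|
      nlinarith [abs_nonneg (t (k + 1))]
  induction k with
  | zero => rw [h0, abs_two]; simp
  | succ k ih =>
    have := key k
    rw [pow_succ]
    nlinarith

/-- Repeating a period `k` times raises a lower bound for the discriminant to the `k`-th power. -/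
lemma disc_pow {q : ℝ → ℝ} (hq : LocallyIntegrable q volume) {L δ : ℝ} (hL : ∀ x, q (x + L) = q x)
    (hδ : 0 ≤ δ) (hD : 2 * (1 + δ) ≤ |Disc q L|) (k : ℕ) :
    2 * (1 + δ) ^ k ≤ |Disc q (k * L)| := by
  refine pow_lower (fun k : ℕ => Disc q (k * L)) ?_ ?_ ?_ hδ hD k
  · simp [disc_zero hq]
  · simp
  · intro k
    have := disc_rec hq hL ((k + 1) * L)
    push_cast
    rw [← this]
    congr 2 <;> ring

end ThinSpec

/-! ### Dependence of the discriminant on the energy -/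

namespace ThinSpec
variable {𝕜 : Type*} [RCLike 𝕜]

/-- The potential `V` shifted by the energy `E`. -/
abbrev qE (V : ℝ → 𝕜) (E : 𝕜) : ℝ → 𝕜 := fun x => V x - E

lemma li_qE {V : ℝ → 𝕜} (hV : LocallyIntegrable V volume) (E : 𝕜) :
    LocallyIntegrable (qE V E) volume := hV.sub (continuous_const.locallyIntegrable)

lemma int_qE_le {V : ℝ → 𝕜} (hV : LocallyIntegrable V volume) (E : 𝕜) {L : ℝ} (hL : 0 ≤ L) :
    ∫ t in (0:ℝ)..L, ‖qE V E t‖ ≤ (∫ t in (0:ℝ)..L, ‖V t‖) + ‖E‖ * L := by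
  have : (∫ t in (0:ℝ)..L, ‖V t‖) + ‖E‖ * L = ∫ t in (0:ℝ)..L, (‖V t‖ + ‖E‖) := by
    rw [intervalIntegral.integral_add hV.nrm.ii (by simp)]; simp [mul_comm]
  rw [this]
  refine intervalIntegral.integral_mono_on hL (li_qE hV E).nrm.ii (hV.nrm.ii.add (by simp)) ?_
  intro t _; exact norm_sub_le _ _

/-- Solutions with fixed initial data are Lipschitz in the energy, locally uniformly. -/
lemma energy_lip {V : ℝ → 𝕜} (hV : LocallyIntegrable V volume) (E : 𝕜) {L : ℝ} (hL : 0 ≤ L)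
    (α β : 𝕜) : ∃ K, 0 ≤ K ∧ ∀ E', ‖E' - E‖ ≤ 1 → ∀ x ∈ Icc 0 L,
      ‖(sol (qE V E') α β).1 x - (sol (qE V E) α β).1 x‖ ≤ K * ‖E' - E‖ := by
  have h := sol_spec (li_qE hV E) α β
  have hi : 0 ≤ ∫ t in (0:ℝ)..L, ‖(sol (qE V E) α β).1 t‖ :=
    intervalIntegral.integral_nonneg hL fun _ _ => norm_nonneg _
  refine ⟨(∫ t in (0:ℝ)..L, ‖(sol (qE V E) α β).1 t‖) * L *
    Real.exp (((∫ t in (0:ℝ)..L, ‖V t‖) + (‖E‖ + 1) * L) * L), by positivity, fun E' hE x hx => ?_⟩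
  have h' := sol_spec (li_qE hV E') α β
  have key := sol_diff (li_qE hV E) (li_qE hV E') h.1 h'.1 (h'.2.1.trans h.2.1.symm)
    (h'.2.2.trans h.2.2.symm) L (x := x) (by rwa [uIcc_of_le hL])
  refine key.trans ?_
  have e1 : ∫ t in (0:ℝ)..L, ‖(qE V E' t - qE V E t) * (sol (qE V E) α β).1 t‖ =
    ‖E' - E‖ * ∫ t in (0:ℝ)..L, ‖(sol (qE V E) α β).1 t‖ := by
    rw [← intervalIntegral.integral_const_mul]
    congr 1; funext t
    rw [norm_mul]; congr 1
    rw [← norm_neg]; congr 1; simp [qE]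
  have e2 : 0 ≤ ∫ t in (0:ℝ)..L, ‖qE V E' t‖ :=
    intervalIntegral.integral_nonneg hL fun _ _ => norm_nonneg _
  have e3 : ‖E'‖ ≤ ‖E‖ + 1 := by
    have := norm_add_le (E' - E) E
    rw [sub_add_cancel] at this; linarith
  rw [e1, abs_mul, abs_of_nonneg hi, abs_of_nonneg hL, abs_of_nonneg e2, abs_of_nonneg (norm_nonneg _)]
  have e4 : Real.exp ((∫ t in (0:ℝ)..L, ‖qE V E' t‖) * L) ≤
      Real.exp (((∫ t in (0:ℝ)..L, ‖V t‖) + (‖E‖ + 1) * L) * L) := by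
    refine Real.exp_le_exp.2 (mul_le_mul_of_nonneg_right ((int_qE_le hV E' hL).trans ?_) hL)
    have := mul_le_mul_of_nonneg_right e3 hL
    linarith
  calc _ ≤ ‖E' - E‖ * (∫ t in (0:ℝ)..L, ‖(sol (qE V E) α β).1 t‖) * L *
      Real.exp (((∫ t in (0:ℝ)..L, ‖V t‖) + (‖E‖ + 1) * L) * L) := by gcongr
    _ = _ := by ring

lemma tendsto_int {V : ℝ → 𝕜} (hV : LocallyIntegrable V volume) (E : 𝕜) {L : ℝ} (hL : 0 ≤ L)
    (α β : 𝕜) {w : ℝ → 𝕜} (hw : Continuous w) :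
    Filter.Tendsto (fun E' => ∫ t in (0:ℝ)..L, (sol (qE V E') α β).1 t * w t) (nhds E)
      (nhds (∫ t in (0:ℝ)..L, (sol (qE V E) α β).1 t * w t)) := by
  obtain ⟨K, hK, h⟩ := energy_lip hV E hL α β
  obtain ⟨C, hC⟩ := (isCompact_Icc (a := 0) (b := L)).exists_bound_of_continuousOn
      (f := w) hw.continuousOn
  rw [tendsto_iff_norm_sub_tendsto_zero]
  have hlim : Filter.Tendsto (fun E' => K * ‖E' - E‖ * C * |L - 0|) (nhds E) (nhds 0) := by
    have : Continuous (fun E' => K * ‖E' - E‖ * C * |L - 0|) := by fun_prop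
    simpa using this.tendsto E
  refine squeeze_zero' (Filter.Eventually.of_forall fun _ => norm_nonneg _) ?_ hlim
  filter_upwards [Metric.closedBall_mem_nhds E one_pos] with E' hE'
  have hE'' : ‖E' - E‖ ≤ 1 := by simpa [dist_eq_norm] using hE'
  have c1 := (sol_spec (li_qE hV E') α β).1.cu
  have c2 := (sol_spec (li_qE hV E) α β).1.cu
  rw [← intervalIntegral.integral_sub ((c1.fun_mul hw).intervalIntegrable _ _) ((c2.fun_mul hw).intervalIntegrable _ _)]
  refine intervalIntegral.norm_integral_le_of_norm_le_const fun t ht => ?_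
  rw [uIoc_of_le hL] at ht
  have ht' : t ∈ Icc 0 L := ⟨ht.1.le, ht.2⟩
  rw [← sub_mul, norm_mul]
  exact mul_le_mul (h E' hE'' t ht') (hC t ht') (norm_nonneg _) (by positivity)

/-- Derivative of the discriminant in the energy. -/
lemma disc_deriv {V : ℝ → 𝕜} (hV : LocallyIntegrable V volume) (E : 𝕜) {L : ℝ} (hL : 0 ≤ L) :
    HasDerivAt (fun E => Disc (qE V E) L)
      ((cc (qE V E) L - sd (qE V E) L) * (∫ t in (0:ℝ)..L, cc (qE V E) t * ss (qE V E) t)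
        - ss (qE V E) L * (∫ t in (0:ℝ)..L, cc (qE V E) t * cc (qE V E) t)
        + cd (qE V E) L * (∫ t in (0:ℝ)..L, ss (qE V E) t * ss (qE V E) t)) E := by
  set q := qE V E with hqdef
  have hq : LocallyIntegrable q volume := li_qE hV E
  let G : 𝕜 → 𝕜 := fun E' =>
      cc q L * (∫ t in (0:ℝ)..L, cc (qE V E') t * ss q t)
      - ss q L * (∫ t in (0:ℝ)..L, cc (qE V E') t * cc q t)
      - sd q L * (∫ t in (0:ℝ)..L, ss (qE V E') t * cc q t)
      + cd q L * (∫ t in (0:ℝ)..L, ss (qE V E') t * ss q t)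
  have hG : Filter.Tendsto G (nhds E) (nhds (G E)) := by
    refine Filter.Tendsto.add (Filter.Tendsto.sub (Filter.Tendsto.sub ?_ ?_) ?_) ?_
    · exact (tendsto_int hV E hL 1 0 (hs hq).cu).const_mul _
    · exact (tendsto_int hV E hL 1 0 (hc hq).cu).const_mul _
    · exact (tendsto_int hV E hL 0 1 (hc hq).cu).const_mul _
    · exact (tendsto_int hV E hL 0 1 (hs hq).cu).const_mul _
  have hval : (cc q L - sd q L) * (∫ t in (0:ℝ)..L, cc q t * ss q t)
        - ss q L * (∫ t in (0:ℝ)..L, cc q t * cc q t)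
        + cd q L * (∫ t in (0:ℝ)..L, ss q t * ss q t) = G E := by
    simp only [G, ← hqdef]
    have : (∫ t in (0:ℝ)..L, ss q t * cc q t) = ∫ t in (0:ℝ)..L, cc q t * ss q t := by
      simp only [mul_comm]
    rw [this]; ring
  rw [hval, hasDerivAt_iff_tendsto_slope]
  refine (hG.mono_left nhdsWithin_le_nhds).congr' ?_
  filter_upwards [self_mem_nhdsWithin] with E' hE'
  have hne : E' - E ≠ 0 := sub_ne_zero.2 hE'
  rw [slope_def_field, eq_div_iff hne, ← hqdef, disc_sub hq (li_qE hV E') L]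
  have e : ∀ t, qE V E' t - q t = -(E' - E) := by intro t; simp [hqdef, qE]
  simp only [e, mul_assoc, intervalIntegral.integral_const_mul]
  simp only [G]
  ring

end ThinSpec

/-! ### Cauchy data controlled by the `L²` norm -/

namespace ThinSpec
variable {𝕜 : Type*} [RCLike 𝕜]

lemma ii_ofReal {f : ℝ → ℝ} (a b : ℝ) :
    ∫ t in a..b, ((f t : ℝ) : 𝕜) = ((∫ t in a..b, f t : ℝ) : 𝕜) := by
  simp only [intervalIntegral, integral_ofReal, RCLike.ofReal_sub]

/-- The Cauchy–Schwarz inequality for interval integrals. -/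
lemma cs_int {f g : ℝ → ℝ} {a b : ℝ} (hab : a ≤ b)
    (hf : IntervalIntegrable (fun t => f t ^ 2) volume a b)
    (hg : IntervalIntegrable (fun t => g t ^ 2) volume a b)
    (hfg : IntervalIntegrable (fun t => f t * g t) volume a b) :
    (∫ t in a..b, f t * g t) ^ 2 ≤ (∫ t in a..b, f t ^ 2) * ∫ t in a..b, g t ^ 2 := by
  have h := discrim_le_zero (a := ∫ t in a..b, f t ^ 2) (b := -2 * ∫ t in a..b, f t * g t)
    (c := ∫ t in a..b, g t ^ 2) (fun x => by
      have : 0 ≤ ∫ t in a..b, (x * f t - g t) ^ 2 :=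
        intervalIntegral.integral_nonneg hab fun _ _ => sq_nonneg _
      have e : (fun t => (x * f t - g t) ^ 2) =
        fun t => x ^ 2 * f t ^ 2 - 2 * x * (f t * g t) + g t ^ 2 := by funext t; ring
      rw [e, intervalIntegral.integral_add ((hf.const_mul _).sub (hfg.const_mul _)) hg,
        intervalIntegral.integral_sub (hf.const_mul _) (hfg.const_mul _),
        intervalIntegral.integral_const_mul, intervalIntegral.integral_const_mul] at this
      linarith)
  rw [discrim] at h
  nlinarith

/-- Pairing a homogeneous solution with a test function which vanishes to second order at `a`. -/
lemma kappa_aux {a : ℝ} (ha : 0 < a) {η η1 η2 : ℝ → ℝ} (h1 : ∀ x, HasDerivAt η (η1 x) x)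
    (h2 : ∀ x, HasDerivAt η1 (η2 x) x) (c2 : Continuous η2) (ea : η a = 0) (ea1 : η1 a = 0) (Q : ℝ) :
    ∃ K : ℝ, 0 ≤ K ∧ ∀ q u v : ℝ → 𝕜, LocallyIntegrable q volume →
      LocallyIntegrable (fun t => ‖q t‖ ^ 2) volume → HSol q u v →
      (∫ t in (0:ℝ)..a, ‖q t‖ ^ 2) ≤ Q →
      ‖u 0 * (η1 0 : 𝕜) - v 0 * (η 0 : 𝕜)‖ ^ 2 ≤ K * ∫ t in (0:ℝ)..a, ‖u t‖ ^ 2 := by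
  have c0 : Continuous η := continuous_iff_continuousAt.2 fun x => (h1 x).continuousAt
  have c1 : Continuous η1 := continuous_iff_continuousAt.2 fun x => (h2 x).continuousAt
  obtain ⟨A, hA⟩ := (isCompact_Icc (a := 0) (b := a)).exists_bound_of_continuousOn c0.continuousOn
  obtain ⟨B, hB⟩ := (isCompact_Icc (a := 0) (b := a)).exists_bound_of_continuousOn c2.continuousOn
  set C := max A B
  have hC0 : 0 ≤ C := le_max_of_le_left ((norm_nonneg _).trans (hA 0 ⟨le_rfl, ha.le⟩))
  refine ⟨C ^ 2 * (2 * max Q 0 + 2 * a), by positivity, fun q u v hq hq2 h hQ => ?_⟩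
  have hη : IsSol (fun _ => (0 : 𝕜)) (fun t => -((η2 t : ℝ) : 𝕜)) (fun t => ((η t : ℝ) : 𝕜))
      (fun t => ((η1 t : ℝ) : 𝕜)) := by
    refine ⟨by fun_prop, by fun_prop, fun x => ?_, fun x => ?_⟩
    · have := intervalIntegral.integral_eq_sub_of_hasDerivAt (fun t _ => h1 t)
        (c1.intervalIntegrable 0 x)
      rw [ii_ofReal, this]; push_cast; ring
    · have := intervalIntegral.integral_eq_sub_of_hasDerivAt (fun t _ => h2 t)
        (c2.intervalIntegrable 0 x)
      simp only [zero_mul, zero_sub, neg_neg]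
      rw [ii_ofReal, this]; push_cast; ring
  have hl := lagrange h hη hq li_zero li_zero (by
    have : Continuous fun t => -((η2 t : ℝ) : 𝕜) := by fun_prop
    exact this.locallyIntegrable) a
  simp only [ea, ea1, RCLike.ofReal_zero, mul_zero, sub_zero, zero_mul] at hl
  have e : u 0 * (η1 0 : 𝕜) - v 0 * (η 0 : 𝕜) =
      ∫ t in (0:ℝ)..a, (q t * u t * (η t : 𝕜) + u t * -(η2 t : 𝕜)) := by
    linear_combination hl
  have i1 : LocallyIntegrable (fun t => ‖q t‖ + 1) volume :=
    hq.nrm.add continuous_const.locallyIntegrable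
  have i2 : LocallyIntegrable (fun t => ‖u t‖ * (‖q t‖ + 1)) volume :=
    LI_cont_mul (𝕜 := ℝ) i1 h.cu.norm
  have i3 : LocallyIntegrable (fun t => (‖q t‖ + 1) ^ 2) volume := by
    have : (fun t => (‖q t‖ + 1) ^ 2) = fun t => ‖q t‖ ^ 2 + ‖q t‖ * 2 + 1 := by funext t; ring
    rw [this]
    exact (hq2.add (LI_mul_cont (𝕜 := ℝ) hq.nrm continuous_const)).add
      continuous_const.locallyIntegrable
  have hb : ‖u 0 * (η1 0 : 𝕜) - v 0 * (η 0 : 𝕜)‖ ≤ C * ∫ t in (0:ℝ)..a, ‖u t‖ * (‖q t‖ + 1) := by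
    rw [e, ← intervalIntegral.integral_const_mul]
    refine intervalIntegral.norm_integral_le_of_norm_le ha.le ?_ (i2.ii.const_mul _)
    refine Filter.Eventually.of_forall fun t ht => ?_
    have ht' : t ∈ Icc 0 a := ⟨ht.1.le, ht.2⟩
    have a1 : |η t| ≤ C := (hA t ht').trans (le_max_left _ _)
    have a2 : |η2 t| ≤ C := (hB t ht').trans (le_max_right _ _)
    refine (norm_add_le _ _).trans ?_
    rw [norm_mul, norm_mul, norm_mul, norm_neg, RCLike.norm_ofReal, RCLike.norm_ofReal]
    have b1 := mul_le_mul_of_nonneg_left a1 (mul_nonneg (norm_nonneg (q t)) (norm_nonneg (u t)))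
    have b2 := mul_le_mul_of_nonneg_left a2 (norm_nonneg (u t))
    linarith
  have hcs := cs_int (f := fun t => ‖u t‖) (g := fun t => ‖q t‖ + 1) ha.le
    ((h.cu.norm.pow 2).intervalIntegrable _ _) i3.ii i2.ii
  have hg : ∫ t in (0:ℝ)..a, (‖q t‖ + 1) ^ 2 ≤ 2 * max Q 0 + 2 * a := by
    have : ∫ t in (0:ℝ)..a, (‖q t‖ + 1) ^ 2 ≤ ∫ t in (0:ℝ)..a, (2 * ‖q t‖ ^ 2 + 2) := by
      refine intervalIntegral.integral_mono_on ha.le i3.ii ((hq2.ii.const_mul 2).add (by simp)) ?_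
      intro t _; nlinarith [sq_nonneg (‖q t‖ - 1)]
    refine this.trans ?_
    rw [intervalIntegral.integral_add (hq2.ii.const_mul 2) (by simp), intervalIntegral.integral_const_mul]
    have : Q ≤ max Q 0 := le_max_left _ _
    simp; linarith
  have hU : 0 ≤ ∫ t in (0:ℝ)..a, ‖u t‖ ^ 2 :=
    intervalIntegral.integral_nonneg ha.le fun _ _ => sq_nonneg _
  calc _ ≤ (C * ∫ t in (0:ℝ)..a, ‖u t‖ * (‖q t‖ + 1)) ^ 2 := by gcongr
    _ = C ^ 2 * (∫ t in (0:ℝ)..a, ‖u t‖ * (‖q t‖ + 1)) ^ 2 := by ring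
    _ ≤ C ^ 2 * ((∫ t in (0:ℝ)..a, ‖u t‖ ^ 2) * (2 * max Q 0 + 2 * a)) :=
      mul_le_mul_of_nonneg_left (hcs.trans (mul_le_mul_of_nonneg_left hg hU)) (sq_nonneg _)
    _ = _ := by ring

/-- Control of the Cauchy data of a solution by its `L²` norm on the next interval of length `a`. -/
lemma kappa (𝕜 : Type*) [RCLike 𝕜] {a : ℝ} (ha : 0 < a) (Q : ℝ) :
    ∃ κ : ℝ, 0 < κ ∧ ∀ q u v : ℝ → 𝕜, LocallyIntegrable q volume →
      LocallyIntegrable (fun t => ‖q t‖ ^ 2) volume → HSol q u v → ∀ b : ℝ,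
      (∫ t in b..(b + a), ‖q t‖ ^ 2) ≤ Q →
      κ * (‖u b‖ ^ 2 + ‖v b‖ ^ 2) ≤ ∫ t in b..(b + a), ‖u t‖ ^ 2 := by
  have ha' := ha.ne'
  obtain ⟨K1, hK1, H1⟩ := kappa_aux (𝕜 := 𝕜) ha (η := fun x => x * (1 - x / a) ^ 2)
    (η1 := fun x => (1 - x / a) ^ 2 + x * (2 * (1 - x / a) * (-(1 / a))))
    (η2 := fun x => 2 * (2 * (1 - x / a) * (-(1 / a))) + x * (2 * (1 / a) ^ 2))
    (fun x => by
      have h0 : HasDerivAt (fun x : ℝ => 1 - x / a) (-(1 / a)) x := by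
        simpa using ((hasDerivAt_id x).div_const a).const_sub 1
      have := (hasDerivAt_id x).fun_mul (h0.fun_pow 2)
      exact this.congr_deriv (by simp))
    (fun x => by
      have h0 : HasDerivAt (fun x : ℝ => 1 - x / a) (-(1 / a)) x := by
        simpa using ((hasDerivAt_id x).div_const a).const_sub 1
      have := (h0.fun_pow 2).fun_add ((hasDerivAt_id x).fun_mul ((h0.const_mul 2).mul_const (-(1/a))))
      exact this.congr_deriv (by simp; ring))
    (by fun_prop) (by simp [ha']) (by simp [ha']) Q
  obtain ⟨K2, hK2, H2⟩ := kappa_aux (𝕜 := 𝕜) ha (η := fun x => (1 + 2 * x / a) * (1 - x / a) ^ 2)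
    (η1 := fun x => (2 / a) * (1 - x / a) ^ 2 + (1 + 2 * x / a) * (2 * (1 - x / a) * (-(1 / a))))
    (η2 := fun x => 2 * ((2 / a) * (2 * (1 - x / a) * (-(1 / a)))) + (1 + 2 * x / a) * (2 * (1 / a) ^ 2))
    (fun x => by
      have h0 : HasDerivAt (fun x : ℝ => 1 - x / a) (-(1 / a)) x := by
        simpa using ((hasDerivAt_id x).div_const a).const_sub 1
      have h1 : HasDerivAt (fun x : ℝ => 1 + 2 * x / a) (2 / a) x := by
        simpa using (((hasDerivAt_id x).const_mul 2).div_const a).const_add 1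
      have := h1.fun_mul (h0.fun_pow 2)
      exact this.congr_deriv (by simp))
    (fun x => by
      have h0 : HasDerivAt (fun x : ℝ => 1 - x / a) (-(1 / a)) x := by
        simpa using ((hasDerivAt_id x).div_const a).const_sub 1
      have h1 : HasDerivAt (fun x : ℝ => 1 + 2 * x / a) (2 / a) x := by
        simpa using (((hasDerivAt_id x).const_mul 2).div_const a).const_add 1
      have := ((h0.fun_pow 2).const_mul (2/a)).fun_add (h1.fun_mul ((h0.const_mul 2).mul_const (-(1/a))))
      exact this.congr_deriv (by simp; ring))
    (by fun_prop) (by simp [ha']) (by simp [ha']) Q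
  refine ⟨1 / (K1 + K2 + 1), by positivity, fun q u v hq hq2 h b hQ => ?_⟩
  have hsh := h.shift hq b
  have hQ' : ∫ t in (0:ℝ)..a, ‖q (t + b)‖ ^ 2 ≤ Q := by
    rw [intervalIntegral.integral_comp_add_right (fun t => ‖q t‖ ^ 2), zero_add, add_comm a b]; exact hQ
  have eU : ∫ t in (0:ℝ)..a, ‖u (t + b)‖ ^ 2 = ∫ t in b..(b + a), ‖u t‖ ^ 2 := by
    rw [intervalIntegral.integral_comp_add_right (fun t => ‖u t‖ ^ 2), zero_add, add_comm a b]
  have r1 := H1 _ _ _ (li_shift hq b) (li_shift (𝕜 := ℝ) hq2 b) hsh hQ'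
  have r2 := H2 _ _ _ (li_shift hq b) (li_shift (𝕜 := ℝ) hq2 b) hsh hQ'
  rw [eU] at r1 r2
  have e2 : (2 / a * (1 - 0 / a) ^ 2 + (1 + 2 * 0 / a) * (2 * (1 - 0 / a) * -(1 / a)) : ℝ) = 0 := by
    field_simp; ring
  rw [e2] at r2
  simp at r1 r2
  have hU : 0 ≤ ∫ t in b..(b + a), ‖u t‖ ^ 2 :=
    intervalIntegral.integral_nonneg (by linarith) fun _ _ => sq_nonneg _
  rw [div_mul_eq_mul_div, div_le_iff₀ (by positivity)]
  nlinarith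

end ThinSpec

/-! ### Counting zeros by Jensen's formula -/

namespace ThinSpec

/-- Jensen's bound: a function bounded by `M` on the circle of radius `e r` has at most `log (M / |f c|)`
zeros in the disc of radius `r`. -/
lemma zeros_count {f : ℂ → ℂ} (hf : Differentiable ℂ f) {c : ℂ} {r M : ℝ} (hr : 0 < r) (hM : 1 ≤ M)
    (hc : f c ≠ 0) (hb : ∀ z ∈ Metric.sphere c (Real.exp 1 * r), ‖f z‖ ≤ M) (T : Finset ℂ)
    (hT : ∀ z ∈ T, z ∈ Metric.closedBall c r ∧ f z = 0) :
    (T.card : ℝ) ≤ Real.log (M / ‖f c‖) := by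
  have he : 1 < Real.exp 1 := Real.one_lt_exp_iff.2 one_pos
  have hA : ∀ U : Set ℂ, AnalyticOnNhd ℂ f U := fun U z _ => hf.analyticAt z
  have hR : 0 < Real.exp 1 * r := by positivity
  have key := AnalyticOnNhd.sum_divisor_le (c := c) (r := r) (R := Real.exp 1 * r) (M := M) (f := f)
    (by rwa [abs_of_pos hr]) (by rw [abs_of_pos hr, abs_of_pos hR]; nlinarith) hM (hA _) hc
    (by rwa [abs_of_pos hR])
  rw [mul_div_assoc, div_self hr.ne', mul_one, Real.log_exp, div_one, abs_of_pos hr] at key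
  refine le_trans ?_ key
  have hfs := (MeromorphicOn.divisor f (Metric.closedBall c r)).finiteSupport
    (isCompact_closedBall c r)
  have hnn : ∀ z, 0 ≤ MeromorphicOn.divisor f (Metric.closedBall c r) z := fun z =>
    (MeromorphicOn.AnalyticOnNhd.divisor_nonneg (hA _)) z
  have h1 : ∀ z ∈ T, 1 ≤ MeromorphicOn.divisor f (Metric.closedBall c r) z := by
    intro z hz
    obtain ⟨hzb, hz0⟩ := hT z hz
    rw [MeromorphicOn.AnalyticOnNhd.divisor_apply (hA _) hzb]
    have o1 : analyticOrderAt f z ≠ 0 := by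
      rw [Ne, (hf.analyticAt z).analyticOrderAt_eq_zero]; simpa using hz0
    have o2 : analyticOrderAt f z ≠ ⊤ := by
      refine (hA univ).analyticOrderAt_ne_top_of_isPreconnected isPreconnected_univ
        (mem_univ c) (mem_univ z) ?_
      rw [(hf.analyticAt c).analyticOrderAt_eq_zero.2 hc]; simp
    lift analyticOrderAt f z to ℕ using o2 with n hn
    simp at o1 ⊢
    omega
  have : (T.card : ℤ) ≤ ∑ᶠ u, MeromorphicOn.divisor f (Metric.closedBall c r) u := by
    classical
    rw [finsum_eq_sum_of_support_subset (s := T ∪ hfs.toFinset) _ (by intro z hz; simp; right; exact hz)]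
    calc (T.card : ℤ) = ∑ z ∈ T, 1 := by simp
      _ ≤ ∑ z ∈ T, MeromorphicOn.divisor f (Metric.closedBall c r) z := Finset.sum_le_sum h1
      _ ≤ _ := Finset.sum_le_sum_of_subset_of_nonneg Finset.subset_union_left (fun z _ _ => hnn z)
  exact_mod_cast this

/-- An eigenvector of the `2 × 2` matrix with rows `(c, s)` and `(c1, s1)` for a root `μ` of its
characteristic polynomial. -/
lemma exists_eig {𝕜 : Type*} [Field 𝕜] (c s c1 s1 μ : 𝕜) (h : (c - μ) * (s1 - μ) - s * c1 = 0) :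
    ∃ x y : 𝕜, (x ≠ 0 ∨ y ≠ 0) ∧ c * x + s * y = μ * x ∧ c1 * x + s1 * y = μ * y := by
  have : (!![c - μ, s; c1, s1 - μ] : Matrix (Fin 2) (Fin 2) 𝕜).det = 0 := by
    rw [Matrix.det_fin_two_of]; exact h
  obtain ⟨v, hv, h0⟩ := Matrix.exists_mulVec_eq_zero_iff.2 this
  refine ⟨v 0, v 1, ?_, ?_, ?_⟩
  · by_contra hcon
    push Not at hcon
    exact hv (funext fun i => by fin_cases i <;> simp [hcon])
  · have := congrFun h0 0
    simp [Matrix.mulVec, dotProduct, Fin.sum_univ_two] at this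
    linear_combination this
  · have := congrFun h0 1
    simp [Matrix.mulVec, dotProduct, Fin.sum_univ_two] at this
    linear_combination this

end ThinSpec

/-! ### The discriminant at complex energies -/

namespace ThinSpec

lemma li_ofReal {q : ℝ → ℝ} (hq : LocallyIntegrable q volume) :
    LocallyIntegrable (fun x => (q x : ℂ)) volume := fun x => by
  obtain ⟨s, hs, h⟩ := hq x
  exact ⟨s, hs, h.ofReal⟩

lemma HSol.ofReal {q u v : ℝ → ℝ} (h : HSol q u v) :
    HSol (fun x => (q x : ℂ)) (fun x => (u x : ℂ)) (fun x => (v x : ℂ)) := by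
  refine ⟨by have := h.cu; fun_prop, by have := h.cv; fun_prop, fun x => ?_, fun x => ?_⟩
  · rw [intervalIntegral.integral_ofReal, h.hu x]; push_cast; rfl
  · have : ∀ t, (q t : ℂ) * (u t : ℂ) - 0 = ((q t * u t - 0 : ℝ) : ℂ) := by intro t; push_cast; rfl
    simp only [this]
    rw [intervalIntegral.integral_ofReal, h.hv x]; push_cast; rfl

lemma disc_ofReal {q : ℝ → ℝ} (hq : LocallyIntegrable q volume) (L : ℝ) :
    Disc (fun x => (q x : ℂ)) L = ((Disc q L : ℝ) : ℂ) := by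
  have hq' := li_ofReal hq
  have h1 := HSol.unique hq' (hc hq') (hc hq).ofReal 0 (by simp [cc0 hq', cc0 hq]) (by simp [cd0 hq', cd0 hq])
  have h2 := HSol.unique hq' (hs hq') (hs hq).ofReal 0 (by simp [ss0 hq', ss0 hq]) (by simp [sd0 hq', sd0 hq])
  rw [Disc, Disc, h1.1, h2.2]; push_cast; rfl

lemma ii_conj {f : ℝ → ℂ} (a b : ℝ) :
    ∫ t in a..b, (starRingEnd ℂ) (f t) = (starRingEnd ℂ) (∫ t in a..b, f t) := by
  simp only [intervalIntegral, integral_conj, map_sub]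

lemma HSol.conj {q u v : ℝ → ℂ} (h : HSol q u v) :
    HSol (fun x => (starRingEnd ℂ) (q x)) (fun x => (starRingEnd ℂ) (u x))
      (fun x => (starRingEnd ℂ) (v x)) := by
  refine ⟨Complex.continuous_conj.comp h.cu, Complex.continuous_conj.comp h.cv, fun x => ?_, fun x => ?_⟩
  · rw [ii_conj, ← map_add, ← h.hu x]
  · have : ∀ t, (starRingEnd ℂ) (q t) * (starRingEnd ℂ) (u t) - 0 =
      (starRingEnd ℂ) (q t * u t - 0) := by intro t; simp
    simp only [this]
    rw [ii_conj, ← map_add, ← h.hv x]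

lemma li_conj {q : ℝ → ℂ} (hq : LocallyIntegrable q volume) :
    LocallyIntegrable (fun x => (starRingEnd ℂ) (q x)) volume := fun x => by
  obtain ⟨s, hs, h⟩ := hq x
  exact ⟨s, hs, (RCLike.conjLIE (K := ℂ)).integrable_comp_iff.2 h⟩

/-- A Floquet multiplier of modulus at least `1`. -/
lemma exists_mult (D : ℂ) : ∃ μ : ℂ, μ ^ 2 - D * μ + 1 = 0 ∧ 1 ≤ ‖μ‖ := by
  obtain ⟨s, hs⟩ := IsAlgClosed.exists_pow_nat_eq (D ^ 2 - 4) (n := 2) (by norm_num)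
  have h1 : ((D + s) / 2) * ((D - s) / 2) = 1 := by
    linear_combination (-1 / 4 : ℂ) * hs
  rcases le_total 1 ‖(D + s) / 2‖ with h | h
  · exact ⟨_, by linear_combination (1 / 4 : ℂ) * hs, h⟩
  · refine ⟨(D - s) / 2, by linear_combination (1 / 4 : ℂ) * hs, ?_⟩
    have := congrArg norm h1
    rw [norm_mul, norm_one] at this
    nlinarith [norm_nonneg ((D - s) / 2)]

/-- If the discriminant is close to `[-2, 2]`, then the Floquet multipliers are close to the unit circle. -/
lemma mult_sub {μ D : ℂ} (h : μ ^ 2 - D * μ + 1 = 0) (h1 : 1 ≤ ‖μ‖) {τ : ℝ} (hτ : |τ| ≤ 2) :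
    (‖μ‖ - 1) ^ 2 ≤ ‖D - τ‖ * ‖μ‖ := by
  have hτ2 : 0 ≤ 1 - (τ / 2) ^ 2 := by
    have := sq_le_sq' (abs_le.1 hτ).1 (abs_le.1 hτ).2
    nlinarith
  set w := Real.sqrt (1 - (τ / 2) ^ 2)
  have hw : w ^ 2 = 1 - (τ / 2) ^ 2 := Real.sq_sqrt hτ2
  have hn : ∀ z : ℂ, z.re = τ / 2 → z.im ^ 2 = w ^ 2 → ‖z‖ = 1 := by
    intro z h1 h2
    have : ‖z‖ ^ 2 = 1 := by
      rw [← Complex.normSq_eq_norm_sq, Complex.normSq_apply, h1]; nlinarith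
    nlinarith [norm_nonneg z, sq_nonneg (‖z‖ - 1)]
  let ζ : ℂ := τ / 2 + w * Complex.I
  let ζ' : ℂ := τ / 2 - w * Complex.I
  have n1 : ‖ζ‖ = 1 := hn _ (by simp [ζ]) (by simp [ζ])
  have n2 : ‖ζ'‖ = 1 := hn _ (by simp [ζ']) (by simp [ζ'])
  have hwc : (w : ℂ) ^ 2 = 1 - (τ / 2) ^ 2 := by exact_mod_cast hw
  have e : (D - τ) * μ = (μ - ζ) * (μ - ζ') := by
    simp only [ζ, ζ']
    linear_combination -h - hwc + (w : ℂ) ^ 2 * Complex.I_sq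
  rw [← norm_mul, e, norm_mul, sq]
  have a1 := norm_sub_norm_le μ ζ
  have a2 := norm_sub_norm_le μ ζ'
  rw [n1] at a1
  rw [n2] at a2
  exact mul_le_mul a1 a2 (by linarith) (norm_nonneg _)

/-- At the spectral parameter `i` the discriminant stays away from `[-2, 2]`, uniformly in the potential and
the period. For a Floquet solution `u` with multiplier `μ`, the Lagrange identity for `u` and its complex
conjugate expresses `|μ|² - 1` through the `L²` norm of `u`, which `kappa` bounds from below. -/
lemma disc_lower {a : ℝ} (ha : 0 < a) (Q : ℝ) : ∃ δ : ℝ, 0 < δ ∧ ∀ V : ℝ → ℝ,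
    LocallyIntegrable V volume → LocallyIntegrable (fun t => ‖qE (fun x => (V x : ℂ)) Complex.I t‖ ^ 2) volume →
    (∫ t in (0:ℝ)..a, ‖qE (fun x => (V x : ℂ)) Complex.I t‖ ^ 2) ≤ Q → ∀ L, a ≤ L → ∀ τ : ℝ, |τ| ≤ 2 →
      δ ≤ ‖Disc (qE (fun x => (V x : ℂ)) Complex.I) L - τ‖ := by
  obtain ⟨κ, hκ, H⟩ := kappa ℂ ha Q
  set r0 := Real.sqrt (1 + 2 * κ) with hr0
  have hr0sq : r0 ^ 2 = 1 + 2 * κ := Real.sq_sqrt (by positivity)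
  have hr01 : 1 < r0 := by
    rw [hr0]; exact Real.lt_sqrt_of_sq_lt (by linarith)
  refine ⟨(r0 - 1) ^ 2 / r0, by have : 0 < r0 - 1 := by linarith
                                positivity, fun V hV hV2 hQ L hL τ hτ => ?_⟩
  set q := qE (fun x => (V x : ℂ)) Complex.I with hqdef
  have hq : LocallyIntegrable q volume := li_qE (li_ofReal hV) _
  obtain ⟨μ, hμ, hμ1⟩ := exists_mult (Disc q L)
  have W := wronski hq L
  obtain ⟨x, y, hxy, e1, e2⟩ := exists_eig (cc q L) (ss q L) (cd q L) (sd q L) μ (by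
    rw [Disc] at hμ; linear_combination W + hμ)
  have hu := (hc hq).lin (hs hq) hq x y
  set u := fun t => x * cc q t + y * ss q t with hudef
  set v := fun t => x * cd q t + y * sd q t with hvdef
  have u0 : u 0 = x := by simp [hudef, cc0 hq, ss0 hq]
  have v0 : v 0 = y := by simp [hvdef, cd0 hq, sd0 hq]
  have uL : u L = μ * x := by simp only [hudef]; linear_combination e1
  have vL : v L = μ * y := by simp only [hvdef]; linear_combination e2
  have hlag := hu.lagrange hu.conj hq (li_conj hq) L
  rw [uL, vL, u0, v0] at hlag
  have e3 : ∀ t, (q t - (starRingEnd ℂ) (q t)) * u t * (starRingEnd ℂ) (u t) =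
      (-2 * Complex.I) * ((‖u t‖ ^ 2 : ℝ) : ℂ) := by
    intro t
    rw [mul_assoc, Complex.mul_conj, Complex.normSq_eq_norm_sq]
    congr 1
    simp [hqdef, qE]; ring
  simp only [e3] at hlag
  rw [intervalIntegral.integral_const_mul, intervalIntegral.integral_ofReal] at hlag
  have hμμ : μ * (starRingEnd ℂ) μ = ((‖μ‖ ^ 2 : ℝ) : ℂ) := by
    rw [Complex.mul_conj, Complex.normSq_eq_norm_sq]
  have hlag2 : ((‖μ‖ ^ 2 - 1 : ℝ) : ℂ) * (y * (starRingEnd ℂ) x - x * (starRingEnd ℂ) y) =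
      (-2 * Complex.I) * ((∫ t in (0:ℝ)..L, ‖u t‖ ^ 2 : ℝ) : ℂ) := by
    simp only [map_mul] at hlag
    push_cast at hμμ ⊢
    linear_combination hlag - (y * (starRingEnd ℂ) x - x * (starRingEnd ℂ) y) * hμμ
  have hn := congrArg norm hlag2
  have hI0 : 0 ≤ ∫ t in (0:ℝ)..L, ‖u t‖ ^ 2 :=
    intervalIntegral.integral_nonneg (by linarith) fun _ _ => sq_nonneg _
  have hμ2 : 0 ≤ ‖μ‖ ^ 2 - 1 := by nlinarith
  rw [norm_mul, norm_mul, Complex.norm_real, Complex.norm_real, Real.norm_of_nonneg hI0,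
    Real.norm_of_nonneg hμ2, norm_mul, norm_neg, Complex.norm_I, Complex.norm_ofNat, mul_one] at hn
  have hk := H q u v hq hV2 hu 0 (by simpa using hQ)
  rw [u0, v0, zero_add] at hk
  have hmono : ∫ t in (0:ℝ)..a, ‖u t‖ ^ 2 ≤ ∫ t in (0:ℝ)..L, ‖u t‖ ^ 2 := by
    refine intervalIntegral.integral_mono_interval le_rfl ha.le hL ?_ ((hu.cu.norm.pow 2).intervalIntegrable _ _)
    exact Filter.Eventually.of_forall fun _ => sq_nonneg _
  have hle : ‖y * (starRingEnd ℂ) x - x * (starRingEnd ℂ) y‖ ≤ ‖x‖ ^ 2 + ‖y‖ ^ 2 := by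
    refine (norm_sub_le _ _).trans ?_
    rw [norm_mul, norm_mul, RCLike.norm_conj, RCLike.norm_conj]
    nlinarith [sq_nonneg (‖x‖ - ‖y‖)]
  have hpos : 0 < ‖x‖ ^ 2 + ‖y‖ ^ 2 := by
    rcases hxy with h | h
    · have := norm_pos_iff.2 h; positivity
    · have := norm_pos_iff.2 h; positivity
  have h2κ : 2 * κ ≤ ‖μ‖ ^ 2 - 1 := by
    have : 2 * (κ * (‖x‖ ^ 2 + ‖y‖ ^ 2)) ≤ (‖μ‖ ^ 2 - 1) * (‖x‖ ^ 2 + ‖y‖ ^ 2) := by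
      have := mul_le_mul_of_nonneg_left hle hμ2
      linarith
    have h3 : (2 * κ) * (‖x‖ ^ 2 + ‖y‖ ^ 2) ≤ (‖μ‖ ^ 2 - 1) * (‖x‖ ^ 2 + ‖y‖ ^ 2) := by linarith
    exact le_of_mul_le_mul_right h3 hpos
  have hr : r0 ≤ ‖μ‖ := by
    rw [hr0]; exact Real.sqrt_le_iff.2 ⟨norm_nonneg _, by linarith⟩
  have hfin := mult_sub hμ hμ1 hτ
  have hμp : 0 < ‖μ‖ := by linarith
  have : (r0 - 1) ^ 2 / r0 ≤ (‖μ‖ - 1) ^ 2 / ‖μ‖ := by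
    rw [div_le_div_iff₀ (by linarith) hμp]
    nlinarith [mul_nonneg (sub_nonneg.2 hr) (sub_nonneg.2 (by nlinarith : 1 ≤ ‖μ‖ * r0))]
  refine this.trans ?_
  rwa [div_le_iff₀ hμp]

/-- Crude upper bound for the discriminant. -/
lemma disc_upper {𝕜 : Type*} [RCLike 𝕜] {q : ℝ → 𝕜} (hq : LocallyIntegrable q volume) {L A : ℝ} (hL : 0 ≤ L)
    (hA : ∫ t in (0:ℝ)..L, ‖q t‖ ≤ A) : ‖Disc q L‖ ≤ 2 * Real.exp (A + L + A * L) := by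
  have hI0 : 0 ≤ ∫ t in (0:ℝ)..L, ‖q t‖ := intervalIntegral.integral_nonneg hL fun _ _ => norm_nonneg _
  have hA0 : 0 ≤ A := hI0.trans hA
  set B := Real.exp L * Real.exp (A * L)
  have hb : ∀ u v : ℝ → 𝕜, HSol q u v → ‖u 0‖ + ‖v 0‖ * L ≤ 1 + L → ∀ t ∈ Icc 0 L, ‖u t‖ ≤ B := by
    intro u v h h1 t ht
    have := h.bound hq li_zero L (x := t) (by rwa [uIcc_of_le hL])
    simp only [norm_zero, intervalIntegral.integral_zero, abs_zero, zero_mul, add_zero, abs_of_nonneg hL,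
      abs_of_nonneg hI0] at this
    exact this.trans (mul_le_mul (h1.trans (by linarith [Real.add_one_le_exp L]))
      (Real.exp_le_exp.2 (mul_le_mul_of_nonneg_right hA hL)) (Real.exp_pos _).le (by positivity))
  have h1 := hb _ _ (hc hq) (by simp [cc0 hq, cd0 hq, hL]) L ⟨hL, le_rfl⟩
  have h2 := hb _ _ (hs hq) (by simp [ss0 hq, sd0 hq])
  have h3 : ‖sd q L‖ ≤ 1 + A * B := by
    rw [(hs hq).hv L, sd0 hq]
    refine (norm_add_le _ _).trans ?_
    rw [norm_one]
    have : ‖∫ t in (0:ℝ)..L, (q t * ss q t - 0)‖ ≤ ∫ t in (0:ℝ)..L, ‖q t‖ * B := by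
      refine intervalIntegral.norm_integral_le_of_norm_le hL ?_ (hq.nrm.ii.mul_const _)
      refine Filter.Eventually.of_forall fun t ht => ?_
      rw [sub_zero, norm_mul]
      exact mul_le_mul_of_nonneg_left (h2 t ⟨ht.1.le, ht.2⟩) (norm_nonneg _)
    rw [intervalIntegral.integral_mul_const] at this
    have := mul_le_mul_of_nonneg_right hA (show 0 ≤ B by positivity)
    linarith
  have hB1 : 1 ≤ B := by
    rw [show B = Real.exp (L + A * L) from (Real.exp_add _ _).symm]; exact Real.one_le_exp (by positivity)
  have he : Real.exp (A + L + A * L) = Real.exp A * B := by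
    rw [add_assoc, Real.exp_add, Real.exp_add L]
  have hx := Real.add_one_le_exp A
  rw [he, Disc]
  refine (norm_add_le _ _).trans ?_
  nlinarith

end ThinSpec

/-! ### Number of bands and lower bounds for the derivative of the discriminant -/

namespace ThinSpec

/-- Uniform bound for the number of energies in `[-R, R]` at which the discriminant takes a given
value in `[-2, 2]`. It follows from `zeros_count` on discs centred at `i`, where `disc_lower` applies. -/
lemma count {a : ℝ} (ha : 0 < a) (Q : ℝ) : ∃ C : ℝ, ∀ V : ℝ → ℝ,
    LocallyIntegrable V volume → LocallyIntegrable (fun t => ‖V t‖ ^ 2) volume →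
    (∫ t in (0:ℝ)..a, ‖V t‖ ^ 2) ≤ Q → ∀ L R A, a ≤ L → 0 ≤ R →
    (∫ t in (0:ℝ)..L, ‖V t‖) + (Real.exp 1 * (R + 1) + 1) * L ≤ A → ∀ τ : ℝ, |τ| ≤ 2 →
    ∀ T : Finset ℝ, (∀ E ∈ T, |E| ≤ R ∧ Disc (qE V E) L = τ) → (T.card : ℝ) ≤ C + A + L + A * L := by
  obtain ⟨δ, hδ, H⟩ := disc_lower ha (Q + a)
  refine ⟨Real.log (4 / δ), fun V hV hV2 hQ L R A hL hR hA τ hτ T hT => ?_⟩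
  have hL0 : 0 ≤ L := by linarith
  have e0 : ∀ t, ‖qE (fun x => (V x : ℂ)) Complex.I t‖ ^ 2 = ‖V t‖ ^ 2 + 1 := by
    intro t
    rw [← Complex.normSq_eq_norm_sq, Complex.normSq_apply]
    simp [qE]; ring
  have low := H V hV (by
      simp only [e0]; exact hV2.add continuous_const.locallyIntegrable)
    (by
      simp only [e0]
      rw [intervalIntegral.integral_add hV2.ii (by simp)]; simp; simpa using hQ) L hL τ hτ
  set f : ℂ → ℂ := fun z => Disc (qE (fun x => (V x : ℂ)) z) L - τ
  have hVc := li_ofReal hV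
  have hf : Differentiable ℂ f := fun z => ((disc_deriv hVc z hL0).sub_const _).differentiableAt
  have hfc : f Complex.I ≠ 0 := fun h => by
    have : ‖f Complex.I‖ = 0 := by rw [h, norm_zero]
    linarith
  have hintg : 0 ≤ ∫ t in (0:ℝ)..L, ‖V t‖ := intervalIntegral.integral_nonneg hL0 fun _ _ => norm_nonneg _
  have hA0 : 0 ≤ A := le_trans (by positivity) hA
  have hexp : 1 ≤ Real.exp (A + L + A * L) := Real.one_le_exp (by positivity)
  have key := zeros_count (c := Complex.I) (r := R + 1) (M := 4 * Real.exp (A + L + A * L)) hf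
    (by linarith) (by linarith) hfc (fun z hz => by
      have hz' : ‖z - Complex.I‖ = Real.exp 1 * (R + 1) := by simpa [dist_eq_norm] using hz
      have hzn : ‖z‖ ≤ Real.exp 1 * (R + 1) + 1 := by
        have := norm_add_le (z - Complex.I) Complex.I
        rw [sub_add_cancel, Complex.norm_I, hz'] at this; exact this
      have h1 := int_qE_le hVc z hL0
      have h2 : (∫ t in (0:ℝ)..L, ‖(V t : ℂ)‖) = ∫ t in (0:ℝ)..L, ‖V t‖ := by simp
      rw [h2] at h1
      have h3 := mul_le_mul_of_nonneg_right hzn hL0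
      have h4 := disc_upper (li_qE hVc z) hL0 (h1.trans (le_trans (by linarith) hA))
      have h5 : ‖f z‖ ≤ ‖Disc (qE (fun x => (V x : ℂ)) z) L‖ + ‖(τ : ℂ)‖ := norm_sub_le _ _
      rw [Complex.norm_real, Real.norm_eq_abs] at h5
      linarith) (T.map ⟨fun x : ℝ => (x : ℂ), Complex.ofReal_injective⟩) (fun z hz => by
      rw [Finset.mem_map] at hz
      obtain ⟨E, hE, rfl⟩ := hz
      obtain ⟨h1, h2⟩ := hT E hE
      constructor
      · simp only [Function.Embedding.coeFn_mk, Metric.mem_closedBall, dist_eq_norm]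
        refine (norm_sub_le _ _).trans ?_
        rw [Complex.norm_real, Complex.norm_I, Real.norm_eq_abs]; linarith
      · have : qE (fun x => (V x : ℂ)) (E : ℂ) = fun x => ((qE V E x : ℝ) : ℂ) := by
          funext x; simp [qE]
        simp only [Function.Embedding.coeFn_mk, f, this, disc_ofReal (li_qE hV E), h2, sub_self])
  rw [Finset.card_map] at key
  refine key.trans ?_
  have hfp : 0 < ‖f Complex.I‖ := norm_pos_iff.2 hfc
  have : 4 * Real.exp (A + L + A * L) / ‖f Complex.I‖ ≤ (4 / δ) * Real.exp (A + L + A * L) := by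
    rw [div_mul_eq_mul_div]
    exact div_le_div_of_nonneg_left (by positivity) hδ low
  refine (Real.log_le_log (by positivity) this).trans ?_
  rw [Real.log_mul (by positivity) (by positivity), Real.log_exp]
  linarith

lemma quad_abs (p q r s x y z w : ℝ) :
    |p * q - r * s + x * y - z * w| ≤
      ((x ^ 2 + s ^ 2 + z ^ 2 + q ^ 2) + (p ^ 2 + w ^ 2 + r ^ 2 + y ^ 2)) / 2 := by
  have h := abs_le.2 ⟨(by linarith [sq_nonneg (p + q), sq_nonneg (r - s), sq_nonneg (x + y), sq_nonneg (z - w)] :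
    -(((x ^ 2 + s ^ 2 + z ^ 2 + q ^ 2) + (p ^ 2 + w ^ 2 + r ^ 2 + y ^ 2)) / 2) ≤ p * q - r * s + x * y - z * w),
    (by linarith [sq_nonneg (p - q), sq_nonneg (r + s), sq_nonneg (x - y), sq_nonneg (z + w)])⟩
  exact h

lemma comb_aux {κ T σ r A B M : ℝ} (hκ : 0 ≤ κ) (h : T * (σ * (r / 2)) ≤ (A + B) / 2)
    (h0 : κ * A ≤ M) (h1 : κ * B ≤ M) : σ * (κ / 2 * T * r) ≤ M := by
  have := mul_le_mul_of_nonneg_left h hκ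
  linarith

/-- Lower bound for the derivative of the discriminant at an energy in the interior of a band,
in terms of the trace of the transfer matrix from `b0` to `b1`. Up to sign and the factor `s = ss q L`, the
derivative is the integral of `u1² + u2²` for two real solutions `u1`, `u2` with Wronskian proportional to
`√(4 - D²)`. That trace times the Wronskian is a bilinear expression in the Cauchy data of `u1`, `u2` at
`b0` and `b1`, and `kappa` bounds these data by the integral. -/
lemma deriv_lower {a : ℝ} (ha : 0 < a) (Q : ℝ) : ∃ κ : ℝ, 0 < κ ∧ ∀ V : ℝ → ℝ,
    LocallyIntegrable V volume → ∀ E : ℝ, LocallyIntegrable (fun t => ‖qE V E t‖ ^ 2) volume →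
    ∀ L b0 b1 : ℝ, 0 ≤ b0 → b0 + a ≤ L → 0 ≤ b1 → b1 + a ≤ L →
    (∫ t in b0..(b0 + a), ‖qE V E t‖ ^ 2) ≤ Q → (∫ t in b1..(b1 + a), ‖qE V E t‖ ^ 2) ≤ Q →
    |Disc (qE V E) L| < 2 →
    κ * |Disc (fun x => qE V E (x + b0)) (b1 - b0)| * Real.sqrt (4 - Disc (qE V E) L ^ 2) ≤
      |deriv (fun E => Disc (qE V E) L) E| := by
  obtain ⟨κ, hκ, H⟩ := kappa ℝ ha Q
  refine ⟨κ / 2, by positivity, fun V hV E hq2 L b0 b1 hb0 hb0L hb1 hb1L hQ0 hQ1 hD => ?_⟩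
  have hL0 : 0 ≤ L := by linarith
  have hq := li_qE hV E
  rw [(disc_deriv hV E hL0).deriv]
  set q := qE V E
  set D := Disc q L with hDdef
  set c := cc q L
  set s := ss q L
  set c1 := cd q L
  set s1 := sd q L
  have hDe : D = c + s1 := rfl
  have W : c * s1 - s * c1 = 1 := wronski hq L
  have hD4 : 0 < 4 - D ^ 2 := by
    have := abs_lt.1 hD; nlinarith
  set r := Real.sqrt (4 - D ^ 2) with hr
  have hrsq : r ^ 2 = 4 - D ^ 2 := Real.sq_sqrt hD4.le
  have hr0 : 0 < r := Real.sqrt_pos.2 hD4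
  have hs0 : s ≠ 0 := by
    intro h0
    rw [h0] at W
    have h4 := hD4
    rw [hDe] at h4
    nlinarith [sq_nonneg (c - s1)]
  set u1 : ℝ → ℝ := fun t => s * cc q t + (-(c - s1) / 2) * ss q t with hu1
  set v1 : ℝ → ℝ := fun t => s * cd q t + (-(c - s1) / 2) * sd q t with hv1
  set u2 : ℝ → ℝ := fun t => 0 * cc q t + (r / 2) * ss q t with hu2
  set v2 : ℝ → ℝ := fun t => 0 * cd q t + (r / 2) * sd q t with hv2
  have S1 : HSol q u1 v1 := (hc hq).lin (hs hq) hq _ _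
  have S2 : HSol q u2 v2 := (hc hq).lin (hs hq) hq _ _
  have ccont := (hc hq).cu
  have scont := (hs hq).cu
  have i1 : ∫ t in (0:ℝ)..L, (‖u1 t‖ ^ 2 + ‖u2 t‖ ^ 2) = -s * ((c - s1) * (∫ t in (0:ℝ)..L, cc q t * ss q t)
        - s * (∫ t in (0:ℝ)..L, cc q t * cc q t) + c1 * (∫ t in (0:ℝ)..L, ss q t * ss q t)) := by
    have e : ∀ t, ‖u1 t‖ ^ 2 + ‖u2 t‖ ^ 2 = (-s * (c - s1)) * (cc q t * ss q t) + s ^ 2 * (cc q t * cc q t)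
        + (-s * c1) * (ss q t * ss q t) := by
      intro t
      simp only [Real.norm_eq_abs, sq_abs, hu1, hu2]
      linear_combination (ss q t) ^ 2 * (1 / 4 * hrsq - W - (1/4) * (D + c + s1) * hDe)
    simp only [e]
    rw [intervalIntegral.integral_add, intervalIntegral.integral_add, intervalIntegral.integral_const_mul,
      intervalIntegral.integral_const_mul, intervalIntegral.integral_const_mul]
    · ring
    all_goals exact Continuous.intervalIntegrable (by fun_prop) _ _
  set DD := (c - s1) * (∫ t in (0:ℝ)..L, cc q t * ss q t)
        - s * (∫ t in (0:ℝ)..L, cc q t * cc q t) + c1 * (∫ t in (0:ℝ)..L, ss q t * ss q t)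
  have c1' : Continuous (fun t => ‖u1 t‖ ^ 2) := (S1.cu.norm.pow 2)
  have c2' : Continuous (fun t => ‖u2 t‖ ^ 2) := (S2.cu.norm.pow 2)
  have hk : ∀ b, 0 ≤ b → b + a ≤ L → (∫ t in b..(b + a), ‖q t‖ ^ 2) ≤ Q →
      κ * (u1 b ^ 2 + v1 b ^ 2 + u2 b ^ 2 + v2 b ^ 2) ≤ |s| * |DD| := by
    intro b hb hbL hQ
    have k1 := H q u1 v1 hq hq2 S1 b hQ
    have k2 := H q u2 v2 hq hq2 S2 b hQ
    have m1 : (∫ t in b..(b + a), ‖u1 t‖ ^ 2) + (∫ t in b..(b + a), ‖u2 t‖ ^ 2) ≤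
        ∫ t in (0:ℝ)..L, (‖u1 t‖ ^ 2 + ‖u2 t‖ ^ 2) := by
      rw [← intervalIntegral.integral_add (c1'.intervalIntegrable _ _) (c2'.intervalIntegrable _ _)]
      refine intervalIntegral.integral_mono_interval hb (by linarith) hbL ?_
        ((c1'.add c2').intervalIntegrable _ _)
      exact Filter.Eventually.of_forall fun t => by positivity
    have m2 : -s * DD ≤ |s| * |DD| := by
      rw [← abs_mul, neg_mul]; exact neg_le_abs _
    rw [i1] at m1
    simp only [Real.norm_eq_abs, sq_abs] at k1 k2 m1
    linarith
  have k0 := hk b0 hb0 hb0L hQ0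
  have k1 := hk b1 hb1 hb1L hQ1
  have W12 : u1 b0 * v2 b0 - u2 b0 * v1 b0 = s * (r / 2) := by
    have := wronski hq b0
    simp only [hu1, hv1, hu2, hv2]
    linear_combination s * (r / 2) * this
  have T1 := HSol.transfer hq S1 b0 (b1 - b0)
  have T2 := HSol.transfer hq S2 b0 (b1 - b0)
  rw [sub_add_cancel] at T1 T2
  have htr : Disc (fun x => q (x + b0)) (b1 - b0) * (s * (r / 2)) =
      u1 b1 * v2 b0 - u2 b1 * v1 b0 + u1 b0 * v2 b1 - u2 b0 * v1 b1 := by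
    rw [T1.1, T1.2, T2.1, T2.2, ← W12, Disc]; ring
  have hab : |Disc (fun x => q (x + b0)) (b1 - b0)| * (|s| * (r / 2)) ≤
     ((u1 b0 ^ 2 + v1 b0 ^ 2 + u2 b0 ^ 2 + v2 b0 ^ 2) + (u1 b1 ^ 2 + v1 b1 ^ 2 + u2 b1 ^ 2 + v2 b1 ^ 2)) / 2 := by
    have : |Disc (fun x => q (x + b0)) (b1 - b0)| * (|s| * (r / 2)) =
      |Disc (fun x => q (x + b0)) (b1 - b0) * (s * (r / 2))| := by
      rw [abs_mul, abs_mul s, abs_of_pos (show 0 < r / 2 by positivity)]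
    rw [this, htr]
    exact quad_abs _ _ _ _ _ _ _ _
  have hfin : |s| * (κ / 2 * |Disc (fun x => q (x + b0)) (b1 - b0)| * r) ≤ |s| * |DD| := by
    exact comb_aux hκ.le hab k0 k1
  exact le_of_mul_le_mul_left hfin (abs_pos.2 hs0)

end ThinSpec

/-! ### Measure of the bands -/

namespace ThinSpec

/-- A one-dimensional area formula bound: if `|g'| ≥ m` on `S`, `g` maps `S` into an interval of
length `π`, and the fibres of `g` on `S` have at most `n` points, then `|S| ≤ π n / m`. -/
lemma area_bound {g g' : ℝ → ℝ} {S : Set ℝ} (hS : MeasurableSet S)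
    (hg : ∀ x ∈ S, HasDerivWithinAt g (g' x) S x) {m : ℝ} (hm : 0 < m)
    (hlow : ∀ x ∈ S, m ≤ |g' x|) (hI : ∀ x ∈ S, g x ∈ Icc (-(Real.pi / 2)) (Real.pi / 2)) {n : ℝ}
    (hn : ∀ τ, ∀ T : Finset ℝ, ((T : Set ℝ) ⊆ S) → (∀ x ∈ T, g x = τ) → (T.card : ℝ) ≤ n) :
    volume S ≤ ENNReal.ofReal (Real.pi * n / m) := by
  have hn0 : 0 ≤ n := by simpa using hn 0 ∅ (by simp) (by simp)
  rcases S.eq_empty_or_nonempty with h0 | hne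
  · simp [h0]
  let r : (ℝ →L[ℝ] ℝ) → NNReal := fun A => if A 1 = 0 then 1 else ‖A 1‖₊ / 2
  have hr : ∀ A, r A ≠ 0 := by
    intro A
    simp only [r]
    split_ifs with h
    · simp
    · simpa using h
  obtain ⟨t, A, tdisj, tmeas, tcov, tapp, tA⟩ :=
    exists_partition_approximatesLinearOn_of_hasFDerivWithinAt g S
      (fun x => ContinuousLinearMap.toSpanSingleton ℝ (g' x)) (fun x hx => (hg x hx).hasFDerivWithinAt) r hr
  have hinj : ∀ k, InjOn g (S ∩ t k) := by
    intro k x hx y hy hxy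
    obtain ⟨z, hz, hAz⟩ := tA hne k
    have hA1 : A k 1 = g' z := by rw [hAz]; simp
    have hpos : 0 < |g' z| := hm.trans_le (hlow z hz)
    have hA0 : A k 1 ≠ 0 := by rw [hA1]; exact abs_pos.1 hpos
    have h := tapp k x hx y hy
    rw [hxy, sub_self, zero_sub, norm_neg] at h
    have e : A k (x - y) = (x - y) * A k 1 := by
      rw [← smul_eq_mul, ← map_smul]; simp
    have hrk : (r (A k) : ℝ) = |g' z| / 2 := by
      simp only [r, if_neg hA0]; rw [hA1]; simp
    rw [e, hA1, norm_mul, hrk, Real.norm_eq_abs, Real.norm_eq_abs] at h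
    by_contra hne'
    have : 0 < |x - y| := abs_pos.2 (sub_ne_zero.2 hne')
    nlinarith
  have hSm : ∀ k, MeasurableSet (S ∩ t k) := fun k => hS.inter (tmeas k)
  have hgk : ∀ k, ∀ x ∈ S ∩ t k, HasDerivWithinAt g (g' x) (S ∩ t k) x := fun k x hx =>
    (hg x hx.1).mono inter_subset_left
  have himg : ∀ k, MeasurableSet (g '' (S ∩ t k)) := fun k =>
    (hSm k).image_of_continuousOn_injOn (fun x hx => (hgk k x hx).continuousWithinAt) (hinj k)
  have hpiece : ∀ k, ENNReal.ofReal m * volume (S ∩ t k) ≤ volume (g '' (S ∩ t k)) := by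
    intro k
    have := lintegral_image_eq_lintegral_abs_deriv_mul (hSm k) (hgk k) (hinj k) (fun _ => 1)
    simp only [lintegral_const, one_mul, mul_one, Measure.restrict_apply_univ] at this
    rw [this, ← setLIntegral_const]
    exact setLIntegral_mono' (hSm k) (fun x hx => ENNReal.ofReal_le_ofReal (hlow x hx.1))
  have hptw : ∀ τ, ∑' k, (g '' (S ∩ t k)).indicator (fun _ => (1 : ENNReal)) τ ≤
      (Icc (-(Real.pi / 2)) (Real.pi / 2)).indicator (fun _ => ENNReal.ofReal n) τ := by
    intro τ
    by_cases hτ : τ ∈ Icc (-(Real.pi / 2)) (Real.pi / 2)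
    · rw [indicator_of_mem hτ, ENNReal.tsum_eq_iSup_sum]
      refine iSup_le fun F => ?_
      classical
      let F' := F.filter (fun k => τ ∈ g '' (S ∩ t k))
      have e1 : ∑ k ∈ F, (g '' (S ∩ t k)).indicator (fun _ => (1 : ENNReal)) τ = F'.card := by
        simp only [Set.indicator_apply, F']
        rw [Finset.sum_boole]
      rw [e1]
      have hch : ∀ k, ∃ x, k ∈ F' → x ∈ S ∩ t k ∧ g x = τ := by
        intro k
        by_cases hk : k ∈ F'
        · obtain ⟨x, hx, hx'⟩ := (Finset.mem_filter.1 hk).2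
          exact ⟨x, fun _ => ⟨hx, hx'⟩⟩
        · exact ⟨0, fun h => absurd h hk⟩
      choose f hf using hch
      have hfi : InjOn f F' := by
        intro i hi j hj hij
        by_contra hne'
        exact Set.disjoint_left.1 (tdisj hne') (hf i hi).1.2 (hij ▸ (hf j hj).1.2)
      have := hn τ (F'.image f) (by
        intro x hx
        obtain ⟨k, hk, rfl⟩ := Finset.mem_image.1 (Finset.mem_coe.1 hx)
        exact (hf k hk).1.1) (by
        intro x hx
        obtain ⟨k, hk, rfl⟩ := Finset.mem_image.1 hx
        exact (hf k hk).2)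
      rw [Finset.card_image_of_injOn hfi] at this
      rw [← ENNReal.ofReal_natCast]
      exact ENNReal.ofReal_le_ofReal this
    · rw [indicator_of_notMem hτ]
      simp only [nonpos_iff_eq_zero, ENNReal.tsum_eq_zero]
      intro k
      refine indicator_of_notMem ?_ _
      rintro ⟨x, hx, rfl⟩
      exact hτ (hI x hx.1)
  have htot : ENNReal.ofReal m * volume S ≤ ENNReal.ofReal (Real.pi * n) := by
    have hSu : S = ⋃ k, S ∩ t k := by
      rw [← inter_iUnion]; exact (inter_eq_left.2 tcov).symm
    calc ENNReal.ofReal m * volume S ≤ ENNReal.ofReal m * ∑' k, volume (S ∩ t k) := by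
          gcongr
          conv_lhs => rw [hSu]
          exact measure_iUnion_le _
      _ = ∑' k, ENNReal.ofReal m * volume (S ∩ t k) := ENNReal.tsum_mul_left.symm
      _ ≤ ∑' k, volume (g '' (S ∩ t k)) := ENNReal.tsum_le_tsum hpiece
      _ = ∑' k, ∫⁻ τ, (g '' (S ∩ t k)).indicator (fun _ => (1 : ENNReal)) τ := by
          congr 1; ext k; rw [lintegral_indicator (himg k)]; simp
      _ = ∫⁻ τ, ∑' k, (g '' (S ∩ t k)).indicator (fun _ => (1 : ENNReal)) τ :=
          (lintegral_tsum fun k => (measurable_const.indicator (himg k)).aemeasurable).symm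
      _ ≤ ∫⁻ τ, (Icc (-(Real.pi / 2)) (Real.pi / 2)).indicator (fun _ => ENNReal.ofReal n) τ :=
          lintegral_mono hptw
      _ = ENNReal.ofReal (Real.pi * n) := by
          rw [lintegral_indicator measurableSet_Icc, setLIntegral_const, Real.volume_Icc,
            ← ENNReal.ofReal_mul hn0]
          congr 1; ring
  rw [ENNReal.ofReal_div_of_pos hm, ENNReal.le_div_iff_mul_le
    (Or.inl (by simpa using hm)) (Or.inl ENNReal.ofReal_ne_top), mul_comm]
  exact htot

/-- Application of `area_bound` to `g = arcsin (D / 2)`. -/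
lemma band_measure {D D' : ℝ → ℝ} (hD : ∀ E, HasDerivAt D (D' E) E) {S : Set ℝ}
    (hS : MeasurableSet S) {m : ℝ} (hm : 0 < m)
    (hlow : ∀ E ∈ S, |D E| < 2 → m * √(4 - D E ^ 2) ≤ |D' E|) {n : ℝ}
    (hn : ∀ τ, |τ| ≤ 2 → ∀ T : Finset ℝ, (∀ E ∈ T, E ∈ S ∧ D E = τ) → (T.card : ℝ) ≤ n) :
    volume (S ∩ {E | |D E| ≤ 2}) ≤ ENNReal.ofReal (Real.pi * n / m) := by
  have hDc : Continuous D := continuous_iff_continuousAt.2 fun E => (hD E).continuousAt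
  have hfin : ∀ τ, |τ| ≤ 2 → volume (S ∩ {E | D E = τ}) = 0 := by
    intro τ hτ
    refine Set.Finite.measure_zero ?_ _
    by_contra hinf
    obtain ⟨k, hk⟩ := exists_nat_gt n
    obtain ⟨T, hT, hTk⟩ := Set.Infinite.exists_subset_card_eq hinf k
    have := hn τ hτ T (fun E hE => hT hE)
    rw [hTk] at this
    linarith
  have hcov : S ∩ {E | |D E| ≤ 2} ⊆ ((S ∩ {E | |D E| < 2}) ∪ (S ∩ {E | D E = 2})) ∪ (S ∩ {E | D E = -2}) := by
    rintro E ⟨hE, h2⟩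
    rcases lt_or_eq_of_le (show |D E| ≤ 2 from h2) with h | h
    · exact Or.inl (Or.inl ⟨hE, h⟩)
    · rcases (abs_eq (by norm_num)).1 h with h | h
      · exact Or.inl (Or.inr ⟨hE, h⟩)
      · exact Or.inr ⟨hE, h⟩
  refine (measure_mono hcov).trans ((measure_union_le _ _).trans ?_)
  rw [hfin (-2) (by norm_num), add_zero]
  refine (measure_union_le _ _).trans ?_
  rw [hfin 2 (by norm_num), add_zero]
  have hr : ∀ E, |D E| < 2 → 0 < √(4 - D E ^ 2) := fun E h => by
    apply Real.sqrt_pos.2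
    have := abs_lt.1 h; nlinarith
  refine area_bound (g := fun E => Real.arcsin (D E / 2)) (g' := fun E => D' E / √(4 - D E ^ 2))
    (hS.inter (isOpen_lt hDc.abs continuous_const).measurableSet) ?_ hm ?_ ?_ ?_
  · rintro E ⟨hE, h⟩
    have h' := abs_lt.1 (show |D E| < 2 from h)
    have := (Real.hasDerivAt_arcsin (x := D E / 2) (by linarith) (by linarith)).comp E ((hD E).div_const 2)
    refine HasDerivAt.hasDerivWithinAt (this.congr_deriv ?_)
    have e : √(4 - D E ^ 2) = 2 * √(1 - (D E / 2) ^ 2) := by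
      rw [show 4 - D E ^ 2 = 2 ^ 2 * (1 - (D E / 2) ^ 2) by ring, Real.sqrt_mul (by norm_num),
        Real.sqrt_sq (by norm_num)]
    have hp := hr E h
    rw [e] at hp ⊢
    have : 0 < √(1 - (D E / 2) ^ 2) := by linarith
    field_simp
  · rintro E ⟨hE, h⟩
    rw [abs_div, abs_of_pos (hr E h), le_div_iff₀ (hr E h)]
    exact hlow E hE h
  · rintro E _
    exact Real.arcsin_mem_Icc _
  · intro τ T hT hTτ
    rcases T.eq_empty_or_nonempty with rfl | ⟨E0, hE0⟩
    · exact hn 0 (by norm_num) ∅ (by simp)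
    · refine hn (D E0) (le_of_lt (hT hE0).2) T fun E hE => ⟨(hT hE).1, ?_⟩
      have hEa := abs_lt.1 (show |D E| < 2 from (hT hE).2)
      have hEb := abs_lt.1 (show |D E0| < 2 from (hT hE0).2)
      have := Real.injOn_arcsin (x₁ := D E / 2) ⟨by linarith, by linarith⟩ (x₂ := D E0 / 2)
        ⟨by linarith, by linarith⟩ ((hTτ E hE).trans (hTτ E0 hE0).symm)
      linarith

end ThinSpec

/-! ### Distributional solutions -/

namespace ThinSpec

/-- Test functions: smooth with compact support. -/
structure Test (φ : ℝ → ℝ) : Prop where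
  sm : ContDiff ℝ (⊤ : ℕ∞) φ
  cs : HasCompactSupport φ

lemma Test.deriv {φ : ℝ → ℝ} (h : Test φ) : Test (deriv φ) :=
  ⟨(contDiff_infty_iff_deriv.1 h.sm).2, h.cs.deriv⟩

lemma Test.diff {φ : ℝ → ℝ} (h : Test φ) : Differentiable ℝ φ := (contDiff_infty_iff_deriv.1 h.sm).1

lemma Test.cont {φ : ℝ → ℝ} (h : Test φ) : Continuous φ := h.sm.continuous

lemma Test.int {φ : ℝ → ℝ} (h : Test φ) {w : ℝ → ℝ} (hw : LocallyIntegrable w volume) :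
    Integrable (fun x => w x * φ x) :=
  hw.integrable_smul_right_of_hasCompactSupport h.cont h.cs

lemma Test.integrable {φ : ℝ → ℝ} (h : Test φ) : Integrable φ :=
  h.cont.integrable_of_hasCompactSupport h.cs

lemma Test.supp {φ : ℝ → ℝ} (h : Test φ) : ∃ R : ℝ, 0 < R ∧ ∀ x, R ≤ |x| → φ x = 0 ∧ _root_.deriv φ x = 0 := by
  obtain ⟨R, hR⟩ := h.cs.isCompact.isBounded.subset_closedBall (0 : ℝ)
  refine ⟨|R| + 1, by positivity, fun x hx => ?_⟩
  have hx' : x ∉ tsupport φ := fun hmem => by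
    have := hR hmem
    rw [Metric.mem_closedBall, dist_zero_right, Real.norm_eq_abs] at this
    have := le_abs_self R
    linarith
  refine ⟨image_eq_zero_of_notMem_tsupport hx', ?_⟩
  by_contra hne
  exact hx' (support_deriv_subset hne)

lemma Test.ftc {φ : ℝ → ℝ} (h : Test φ) (x : ℝ) : φ x = φ 0 + ∫ t in (0:ℝ)..x, _root_.deriv φ t := by
  rw [intervalIntegral.integral_deriv_eq_sub (fun t _ => h.diff t) (h.deriv.cont.intervalIntegrable _ _)]
  ring

lemma Test.isSol {φ : ℝ → ℝ} (h : Test φ) :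
    IsSol (fun _ => 0) (fun x => -(_root_.deriv (_root_.deriv φ) x)) φ (_root_.deriv φ) := by
  refine ⟨h.cont, h.deriv.cont, h.ftc, fun x => ?_⟩
  simpa using h.deriv.ftc x

lemma Test.int_eq {φ : ℝ → ℝ} (h : Test φ) {w : ℝ → ℝ} : ∃ R0, 0 < R0 ∧ ∀ R, R0 ≤ R →
    ∫ x, w x * φ x = ∫ x in (-R)..R, w x * φ x := by
  obtain ⟨R, hR, h0⟩ := h.supp
  refine ⟨R, hR, fun R' hR' => ?_⟩
  rw [intervalIntegral.integral_eq_integral_of_support_subset]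
  intro x hx
  rw [Function.mem_support] at hx
  by_contra hx'
  refine hx ?_
  rw [(h0 x _).1, mul_zero]
  by_contra hlt
  push Not at hlt
  have := abs_lt.1 hlt
  exact hx' ⟨by linarith, by linarith⟩

/-- A solution of `-u'' + q u = f` solves the equation in the distributional sense. -/
lemma sol_weak {q f u v : ℝ → ℝ} (h : IsSol q f u v) (hq : LocallyIntegrable q volume)
    (hf : LocallyIntegrable f volume) {φ : ℝ → ℝ} (hφ : Test φ) :
    ∫ x, u x * (-(deriv (deriv φ) x) + q x * φ x) = ∫ x, f x * φ x := by
  obtain ⟨R, hR, h0⟩ := hφ.supp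
  have hφ2 := hφ.deriv.deriv
  have li2 : LocallyIntegrable (fun x => -(deriv (deriv φ) x)) volume := hφ2.cont.neg.locallyIntegrable
  have hI : LocallyIntegrable (fun t => (q t - 0) * u t * φ t - f t * φ t + u t * -(deriv (deriv φ) t)) volume := by
    simp only [sub_zero]
    exact ((LI_mul_cont (LI_mul_cont hq h.cu) hφ.cont).sub (LI_mul_cont hf hφ.cont)).add
      (h.cu.mul hφ2.cont.neg).locallyIntegrable
  have k1 := lagrange h hφ.isSol hq hf li_zero li2 R
  have k2 := lagrange h hφ.isSol hq hf li_zero li2 (-R)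
  rw [(h0 R (le_abs_self R)).1, (h0 R (le_abs_self R)).2] at k1
  rw [(h0 (-R) (by rw [abs_neg]; exact le_abs_self R)).1, (h0 (-R) (by rw [abs_neg]; exact le_abs_self R)).2] at k2
  have k3 : ∫ t in (-R)..R, ((q t - 0) * u t * φ t - f t * φ t + u t * -(deriv (deriv φ) t)) = 0 := by
    rw [← intervalIntegral.integral_add_adjacent_intervals (b := 0) hI.ii hI.ii,
      intervalIntegral.integral_symm]
    linarith
  rw [intervalIntegral.integral_eq_integral_of_support_subset] at k3
  · rw [← sub_eq_zero, ← integral_sub]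
    · rw [← k3]; congr 1; ext x; ring
    · have e : (fun x => u x * (-(deriv (deriv φ) x) + q x * φ x)) =
        fun x => -(u x * deriv (deriv φ) x) + (q x * u x) * φ x := by ext x; ring
      rw [e]
      exact (hφ2.int h.cu.locallyIntegrable).neg.add (hφ.int (LI_mul_cont hq h.cu))
    · exact hφ.int hf
  · intro x hx
    rw [Function.mem_support] at hx
    by_contra hx'
    have hge : R ≤ |x| := by
      by_contra hlt
      push Not at hlt
      have := abs_lt.1 hlt
      exact hx' ⟨by linarith, by linarith⟩
    have hd : deriv (deriv φ) x = 0 := by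
      -- `x` lies outside the topological support: all derivatives of `φ` vanish there
      by_contra hne
      have hev : ∀ y, R < |y| → deriv φ y = 0 := fun y hy => (h0 y hy.le).2
      have : deriv (deriv φ) x = 0 := by
        have hc : IsClosed {y | deriv (deriv φ) y = 0} := isClosed_eq hφ2.cont continuous_const
        have hop : {y : ℝ | R < |y|} ⊆ {y | deriv (deriv φ) y = 0} := by
          intro y hy
          have : deriv φ =ᶠ[nhds y] fun _ => 0 := by
            filter_upwards [(isOpen_lt continuous_const continuous_abs).mem_nhds hy] with z hz
            exact hev z hz
          simp only [Set.mem_ofPred_eq, this.deriv_eq, deriv_const]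
        have hx2 : x ∈ closure {y : ℝ | R < |y|} := by
          rw [Metric.mem_closure_iff]
          intro ε hε
          rcases le_or_gt 0 x with hx0 | hx0
          · rw [abs_of_nonneg hx0] at hge
            refine ⟨x + ε / 2, ?_, ?_⟩
            · simp only [Set.mem_ofPred_eq]; rw [abs_of_nonneg (by linarith)]; linarith
            · rw [Real.dist_eq, show x - (x + ε / 2) = -(ε / 2) by ring, abs_neg, abs_of_pos (by linarith)]
              linarith
          · rw [abs_of_neg hx0] at hge
            refine ⟨x - ε / 2, ?_, ?_⟩
            · simp only [Set.mem_ofPred_eq]; rw [abs_of_neg (by linarith)]; linarith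
            · rw [Real.dist_eq, show x - (x - ε / 2) = (ε / 2) by ring, abs_of_pos (by linarith)]
              linarith
        exact (hc.closure_subset_iff.2 hop) hx2
      exact hne this
    exact hx (by rw [hd, (h0 x hge).1]; simp)

lemma Test.antideriv {ψ : ℝ → ℝ} (h : Test ψ) (h0 : ∫ x, ψ x = 0) : ∃ Φ, Test Φ ∧ _root_.deriv Φ = ψ := by
  obtain ⟨R, hR, hz⟩ := h.supp
  have hd : ∀ x, HasDerivAt (fun x => ∫ t in (-R)..x, ψ t) (ψ x) x := fun x =>
    intervalIntegral.integral_hasDerivAt_right (h.cont.intervalIntegrable _ _)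
      (h.cont.stronglyMeasurableAtFilter _ _) h.cont.continuousAt
  have hd' : _root_.deriv (fun x => ∫ t in (-R)..x, ψ t) = ψ := funext fun x => (hd x).deriv
  have hout : ∀ x y, x ≤ y → (∀ t ∈ Ioo x y, ψ t = 0) → ∫ t in x..y, ψ t = 0 := by
    intro x y hxy hh
    rw [intervalIntegral.integral_of_le hxy, integral_Ioc_eq_integral_Ioo]
    exact setIntegral_eq_zero_of_forall_eq_zero hh
  have htot : ∫ t in (-R)..R, ψ t = 0 := by
    rw [intervalIntegral.integral_eq_integral_of_support_subset, h0]
    intro x hx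
    by_contra hx'
    refine hx (hz x ?_).1
    by_contra hlt
    push Not at hlt
    have := abs_lt.1 hlt
    exact hx' ⟨by linarith, by linarith⟩
  refine ⟨_, ⟨contDiff_infty_iff_deriv.2 ⟨fun x => (hd x).differentiableAt, by rw [hd']; exact h.sm⟩, ?_⟩, hd'⟩
  refine HasCompactSupport.intro (K := Icc (-R) R) isCompact_Icc fun x hx => ?_
  rcases lt_or_ge x (-R) with h1 | h1
  · rw [intervalIntegral.integral_symm, hout x (-R) h1.le, neg_zero]
    intro t ht
    exact (hz t (by rw [abs_of_neg (by linarith [ht.2])]; linarith [ht.2])).1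
  · have h2 : R < x := by
      by_contra hle
      exact hx ⟨h1, not_lt.1 hle⟩
    rw [← intervalIntegral.integral_add_adjacent_intervals (b := R) (h.cont.intervalIntegrable _ _)
      (h.cont.intervalIntegrable _ _), htot, hout R x h2.le, add_zero]
    intro t ht
    exact (hz t (by rw [abs_of_pos (by linarith [ht.1])]; linarith [ht.1])).1

/-- A normalised test function. -/
lemma exists_eta : ∃ η : ℝ → ℝ, Test η ∧ ∫ x, η x = 1 := by
  let b : ContDiffBump (0 : ℝ) := ⟨1, 2, by norm_num, by norm_num⟩
  exact ⟨b.normed volume, ⟨b.contDiff_normed, b.hasCompactSupport_normed⟩, b.integral_normed⟩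

lemma Test.sub_smul {φ η : ℝ → ℝ} (h : Test φ) (hη : Test η) (k : ℝ) : Test (fun x => φ x - k * η x) :=
  ⟨h.sm.sub (contDiff_const.mul hη.sm), h.cs.sub (HasCompactSupport.mul_left hη.cs)⟩

/-- The du Bois-Reymond lemma of first order. -/
lemma dubois1 {w : ℝ → ℝ} (hw : LocallyIntegrable w volume)
    (h : ∀ φ, Test φ → ∫ x, w x * deriv φ x = 0) : ∃ k, ∀ᵐ x, w x = k := by
  obtain ⟨η, hη, h1⟩ := exists_eta
  refine ⟨∫ x, w x * η x, ?_⟩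
  have := ae_eq_zero_of_integral_contDiff_smul_eq_zero (f := fun x => w x - ∫ x, w x * η x) (μ := volume)
    (hw.sub continuous_const.locallyIntegrable) ?_
  · filter_upwards [this] with x hx
    linarith
  intro φ hs hc
  have hφ : Test φ := ⟨hs, hc⟩
  obtain ⟨Φ, hΦ, hd⟩ := (hφ.sub_smul hη (∫ x, φ x)).antideriv (by
    rw [integral_sub hφ.integrable (hη.integrable.const_mul _), integral_const_mul, h1]; ring)
  have k := h Φ hΦ
  rw [hd] at k
  have e : ∀ x, w x * (φ x - (∫ x, φ x) * η x) = w x * φ x - (∫ x, φ x) * (w x * η x) := fun x => by ring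
  simp only [e] at k
  rw [integral_sub (hφ.int hw) ((hη.int hw).const_mul _), integral_const_mul] at k
  have e2 : ∀ x, φ x • (w x - ∫ x, w x * η x) = w x * φ x - (∫ x, w x * η x) * φ x := fun x => by
    rw [smul_eq_mul]; ring
  simp only [e2]
  rw [integral_sub (hφ.int hw) (hφ.integrable.const_mul _), integral_const_mul]
  linarith

/-- The du Bois-Reymond lemma of second order. -/
lemma dubois2 {w : ℝ → ℝ} (hw : LocallyIntegrable w volume)
    (h : ∀ φ, Test φ → ∫ x, w x * deriv (deriv φ) x = 0) : ∃ k l : ℝ, ∀ᵐ x, w x = k + l * x := by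
  obtain ⟨η, hη, h1⟩ := exists_eta
  set c := ∫ x, w x * deriv η x
  have hid : Continuous (fun x : ℝ => c * x) := by fun_prop
  obtain ⟨k, hk⟩ := dubois1 (w := fun x => w x + c * x) (hw.add hid.locallyIntegrable) (by
    intro φ hφ
    obtain ⟨Φ, hΦ, hd⟩ := (hφ.sub_smul hη (∫ x, φ x)).antideriv (by
      rw [integral_sub hφ.integrable (hη.integrable.const_mul _), integral_const_mul, h1]; ring)
    have k := h Φ hΦ
    rw [hd] at k
    have e0 : ∀ x, deriv (fun x => φ x - (∫ x, φ x) * η x) x = deriv φ x - (∫ x, φ x) * deriv η x := fun x =>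
      ((hφ.diff x).hasDerivAt.sub ((hη.diff x).hasDerivAt.const_mul _)).deriv
    have e : ∀ x, w x * (deriv φ x - (∫ x, φ x) * deriv η x) =
      w x * deriv φ x - (∫ x, φ x) * (w x * deriv η x) := fun x => by ring
    simp only [e0, e] at k
    rw [integral_sub (hφ.deriv.int hw) ((hη.deriv.int hw).const_mul _), integral_const_mul] at k
    have k2 : ∫ x, x * deriv φ x = - ∫ x, φ x := by
      have := integral_mul_deriv_eq_deriv_mul_of_integrable (A := ℝ) (u := fun x : ℝ => x) (v := φ)
        (u' := fun _ => 1) (v' := deriv φ) (fun x _ => hasDerivAt_id x) (fun x _ => (hφ.diff x).hasDerivAt)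
        (hφ.deriv.int continuous_id.locallyIntegrable)
        (hφ.integrable.congr (Filter.Eventually.of_forall fun x => by simp))
        (hφ.int continuous_id.locallyIntegrable)
      simpa using this
    have e2 : ∀ x, (w x + c * x) * deriv φ x = w x * deriv φ x + c * (x * deriv φ x) := fun x => by ring
    simp only [e2]
    have i3 : Integrable (fun x : ℝ => x * deriv φ x) := hφ.deriv.int continuous_id.locallyIntegrable
    rw [integral_add (hφ.deriv.int hw) (i3.const_mul _),
      integral_const_mul, k2]
    linarith)
  refine ⟨k, -c, ?_⟩
  filter_upwards [hk] with x hx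
  linarith

/-- Regularity: a distributional solution of `-g'' + q g = 0` agrees almost everywhere with a
classical (Carathéodory) solution. -/
lemma weak_regular {q g : ℝ → ℝ} (hg : LocallyIntegrable g volume)
    (hqg : LocallyIntegrable (fun x => q x * g x) volume)
    (h : ∀ φ, Test φ → ∫ x, g x * (-(deriv (deriv φ) x) + q x * φ x) = 0) :
    ∃ u v, HSol q u v ∧ ∀ᵐ x, g x = u x := by
  obtain ⟨P, P1, hP, hP0, hP10⟩ := exists_sol (𝕜 := ℝ) li_zero hqg.neg 0 0
  obtain ⟨k, l, hkl⟩ := dubois2 (w := fun x => g x - P x) (hg.sub hP.cu.locallyIntegrable) (by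
    intro φ hφ
    have h1 := h φ hφ
    have h2 := sol_weak hP li_zero hqg.neg hφ
    have e1 : ∀ x, g x * (-(deriv (deriv φ) x) + q x * φ x) = -(g x * deriv (deriv φ) x) + (q x * g x) * φ x :=
      fun x => by ring
    have i1 := hφ.deriv.deriv.int hg
    have i2 := hφ.deriv.deriv.int hP.cu.locallyIntegrable
    simp only [e1] at h1
    have i1n : Integrable (fun x => -(g x * deriv (deriv φ) x)) := i1.neg
    rw [integral_add i1n (hφ.int hqg), integral_neg] at h1
    simp only [zero_mul, add_zero, mul_neg, Pi.neg_apply, neg_mul, integral_neg] at h2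
    have e3 : ∀ x, (g x - P x) * deriv (deriv φ) x = g x * deriv (deriv φ) x - P x * deriv (deriv φ) x :=
      fun x => by ring
    simp only [e3]
    rw [integral_sub i1 i2]
    linarith)
  have hae : ∀ᵐ x, g x = P x + (k + l * x) := by
    filter_upwards [hkl] with x hx
    linarith
  refine ⟨fun x => P x + (k + l * x), fun x => P1 x + l, ⟨by have := hP.cu; fun_prop, by have := hP.cv; fun_prop, ?_, ?_⟩, hae⟩
  · intro x
    rw [intervalIntegral.integral_add (hP.cv.intervalIntegrable _ _) (continuous_const.intervalIntegrable _ _)]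
    have := hP.hu x
    simp
    linarith
  · intro x
    have e : ∫ t in (0:ℝ)..x, (q t * (P t + (k + l * t)) - 0) = ∫ t in (0:ℝ)..x, (0 * P t - (-fun x => q x * g x) t) := by
      refine intervalIntegral.integral_congr_ae ?_
      filter_upwards [hae] with t ht _
      simp [ht]
    rw [e]
    have := hP.hv x
    linarith

end ThinSpec

/-! ### Square integrable functions and delay equations -/

namespace ThinSpec

lemma norm_sq_L2 {μ : Measure ℝ} (f : Lp ℝ 2 μ) : ‖f‖ ^ 2 = ∫ x, f x ^ 2 ∂μ := by
  rw [← real_inner_self_eq_norm_sq, L2.inner_def]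
  congr 1; ext x; simp [sq]

lemma int_sq_L2 {μ : Measure ℝ} (f : Lp ℝ 2 μ) : Integrable (fun x => f x ^ 2) μ :=
  (Lp.memLp f).integrable_sq

lemma li_L2 (f : L2R) : LocallyIntegrable f volume := (Lp.memLp f).locallyIntegrable (by norm_num)

/-- A bounded sequence with `r (n + 1) + r (n - 1) = D r n` and `|D| > 2` vanishes. -/
lemma rec_zero {r : ℤ → ℝ} {M D : ℝ} (hM : ∀ n, |r n| ≤ M) (hD : 2 < |D|)
    (hr : ∀ n, r (n + 1) + r (n - 1) = D * r n) (n : ℤ) : r n = 0 := by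
  have hM0 : 0 ≤ M := (abs_nonneg _).trans (hM 0)
  have key : ∀ k : ℕ, ∀ n, |r n| ≤ M * (2 / |D|) ^ k := by
    intro k
    induction k with
    | zero => simpa using hM
    | succ k ih =>
      intro n
      have h1 := ih (n + 1)
      have h2 := ih (n - 1)
      have h3 : |D| * |r n| ≤ |r (n + 1)| + |r (n - 1)| := by
        rw [← abs_mul, ← hr]; exact abs_add_le _ _
      rw [pow_succ, ← mul_assoc, mul_div_assoc', le_div_iff₀ (by linarith)]
      linarith
  have hlim : Filter.Tendsto (fun k : ℕ => M * (2 / |D|) ^ k) Filter.atTop (nhds (M * 0)) :=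
    (tendsto_pow_atTop_nhds_zero_of_lt_one (by positivity) (by rw [div_lt_one (by linarith)]; exact hD)).const_mul M
  rw [mul_zero] at hlim
  exact abs_nonpos_iff.1 (ge_of_tendsto' hlim fun k => key k n)

/-- The product of two locally square integrable functions is locally integrable. -/
lemma li_mul_sq {q g : ℝ → ℝ} (hq : LocallyIntegrable q volume) (hg : LocallyIntegrable g volume)
    (hq2 : LocallyIntegrable (fun x => ‖q x‖ ^ 2) volume) (hg2 : LocallyIntegrable (fun x => ‖g x‖ ^ 2) volume) :
    LocallyIntegrable (fun x => q x * g x) volume := by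
  refine (hq2.add hg2).mono (hq.aestronglyMeasurable.mul hg.aestronglyMeasurable)
    (Filter.Eventually.of_forall fun x => ?_)
  rw [Pi.add_apply, norm_mul, Real.norm_of_nonneg (by positivity : 0 ≤ ‖q x‖ ^ 2 + ‖g x‖ ^ 2)]
  nlinarith [sq_nonneg (‖q x‖ - ‖g x‖), sq_nonneg (‖q x‖), sq_nonneg (‖g x‖)]

/-- The function `-φ'' + q φ` is square integrable. -/
lemma Test.memLp {q : ℝ → ℝ} (hq : LocallyIntegrable q volume)
    (hq2 : LocallyIntegrable (fun x => ‖q x‖ ^ 2) volume) {φ : ℝ → ℝ} (hφ : Test φ) :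
    MemLp (fun x => -(_root_.deriv (_root_.deriv φ) x) + q x * φ x) 2 volume := by
  refine MemLp.add (f := fun x => -(_root_.deriv (_root_.deriv φ) x)) (g := fun x => q x * φ x) ?_ ?_
  · exact (hφ.deriv.deriv.cont.memLp_of_hasCompactSupport hφ.deriv.deriv.cs).neg
  · rw [memLp_two_iff_integrable_sq (LI_mul_cont hq hφ.cont).aestronglyMeasurable]
    have : Integrable (fun x => ‖q x‖ ^ 2 * (φ x) ^ 2) :=
      hq2.integrable_smul_right_of_hasCompactSupport (hφ.cont.pow 2) (by
        have := hφ.cs.mul_right (f' := φ)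
        simp only [sq]; exact this)
    refine this.congr (Filter.Eventually.of_forall fun x => ?_)
    simp [mul_pow]

lemma abs_int_mul_le {g ψ : ℝ → ℝ} (hg : MemLp g 2 volume) (hψ : MemLp ψ 2 volume) :
    |∫ x, g x * ψ x| ≤ ((∫ x, g x ^ 2) + ∫ x, ψ x ^ 2) / 2 := by
  rw [← integral_add hg.integrable_sq hψ.integrable_sq, ← integral_div]
  refine abs_integral_le_integral_abs.trans ?_
  refine integral_mono (hg.integrable_mul hψ).abs ((hg.integrable_sq.add hψ.integrable_sq).div_const 2) fun x => ?_
  simp only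
  rw [abs_mul]
  nlinarith [sq_nonneg (|g x| - |ψ x|), sq_abs (g x), sq_abs (ψ x)]

lemma ae_shift {p : ℝ → Prop} (h : ∀ᵐ x, p x) (s : ℝ) : ∀ᵐ x, p (x + s) :=
  (measurePreserving_add_right volume s).quasiMeasurePreserving.ae h

lemma memLp_shift {g : ℝ → ℝ} (h : MemLp g 2 volume) (s : ℝ) : MemLp (fun x => g (x + s)) 2 volume :=
  h.comp_measurePreserving (measurePreserving_add_right volume s)

lemma int_lin3 {a b c a' b' c' : ℝ → ℝ} (h1 : Integrable a) (h2 : Integrable b) (h3 : Integrable c)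
    (h1' : Integrable a') (h2' : Integrable b') (h3' : Integrable c') :
    ∫ x, ((a x + b x - c x) - (a' x + b' x - c' x)) =
      ((∫ x, a x) + (∫ x, b x) - ∫ x, c x) - ((∫ x, a' x) + (∫ x, b' x) - ∫ x, c' x) := by
  have k1 : Integrable (fun x => a x + b x) := h1.add h2
  have k2 : Integrable (fun x => a' x + b' x) := h1'.add h2'
  have k3 : Integrable (fun x => a x + b x - c x) := k1.sub h3
  have k4 : Integrable (fun x => a' x + b' x - c' x) := k2.sub h3'
  rw [integral_sub k3 k4, integral_sub k1 h3, integral_sub k2 h3', integral_add h1' h2', integral_add h1 h2]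

/-- Outside the bands, a square integrable function satisfying the same period-`L` delay equation as
a solution of the differential equation is itself a distributional solution. -/
lemma weak_of_delay {q f u v g : ℝ → ℝ} (hq : LocallyIntegrable q volume)
    (hq2 : LocallyIntegrable (fun x => ‖q x‖ ^ 2) volume) {L : ℝ} (hL : ∀ x, q (x + L) = q x)
    (hf : MemLp f 2 volume) (hg : MemLp g 2 volume) (hu : IsSol q f u v) {D : ℝ} (hD : 2 < |D|)
    (hdel : ∀ᵐ x, g (x + L) + g (x - L) - D * g x = u (x + L) + u (x - L) - D * u x)
    {φ : ℝ → ℝ} (hφ : Test φ) :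
    ∫ x, g x * (-(deriv (deriv φ) x) + q x * φ x) = ∫ x, f x * φ x := by
  have hfl := hf.locallyIntegrable (by norm_num)
  have hLn : ∀ n : ℤ, ∀ x, q (x + n * L) = q x := by
    intro n x
    have : Function.Periodic q L := hL
    exact this.int_mul n x
  set ψ := fun x => -(deriv (deriv φ) x) + q x * φ x with hψd
  have hψ : MemLp ψ 2 volume := Test.memLp hq hq2 hφ
  have hφ2 : MemLp φ 2 volume := hφ.cont.memLp_of_hasCompactSupport hφ.cs
  have hsol : ∀ n : ℤ, ∫ x, u (x + n * L) * ψ x = ∫ x, f (x + n * L) * φ x := by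
    intro n
    have h1 := hu.shift hq hfl (n * L)
    rw [show (fun x => q (x + n * L)) = q from funext (hLn n)] at h1
    exact sol_weak h1 hq (li_shift hfl _) hφ
  have iu : ∀ s : ℝ, Integrable (fun x => u (x + s) * ψ x) := by
    intro s
    have e : (fun x => u (x + s) * ψ x) =
        fun x => -(u (x + s) * deriv (deriv φ) x) + (q x * u (x + s)) * φ x := by ext x; simp only [hψd]; ring
    have cu : Continuous (fun x => u (x + s)) := by have := hu.cu; fun_prop
    rw [e]
    exact (hφ.deriv.deriv.int cu.locallyIntegrable).neg.add (hφ.int (LI_mul_cont hq cu))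
  have ig : ∀ s : ℝ, Integrable (fun x => g (x + s) * ψ x) := fun s => (memLp_shift hg s).integrable_mul hψ
  have key := rec_zero (r := fun n : ℤ => (∫ x, g (x + n * L) * ψ x) - ∫ x, u (x + n * L) * ψ x)
    (M := ((∫ x, g x ^ 2) + ∫ x, ψ x ^ 2) / 2 + ((∫ x, f x ^ 2) + ∫ x, φ x ^ 2) / 2) (D := D) ?_ hD ?_ 0
  · simp only [Int.cast_zero, zero_mul, add_zero] at key
    have := hsol 0
    simp only [Int.cast_zero, zero_mul, add_zero] at this
    linarith
  · intro n
    rw [hsol n]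
    refine (abs_sub _ _).trans (add_le_add ?_ ?_)
    · refine (abs_int_mul_le (memLp_shift hg _) hψ).trans_eq ?_
      rw [integral_add_right_eq_self (fun x => g x ^ 2)]
    · refine (abs_int_mul_le (memLp_shift hf _) hφ2).trans_eq ?_
      rw [integral_add_right_eq_self (fun x => f x ^ 2)]
  · intro n
    have h1 := ae_shift hdel (n * L)
    have e : ∀ x : ℝ, x + ((n + 1 : ℤ) : ℝ) * L = x + n * L + L ∧ x + ((n - 1 : ℤ) : ℝ) * L = x + n * L - L := by
      intro x; push_cast; constructor <;> ring
    have i1 := ig (((n + 1 : ℤ) : ℝ) * L)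
    have i2 := ig (((n - 1 : ℤ) : ℝ) * L)
    have j1 := iu (((n + 1 : ℤ) : ℝ) * L)
    have j2 := iu (((n - 1 : ℤ) : ℝ) * L)
    have i0 := (ig (n * L)).const_mul D
    have j0 := (iu (n * L)).const_mul D
    have : ∫ x, (((g (x + ((n + 1 : ℤ) : ℝ) * L) * ψ x + g (x + ((n - 1 : ℤ) : ℝ) * L) * ψ x) - D * (g (x + n * L) * ψ x)) -
       ((u (x + ((n + 1 : ℤ) : ℝ) * L) * ψ x + u (x + ((n - 1 : ℤ) : ℝ) * L) * ψ x) - D * (u (x + n * L) * ψ x))) = 0 := by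
      refine integral_eq_zero_of_ae ?_
      filter_upwards [h1] with x hx
      rw [(e x).1, (e x).2, Pi.zero_apply]
      linear_combination ψ x * hx
    rw [int_lin3 i1 i2 i0 j1 j2 j0, integral_const_mul, integral_const_mul] at this
    linarith

end ThinSpec

/-! ### Energies outside the bands lie in the resolvent set -/

namespace ThinSpec

/-- The combination `u (x + L) + u (x - L) - D u x` is controlled locally by the source term: by `cayley` it
does not change when a homogeneous solution is added to `u`, so that the Cauchy data of `u` at `x - L` may be
taken to be zero. -/
lemma delay_bound {q : ℝ → ℝ} (hq : LocallyIntegrable q volume) {L : ℝ} (hL0 : 0 < L)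
    (hL : ∀ x, q (x + L) = q x) : ∃ C : ℝ, 0 ≤ C ∧ ∀ f u v : ℝ → ℝ, LocallyIntegrable f volume →
      IsSol q f u v → ∀ x, |u (x + L) + u (x - L) - Disc q L * u x| ≤ C * ∫ s in (-L)..L, |f (x + s)| := by
  set A := ∫ t in (0:ℝ)..(2 * L), ‖q t‖ with hA
  have hA0 : 0 ≤ A := intervalIntegral.integral_nonneg (by linarith) fun _ _ => norm_nonneg _
  refine ⟨(1 + |Disc q L|) * (2 * L * Real.exp (A * (2 * L))), by positivity, fun f u v hf h x => ?_⟩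
  obtain ⟨w, w1, hw, hw0, hw10⟩ := exists_sol (li_shift hq (x - L)) (li_shift hf (x - L)) (0 : ℝ) 0
  have hb : ∀ y ∈ Icc (0:ℝ) (2 * L), |w y| ≤ (2 * L * Real.exp (A * (2 * L))) * ∫ s in (-L)..L, |f (x + s)| := by
    intro y hy
    have := hw.bound (li_shift hq (x - L)) (li_shift hf (x - L)) (2 * L) (x := y)
      (by rw [uIcc_of_le (by linarith)]; exact hy)
    rw [hw0, hw10] at this
    have e1 : ∫ t in (0:ℝ)..(2 * L), ‖q (t + (x - L))‖ = A := by
      rw [intervalIntegral.integral_comp_add_right (fun t => ‖q t‖)]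
      have hp : Function.Periodic (fun t => ‖q t‖) (2 * L) := by
        intro t; simp only; rw [two_mul, ← add_assoc, hL, hL]
      have := hp.intervalIntegral_add_eq (0 + (x - L)) 0
      rw [zero_add, zero_add] at this
      rw [hA, ← this]; congr 1 <;> ring
    have e2 : ∫ t in (0:ℝ)..(2 * L), ‖f (t + (x - L))‖ = ∫ s in (-L)..L, |f (x + s)| := by
      rw [intervalIntegral.integral_comp_add_right (fun t => ‖f t‖),
        intervalIntegral.integral_comp_add_left (fun t => |f t|)]
      simp only [Real.norm_eq_abs]
      congr 1 <;> ring
    rw [e1, e2, abs_of_nonneg hA0, abs_of_pos (by linarith : 0 < 2 * L),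
      abs_of_nonneg (intervalIntegral.integral_nonneg (by linarith) fun _ _ => abs_nonneg _)] at this
    simp only [norm_zero, zero_mul, zero_add] at this
    rw [Real.norm_eq_abs] at this
    linarith
  have hw' := hw.shift (li_shift hq (x - L)) (li_shift hf (x - L)) (-(x - L))
  simp only [neg_add_cancel_right] at hw'
  have hd := h.sub hw' hq hf hf
  simp only [sub_self] at hd
  have hcay := (cayley hq hL hd x).1
  have e3 : u (x + L) + u (x - L) - Disc q L * u x = w (2 * L) - Disc q L * w L := by
    have a1 : x + L + -(x - L) = 2 * L := by ring
    have a2 : x - L + -(x - L) = 0 := by ring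
    have a3 : x + -(x - L) = L := by ring
    rw [a1, a2, a3, hw0] at hcay
    linear_combination hcay
  rw [e3]
  have b1 := hb (2 * L) ⟨by linarith, le_rfl⟩
  have b2 := mul_le_mul_of_nonneg_left (hb L ⟨by linarith, by linarith⟩) (abs_nonneg (Disc q L))
  have := abs_sub (w (2 * L)) (Disc q L * w L)
  rw [abs_mul] at this
  calc _ ≤ _ := this
    _ ≤ _ := add_le_add b1 b2
    _ = _ := by ring

/-- Integrating `f²` over a moving window of length `2 L`. -/
lemma window_int (f : L2R) (L : ℝ) (hL : 0 < L) :
    Integrable (fun x => ∫ s in (-L)..L, f (x + s) ^ 2) ∧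
      ∫ x, ∫ s in (-L)..L, f (x + s) ^ 2 = 2 * L * ∫ x, f x ^ 2 := by
  have hm : StronglyMeasurable (fun p : ℝ × ℝ => f (p.1 + p.2) ^ 2) :=
    ((Lp.stronglyMeasurable f).comp_measurable (measurable_fst.add measurable_snd)).pow 2
  have hs : ∀ s : ℝ, ∫ x, f (x + s) ^ 2 = ∫ x, f x ^ 2 := fun s =>
    integral_add_right_eq_self (fun x => f x ^ 2) s
  have hI : Integrable (fun p : ℝ × ℝ => f (p.1 + p.2) ^ 2) (volume.prod (volume.restrict (Ioc (-L) L))) := by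
    rw [integrable_prod_iff' hm.aestronglyMeasurable]
    constructor
    · exact Filter.Eventually.of_forall fun s => (memLp_shift (Lp.memLp f) s).integrable_sq
    · have : ∀ s : ℝ, ∫ x, ‖f (x + s) ^ 2‖ = ∫ x, f x ^ 2 := by
        intro s
        rw [← hs s]; congr 1; ext x; rw [Real.norm_of_nonneg (sq_nonneg _)]
      simp only [this]
      exact integrable_const _
  have hle : -L ≤ L := by linarith
  simp only [intervalIntegral.integral_of_le hle]
  refine ⟨hI.integral_prod_left, ?_⟩
  rw [integral_integral_swap hI]
  simp only [hs]
  rw [integral_const]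
  simp [Measure.real]
  left
  rw [ENNReal.toReal_ofReal (by linarith)]; ring

/-- For every solution `u` of `-u'' + q u = f` with `f` in `L²`, the function
`u (x + L) + u (x - L) - D u x` is in `L²`, with norm controlled by that of `f`. -/
lemma delay_memLp {q : ℝ → ℝ} (hq : LocallyIntegrable q volume) {L : ℝ} (hL0 : 0 < L)
    (hL : ∀ x, q (x + L) = q x) : ∃ C : ℝ, 0 ≤ C ∧ ∀ (f : L2R) (u v : ℝ → ℝ), IsSol q f u v →
      ∃ F : L2R, (∀ᵐ x, F x = u (x + L) + u (x - L) - Disc q L * u x) ∧ ‖F‖ ≤ C * ‖f‖ := by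
  obtain ⟨C, hC, H⟩ := delay_bound hq hL0 hL
  refine ⟨C * (2 * L), by positivity, fun f u v h => ?_⟩
  have hf := li_L2 f
  have hcu := h.cu
  have hcont : Continuous (fun x => u (x + L) + u (x - L) - Disc q L * u x) := by fun_prop
  obtain ⟨w1, w2⟩ := window_int f L hL0
  have hpt : ∀ x, (u (x + L) + u (x - L) - Disc q L * u x) ^ 2 ≤
      C ^ 2 * (2 * L) * ∫ s in (-L)..L, f (x + s) ^ 2 := by
    intro x
    have hfx : LocallyIntegrable (fun s => f (x + s)) volume := by
      simpa only [add_comm] using li_shift hf x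
    have hfx2 : Integrable (fun s => f (x + s) ^ 2) := by
      simpa only [add_comm] using (memLp_shift (Lp.memLp f) x).integrable_sq
    have hcs := cs_int (f := fun _ => 1) (g := fun s => |f (x + s)|) (a := -L) (b := L) (by linarith)
      (by simp) (by simpa only [sq_abs] using hfx2.intervalIntegrable) (by simpa only [one_mul, Real.norm_eq_abs] using hfx.nrm.ii)
    simp only [one_mul, one_pow, sq_abs, intervalIntegral.integral_const, smul_eq_mul, mul_one] at hcs
    calc _ = |u (x + L) + u (x - L) - Disc q L * u x| ^ 2 := (sq_abs _).symm
      _ ≤ (C * ∫ s in (-L)..L, |f (x + s)|) ^ 2 := by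
          gcongr; exact H f u v hf h x
      _ = C ^ 2 * (∫ s in (-L)..L, |f (x + s)|) ^ 2 := by ring
      _ ≤ C ^ 2 * ((L - -L) * ∫ s in (-L)..L, f (x + s) ^ 2) := by gcongr
      _ = _ := by ring
  have hintg : Integrable (fun x => (u (x + L) + u (x - L) - Disc q L * u x) ^ 2) :=
    (w1.const_mul _).mono' (hcont.pow 2).aestronglyMeasurable (Filter.Eventually.of_forall fun x => by
      rw [Real.norm_of_nonneg (sq_nonneg _)]; exact hpt x)
  have hmem : MemLp (fun x => u (x + L) + u (x - L) - Disc q L * u x) 2 volume :=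
    (memLp_two_iff_integrable_sq hcont.aestronglyMeasurable).2 hintg
  refine ⟨hmem.toLp _, hmem.coeFn_toLp, ?_⟩
  refine abs_le_of_sq_le_sq' ?_ (by positivity) |>.2
  rw [norm_sq_L2, mul_pow, norm_sq_L2]
  calc ∫ x, (hmem.toLp _) x ^ 2 = ∫ x, (u (x + L) + u (x - L) - Disc q L * u x) ^ 2 := by
        refine integral_congr_ae ?_
        filter_upwards [hmem.coeFn_toLp] with x hx
        rw [hx]
    _ ≤ ∫ x, C ^ 2 * (2 * L) * ∫ s in (-L)..L, f (x + s) ^ 2 := integral_mono hintg (w1.const_mul _) hpt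
    _ = _ := by rw [integral_const_mul, w2]; ring

/-- Translation by `s` on `L²(ℝ)`. -/
def tr (s : ℝ) : L2R →L[ℝ] L2R :=
  (Lp.compMeasurePreservingₗᵢ ℝ (fun x : ℝ => x + s) (measurePreserving_add_right volume s)).toContinuousLinearMap

lemma tr_coe (s : ℝ) (f : L2R) : ∀ᵐ x, tr s f x = f (x + s) :=
  Lp.coeFn_compMeasurePreserving f (measurePreserving_add_right volume s)

lemma tr_norm (s : ℝ) (f : L2R) : ‖tr s f‖ = ‖f‖ :=
  (Lp.compMeasurePreservingₗᵢ ℝ (fun x : ℝ => x + s) (measurePreserving_add_right volume s)).norm_map f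

/-- The sum of the translations by `L` and `-L` has norm at most `2`, so `D` lies in its resolvent set. -/
lemma tr_surj {D : ℝ} (hD : 2 < |D|) (L : ℝ) (F : L2R) : ∃ g : L2R, tr L g + tr (-L) g - D • g = F := by
  have hn : ‖tr L + tr (-L)‖ ≤ 2 := by
    refine ContinuousLinearMap.opNorm_le_bound _ (by norm_num) fun f => ?_
    calc ‖tr L f + tr (-L) f‖ ≤ ‖tr L f‖ + ‖tr (-L) f‖ := norm_add_le _ _
      _ = 2 * ‖f‖ := by rw [tr_norm, tr_norm]; ring
  have h1 : ‖(1 : L2R →L[ℝ] L2R)‖ ≤ 1 := ContinuousLinearMap.norm_id_le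
  have hres := spectrum.mem_resolventSet_of_norm_lt_mul (𝕜 := ℝ) (a := tr L + tr (-L)) (k := D) (by
    calc ‖tr L + tr (-L)‖ * ‖(1 : L2R →L[ℝ] L2R)‖ ≤ 2 * 1 := by gcongr
      _ < ‖D‖ := by rw [Real.norm_eq_abs]; linarith)
  obtain ⟨b, hb⟩ := (spectrum.mem_resolventSet_iff.1 hres).exists_right_inv
  refine ⟨-(b F), ?_⟩
  have := congrArg (fun T : L2R →L[ℝ] L2R => T F) hb
  simp only [Algebra.algebraMap_eq_smul_one] at this
  have e : D • b F - (tr L (b F) + tr (-L) (b F)) = F := this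
  rw [map_neg, map_neg, smul_neg]
  refine Eq.trans ?_ e; abel

lemma li_sq_qE {V : ℝ → ℝ} (hV : LocallyIntegrable V volume) (hV2 : LocallyIntegrable (fun x => ‖V x‖ ^ 2) volume)
    (E : ℝ) : LocallyIntegrable (fun x => ‖qE V E x‖ ^ 2) volume := by
  have hc : LocallyIntegrable (fun _ : ℝ => 2 * E ^ 2) volume := continuous_const.locallyIntegrable
  have hm : LocallyIntegrable (fun x => 2 * ‖V x‖ ^ 2) volume := hV2.smul (2 : ℝ)
  refine (hm.add hc).mono ((li_qE hV E).aestronglyMeasurable.norm.pow 2) (Filter.Eventually.of_forall fun x => ?_)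
  have h0 : (0:ℝ) ≤ 2 * ‖V x‖ ^ 2 + 2 * E ^ 2 := by positivity
  simp only [Pi.add_apply]
  rw [Real.norm_of_nonneg (by positivity), Real.norm_of_nonneg h0, Real.norm_eq_abs, Real.norm_eq_abs, sq_abs, sq_abs]
  nlinarith [sq_nonneg (V x + E)]

lemma weak_lin {V : ℝ → ℝ} (hV : LocallyIntegrable V volume) (hV2 : LocallyIntegrable (fun x => ‖V x‖ ^ 2) volume)
    {E : ℝ} {g h g' h' : L2R} (H : WeakSchrodingerEq V E g h) (H' : WeakSchrodingerEq V E g' h') (k l : ℝ) :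
    WeakSchrodingerEq V E (k • g + l • g') (k • h + l • h') := by
  intro φ hs hc
  have hφ : Test φ := ⟨hs, hc⟩
  have hψ := Test.memLp (li_qE hV E) (li_sq_qE hV hV2 E) hφ
  have hcoe : ∀ f f' : L2R, ∀ᵐ x, (k • f + l • f' : L2R) x = k * f x + l * f' x := by
    intro f f'
    filter_upwards [Lp.coeFn_add (k • f) (l • f'), Lp.coeFn_smul k f, Lp.coeFn_smul l f'] with x h1 h2 h3
    rw [h1, Pi.add_apply, h2, h3]; simp
  have key : ∀ (ψ : ℝ → ℝ) (f f' : L2R), Integrable (fun x => f x * ψ x) → Integrable (fun x => f' x * ψ x) →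
      ∫ x, (k • f + l • f' : L2R) x * ψ x = k * (∫ x, f x * ψ x) + l * ∫ x, f' x * ψ x := by
    intro ψ f f' i1 i2
    rw [← integral_const_mul, ← integral_const_mul, ← integral_add (i1.const_mul _) (i2.const_mul _)]
    refine integral_congr_ae ?_
    filter_upwards [hcoe f f'] with x hx
    rw [hx]; ring
  have := H φ hs hc
  have := H' φ hs hc
  rw [key _ g g' ((Lp.memLp g).integrable_mul hψ) ((Lp.memLp g').integrable_mul hψ),
    key _ h h' (hφ.int (li_L2 h)) (hφ.int (li_L2 h')), H φ hs hc, H' φ hs hc]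

/-- Energies outside the bands are not in the spectrum. The resolvent at `f` is obtained by solving the
delay equation `g (x + L) + g (x - L) - D g x = F` in `L²`, where `F` is the left-hand side for an arbitrary
solution `u` of the differential equation with source `f`. -/
theorem not_mem_spec {V : ℝ → ℝ} (hV : LocallyIntegrable V volume)
    (hV2 : LocallyIntegrable (fun x => ‖V x‖ ^ 2) volume) {L : ℝ} (hL0 : 0 < L) (hL : ∀ x, V (x + L) = V x)
    {E : ℝ} (hD : 2 < |Disc (qE V E) L|) : E ∉ ContSpectrum V := by
  have hq := li_qE hV E
  have hq2 := li_sq_qE hV hV2 E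
  have hqL : ∀ x, qE V E (x + L) = qE V E x := fun x => by simp only [qE, hL]
  set q := qE V E with hqd
  set D := Disc q L
  obtain ⟨C, hC, HC⟩ := delay_memLp hq hL0 hqL
  have exist : ∀ f : L2R, ∃ g : L2R, WeakSchrodingerEq V E g f ∧ ‖g‖ ≤ C / (|D| - 2) * ‖f‖ := by
    intro f
    obtain ⟨u, v, hu, -, -⟩ := exists_sol hq (li_L2 f) 0 0
    obtain ⟨F, hF, hFn⟩ := HC f u v hu
    obtain ⟨g, hg⟩ := tr_surj hD L F
    refine ⟨g, fun φ hs hc => ?_, ?_⟩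
    · refine weak_of_delay hq hq2 hqL (Lp.memLp f) (Lp.memLp g) hu hD ?_ ⟨hs, hc⟩
      have e : ∀ᵐ x, F x = g (x + L) + g (x - L) - D * g x := by
        rw [← hg]
        filter_upwards [Lp.coeFn_sub (tr L g + tr (-L) g) (D • g), Lp.coeFn_add (tr L g) (tr (-L) g),
          Lp.coeFn_smul D g, tr_coe L g, tr_coe (-L) g] with x h1 h2 h3 h4 h5
        rw [h1, Pi.sub_apply, h2, Pi.add_apply, h3, Pi.smul_apply, smul_eq_mul, h4, h5, sub_eq_add_neg x L]
      filter_upwards [e, hF] with x h1 h2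
      rw [← h1, h2]
    · have h1 : D • g = tr L g + tr (-L) g - F := by rw [← hg]; abel
      have h2 : |D| * ‖g‖ ≤ 2 * ‖g‖ + ‖F‖ := by
        rw [← Real.norm_eq_abs, ← norm_smul, h1]
        calc _ ≤ ‖tr L g + tr (-L) g‖ + ‖F‖ := norm_sub_le _ _
          _ ≤ ‖tr L g‖ + ‖tr (-L) g‖ + ‖F‖ := by gcongr; exact norm_add_le _ _
          _ = _ := by rw [tr_norm, tr_norm]; ring
      rw [div_mul_eq_mul_div, le_div_iff₀ (by linarith)]
      linarith
  have uniq0 : ∀ g : L2R, WeakSchrodingerEq V E g 0 → g = 0 := by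
    intro g hg
    have hg2 : LocallyIntegrable (fun x => ‖g x‖ ^ 2) volume := by
      simpa only [Real.norm_eq_abs, sq_abs] using (int_sq_L2 g).locallyIntegrable
    obtain ⟨u, v, hu, hgu⟩ := weak_regular (li_L2 g) (li_mul_sq hq (li_L2 g) hq2 hg2) (by
      intro φ hφ
      have := hg φ hφ.sm hφ.cs
      rw [this]
      refine integral_eq_zero_of_ae ?_
      filter_upwards [Lp.coeFn_zero ℝ 2 (volume : Measure ℝ)] with x hx
      rw [hx]; simp)
    have h1 : D • g = tr L g + tr (-L) g := by
      refine Lp.ext ?_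
      filter_upwards [Lp.coeFn_add (tr L g) (tr (-L) g),
          Lp.coeFn_smul D g, tr_coe L g, tr_coe (-L) g, hgu, ae_shift hgu L, ae_shift hgu (-L)] with x h2 h3 h4 h5 h6 h7 h8
      rw [h2, Pi.add_apply, h3, Pi.smul_apply, smul_eq_mul, h4, h5, h6, h7, h8, ← sub_eq_add_neg]
      exact (cayley hq hqL hu x).1.symm
    have h2 : |D| * ‖g‖ ≤ 2 * ‖g‖ := by
      rw [← Real.norm_eq_abs, ← norm_smul, h1]
      calc _ ≤ ‖tr L g‖ + ‖tr (-L) g‖ := norm_add_le _ _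
        _ = _ := by rw [tr_norm, tr_norm]; ring
    by_contra hne
    have := norm_pos_iff.2 hne
    nlinarith
  have uniq : ∀ g g' h : L2R, WeakSchrodingerEq V E g h → WeakSchrodingerEq V E g' h → g = g' := by
    intro g g' h h1 h2
    have := weak_lin hV hV2 h1 h2 1 (-1)
    simp only [one_smul, neg_smul, add_neg_cancel] at this
    have := uniq0 _ this
    rw [← sub_eq_zero, sub_eq_add_neg]; exact this
  choose T hT hTn using exist
  let T' : L2R →ₗ[ℝ] L2R :=
    { toFun := T
      map_add' := fun f f' => by
        have := weak_lin hV hV2 (hT f) (hT f') 1 1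
        simp only [one_smul] at this
        exact uniq _ _ _ (hT _) this
      map_smul' := fun k f => by
        have := weak_lin hV hV2 (hT f) (hT f) k 0
        simp only [zero_smul, add_zero] at this
        exact uniq _ _ _ (hT _) this }
  intro hmem
  exact hmem ⟨T'.mkContinuous _ hTn, hT, fun g h hgh => uniq _ _ _ (hT h) hgh⟩

end ThinSpec

/-! ### Energies in the bands lie in the spectrum -/

namespace ThinSpec

lemma quad_bd (D s t : ℝ) : |D * s * t| ≤ |D| / 2 * (s ^ 2 + t ^ 2) := by
  rw [mul_assoc, abs_mul, abs_mul]
  nlinarith [abs_nonneg D, sq_nonneg (|s| - |t|), sq_abs s, sq_abs t,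
    mul_nonneg (abs_nonneg D) (sq_nonneg (|s| - |t|))]

/-- The quadratic form `s² - D s t + t²` is invariant under the recursion and definite for `|D| < 2`. -/
lemma rec_bounded {r w : ℕ → ℝ} {D : ℝ} (hD : |D| < 2) (hr : ∀ k, r (k + 2) + r k = D * r (k + 1))
    (hw : ∀ k, w (k + 2) + w k = D * w (k + 1)) (h0 : 0 < r 0 ^ 2 + w 0 ^ 2) :
    ∃ c M : ℝ, 0 < c ∧ ∀ k, r k ^ 2 + w k ^ 2 ≤ M ∧
      c ≤ (r k ^ 2 + w k ^ 2) + (r (k + 1) ^ 2 + w (k + 1) ^ 2) := by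
  set I : ℕ → ℝ := fun k => (r (k + 1) ^ 2 - D * r k * r (k + 1) + r k ^ 2) +
    (w (k + 1) ^ 2 - D * w k * w (k + 1) + w k ^ 2) with hI
  have inv : ∀ k, I k = I 0 := by
    intro k
    induction k with
    | zero => rfl
    | succ k ih =>
      rw [← ih]
      have h1 : r (k + 1 + 1) = D * r (k + 1) - r k := by linarith [hr k]
      have h2 : w (k + 1 + 1) = D * w (k + 1) - w k := by linarith [hw k]
      simp only [hI]
      rw [h1, h2]; ring
  have lo : ∀ k, (1 - |D| / 2) * ((r k ^ 2 + w k ^ 2) + (r (k + 1) ^ 2 + w (k + 1) ^ 2)) ≤ I k := by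
    intro k
    have h1 := (abs_le.1 (quad_bd D (r k) (r (k + 1)))).2
    have h2 := (abs_le.1 (quad_bd D (w k) (w (k + 1)))).2
    simp only [hI]
    linarith
  have hi : ∀ k, I k ≤ 2 * ((r k ^ 2 + w k ^ 2) + (r (k + 1) ^ 2 + w (k + 1) ^ 2)) := by
    intro k
    have h1 := (abs_le.1 (quad_bd D (r k) (r (k + 1)))).1
    have h2 := (abs_le.1 (quad_bd D (w k) (w (k + 1)))).1
    simp only [hI]
    nlinarith [sq_nonneg (r k), sq_nonneg (r (k+1)), sq_nonneg (w k), sq_nonneg (w (k+1))]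
  have hk : 0 < 1 - |D| / 2 := by linarith
  have hI0 : 0 < I 0 := by
    refine lt_of_lt_of_le (mul_pos hk ?_) (lo 0)
    have := sq_nonneg (r (0 + 1)); have := sq_nonneg (w (0 + 1)); linarith
  refine ⟨I 0 / 2, I 0 / (1 - |D| / 2), by linarith, fun k => ⟨?_, ?_⟩⟩
  · rw [le_div_iff₀ hk, ← inv k]
    refine le_trans ?_ (lo k)
    rw [mul_comm]
    refine mul_le_mul_of_nonneg_left ?_ hk.le
    have := sq_nonneg (r (k + 1)); have := sq_nonneg (w (k + 1)); linarith
  · have := hi k; rw [inv k] at this; linarith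

/-- At an energy in a band there is a nonzero solution whose Cauchy data at the multiples of the period
stay bounded and, over any two consecutive periods, bounded away from zero. -/
lemma exists_bounded_sol {q : ℝ → ℝ} (hq : LocallyIntegrable q volume) {L : ℝ} (hL : ∀ x, q (x + L) = q x)
    (hD : |Disc q L| ≤ 2) : ∃ u v, HSol q u v ∧ ∃ c M : ℝ, 0 < c ∧ ∀ k : ℕ,
      u (k * L) ^ 2 + v (k * L) ^ 2 ≤ M ∧
      c ≤ (u (k * L) ^ 2 + v (k * L) ^ 2) + (u ((k + 1 : ℕ) * L) ^ 2 + v ((k + 1 : ℕ) * L) ^ 2) := by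
  rcases hD.lt_or_eq with hD | hD
  · refine ⟨cc q, cd q, hc hq, ?_⟩
    have key : ∀ k : ℕ, cc q ((k + 2 : ℕ) * L) + cc q (k * L) = Disc q L * cc q ((k + 1 : ℕ) * L) ∧
        cd q ((k + 2 : ℕ) * L) + cd q (k * L) = Disc q L * cd q ((k + 1 : ℕ) * L) := by
      intro k
      have := cayley hq hL (hc hq) ((k + 1 : ℕ) * L)
      have e1 : ((k + 1 : ℕ) : ℝ) * L + L = (k + 2 : ℕ) * L := by push_cast; ring
      have e2 : ((k + 1 : ℕ) : ℝ) * L - L = k * L := by push_cast; ring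
      rwa [e1, e2] at this
    exact rec_bounded (r := fun k : ℕ => cc q (k * L)) (w := fun k : ℕ => cd q (k * L)) hD (fun k => (key k).1)
      (fun k => (key k).2) (by simp [cc0 hq, cd0 hq])
  · set μ := Disc q L / 2 with hμ
    have hμ2 : μ ^ 2 = 1 := by
      rw [hμ, div_pow, ← sq_abs, hD]; norm_num
    obtain ⟨x, y, hxy, h1, h2⟩ := exists_eig (cc q L) (ss q L) (cd q L) (sd q L) μ (by
      have := wronski hq L
      have e : cc q L + sd q L = 2 * μ := by rw [hμ]; unfold Disc; ring
      linear_combination this - μ * e - hμ2)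
    set u := fun t => x * cc q t + y * ss q t with hu
    set v := fun t => x * cd q t + y * sd q t with hv
    have hs : HSol q u v := (hc hq).lin (hs hq) hq x y
    have hs1 : HSol q (fun t => u (t + L)) (fun t => v (t + L)) := by
      have := hs.shift hq L; rwa [show (fun x => q (x + L)) = q from funext hL] at this
    have hs2 : HSol q (fun t => μ * u t) (fun t => μ * v t) := by
      simpa using hs.lin hs hq μ 0
    obtain ⟨e1, e2⟩ := HSol.unique hq hs1 hs2 0 (by
        simp only [hu, zero_add, cc0 hq, ss0 hq]; linear_combination h1)
      (by simp only [hv, zero_add, cd0 hq, sd0 hq]; linear_combination h2)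
    have step : ∀ k : ℕ, u (k * L) ^ 2 + v (k * L) ^ 2 = x ^ 2 + y ^ 2 := by
      intro k
      induction k with
      | zero => simp [hu, hv, cc0 hq, ss0 hq, cd0 hq, sd0 hq]
      | succ k ih =>
        have e : ((k + 1 : ℕ) : ℝ) * L = k * L + L := by push_cast; ring
        have a1 := congrFun e1 (k * L)
        have a2 := congrFun e2 (k * L)
        rw [e, a1, a2, mul_pow, mul_pow, hμ2, one_mul, one_mul, ih]
    have hpos : 0 < x ^ 2 + y ^ 2 := by
      rcases hxy with h | h
      · positivity
      · positivity
    exact ⟨u, v, hs, x ^ 2 + y ^ 2, x ^ 2 + y ^ 2, hpos, fun k => by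
      rw [step, step]; constructor <;> linarith⟩

/-- Smooth plateaus with transition zones of length `L` and derivatives bounded independently of the
length of the plateau. -/
lemma cutoff {L : ℝ} (hL : 0 < L) : ∃ B : ℝ, 0 ≤ B ∧ ∀ n : ℕ, ∃ χ : ℝ → ℝ, Test χ ∧
    (∀ x ∈ Icc L ((n + 1) * L), χ x = 1) ∧ (∀ x, |deriv χ x| ≤ B ∧ |deriv (deriv χ) x| ≤ B) ∧
    ∀ x, x ∉ Icc 0 L ∪ Icc ((n + 1) * L) ((n + 2) * L) → deriv χ x = 0 ∧ deriv (deriv χ) x = 0 := by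
  set σ : ℝ → ℝ := fun x => Real.smoothTransition (x / L) with hσ
  have hσs : ContDiff ℝ (⊤ : ℕ∞) σ := Real.smoothTransition.contDiff.comp (contDiff_id.div_const L)
  have s1 : ContDiff ℝ (⊤ : ℕ∞) (deriv σ) := (contDiff_infty_iff_deriv.1 hσs).2
  have s2 : ContDiff ℝ (⊤ : ℕ∞) (deriv (deriv σ)) := (contDiff_infty_iff_deriv.1 s1).2
  have d0 : Differentiable ℝ σ := (contDiff_infty_iff_deriv.1 hσs).1
  have d1 : Differentiable ℝ (deriv σ) := (contDiff_infty_iff_deriv.1 s1).1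
  have σ0 : ∀ x ≤ 0, σ x = 0 := fun x hx =>
    Real.smoothTransition.zero_of_nonpos (div_nonpos_of_nonpos_of_nonneg hx hL.le)
  have σ1 : ∀ x, L ≤ x → σ x = 1 := fun x hx => Real.smoothTransition.one_of_one_le ((one_le_div hL).2 hx)
  have z1 : ∀ x, x ∉ Icc 0 L → deriv σ x = 0 := by
    intro x hx
    rcases lt_or_ge x 0 with h | h
    · have : σ =ᶠ[nhds x] fun _ => 0 := by
        filter_upwards [Iio_mem_nhds h] with y hy using σ0 y (le_of_lt hy)
      rw [this.deriv_eq]; simp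
    · have h' : L < x := by by_contra h'; exact hx ⟨h, not_lt.1 h'⟩
      have : σ =ᶠ[nhds x] fun _ => 1 := by
        filter_upwards [Ioi_mem_nhds h'] with y hy using σ1 y (le_of_lt hy)
      rw [this.deriv_eq]; simp
  have z2 : ∀ x, x ∉ Icc 0 L → deriv (deriv σ) x = 0 := by
    intro x hx
    have : deriv σ =ᶠ[nhds x] fun _ => 0 := by
      filter_upwards [isClosed_Icc.isOpen_compl.mem_nhds hx] with y hy using z1 y hy
    rw [this.deriv_eq]; simp
  obtain ⟨B1, hB1⟩ := isCompact_Icc.exists_bound_of_continuousOn (s := Icc 0 L) s1.continuous.continuousOn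
  obtain ⟨B2, hB2⟩ := isCompact_Icc.exists_bound_of_continuousOn (s := Icc 0 L) s2.continuous.continuousOn
  have b1 : ∀ x, |deriv σ x| ≤ |B1| + |B2| := by
    intro x
    by_cases hx : x ∈ Icc 0 L
    · have := hB1 x hx; rw [Real.norm_eq_abs] at this
      linarith [le_abs_self B1, abs_nonneg B2]
    · rw [z1 x hx, abs_zero]; positivity
  have b2 : ∀ x, |deriv (deriv σ) x| ≤ |B1| + |B2| := by
    intro x
    by_cases hx : x ∈ Icc 0 L
    · have := hB2 x hx; rw [Real.norm_eq_abs] at this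
      linarith [le_abs_self B2, abs_nonneg B1]
    · rw [z2 x hx, abs_zero]; positivity
  refine ⟨2 * (|B1| + |B2|), by positivity, fun n => ?_⟩
  set t : ℝ := (n + 1) * L with ht
  have htL : L ≤ t := by rw [ht]; nlinarith [(Nat.cast_nonneg n : (0:ℝ) ≤ n)]
  have e1 : deriv (fun x => σ x - σ (x - t)) = fun x => deriv σ x - deriv σ (x - t) := by
    ext x
    have := ((d0 x).hasDerivAt.sub ((d0 (x - t)).hasDerivAt.comp_sub_const x t)).deriv
    exact this
  have e2 : deriv (fun x => deriv σ x - deriv σ (x - t)) =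
      fun x => deriv (deriv σ) x - deriv (deriv σ) (x - t) := by
    ext x
    have := ((d1 x).hasDerivAt.sub ((d1 (x - t)).hasDerivAt.comp_sub_const x t)).deriv
    exact this
  refine ⟨fun x => σ x - σ (x - t), ⟨hσs.sub (hσs.comp (contDiff_id.sub contDiff_const)), ?_⟩, ?_, ?_, ?_⟩
  · refine HasCompactSupport.of_support_subset_isCompact (isCompact_Icc (a := 0) (b := t + L)) fun x hx => ?_
    rw [Function.mem_support] at hx
    by_contra h
    apply hx
    rcases lt_or_ge x 0 with h1 | h1
    · rw [σ0 x h1.le, σ0 (x - t) (by linarith)]; simp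
    · have h' : t + L < x := by by_contra h'; exact h ⟨h1, not_lt.1 h'⟩
      rw [σ1 x (by linarith), σ1 (x - t) (by linarith)]; simp
  · intro x hx
    simp only
    rw [σ1 x hx.1, σ0 (x - t) (by linarith [hx.2])]; simp
  · intro x
    rw [e1, e2]
    constructor
    · exact (abs_sub _ _).trans (by linarith [b1 x, b1 (x - t)])
    · exact (abs_sub _ _).trans (by linarith [b2 x, b2 (x - t)])
  · intro x hx
    rw [mem_union, not_or] at hx
    have hx2 : x - t ∉ Icc 0 L := fun h => hx.2 ⟨by linarith [h.1], by linarith [h.2]⟩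
    rw [e1, e2]
    simp only
    rw [z1 x hx.1, z2 x hx.1, z1 _ hx2, z2 _ hx2]; simp

/-- Multiplying a homogeneous solution by a test function produces a source term supported where the test
function varies. -/
lemma HSol.cut {q u v χ : ℝ → ℝ} (h : HSol q u v) (hq : LocallyIntegrable q volume) (hχ : Test χ) :
    IsSol q (fun x => -(deriv (deriv χ) x * u x + 2 * (deriv χ x * v x))) (fun x => χ x * u x)
      (fun x => deriv χ x * u x + χ x * v x) := by
  have cu := h.cu
  have cv := h.cv
  have c0 := hχ.cont
  have c1 := hχ.deriv.cont
  have c2 := hχ.deriv.deriv.cont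
  have hqu : LocallyIntegrable (fun t => q t * u t) volume := LI_mul_cont hq cu
  have hv : ∀ x, v x = v 0 + ∫ t in (0:ℝ)..x, q t * u t := by simpa using h.hv
  refine ⟨by fun_prop, by fun_prop, ?_, fun x => ?_⟩
  · exact prod_rule c1.locallyIntegrable cv.locallyIntegrable hχ.ftc h.hu
  · have p1 := prod_rule c2.locallyIntegrable cv.locallyIntegrable hχ.deriv.ftc h.hu x
    have p2 := prod_rule c1.locallyIntegrable hqu hχ.ftc hv x
    rw [p1, p2]
    have i1 : IntervalIntegrable (fun t => deriv (deriv χ) t * u t + deriv χ t * v t) volume 0 x :=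
      (Continuous.intervalIntegrable (by fun_prop) _ _)
    have i2 : LocallyIntegrable (fun t => deriv χ t * v t + χ t * (q t * u t)) volume :=
      (c1.mul cv).locallyIntegrable.add (LI_cont_mul hqu c0)
    have := intervalIntegral.integral_add i1 i2.ii
    have e : ∀ t, q t * (χ t * u t) - -(deriv (deriv χ) t * u t + 2 * (deriv χ t * v t)) =
        (deriv (deriv χ) t * u t + deriv χ t * v t) + (deriv χ t * v t + χ t * (q t * u t)) := fun t => by ring
    simp only [e]
    rw [this]; ring

lemma ae_coe_weak {V : ℝ → ℝ} {E : ℝ} {g h : ℝ → ℝ} (hg : MemLp g 2 volume) (hh : MemLp h 2 volume)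
    (H : ∀ φ, Test φ → ∫ x, g x * (-(deriv (deriv φ) x) + qE V E x * φ x) = ∫ x, h x * φ x) :
    WeakSchrodingerEq V E (hg.toLp g) (hh.toLp h) := by
  intro φ hs hc
  have e1 : ∫ x, hg.toLp g x * (-(deriv (deriv φ) x) + (V x - E) * φ x) =
      ∫ x, g x * (-(deriv (deriv φ) x) + qE V E x * φ x) := by
    refine integral_congr_ae ?_
    filter_upwards [hg.coeFn_toLp] with x hx
    rw [hx]
  have e2 : ∫ x, hh.toLp h x * φ x = ∫ x, h x * φ x := by
    refine integral_congr_ae ?_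
    filter_upwards [hh.coeFn_toLp] with x hx
    rw [hx]
  rw [e1, e2]
  exact H φ ⟨hs, hc⟩

/-- If the discriminant at `E` lies in `[-2, 2]` then `E` belongs to the spectrum: cutting off a bounded
solution gives a Weyl sequence. -/
theorem mem_spec {V : ℝ → ℝ} (hV : LocallyIntegrable V volume)
    (hV2 : LocallyIntegrable (fun x => ‖V x‖ ^ 2) volume) {L : ℝ} (hL0 : 0 < L) (hL : ∀ x, V (x + L) = V x)
    {E : ℝ} (hD : |Disc (qE V E) L| ≤ 2) : E ∈ ContSpectrum V := by
  show ¬ _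
  rintro ⟨T, -, hT⟩
  have hq := li_qE hV E
  have hq2 := li_sq_qE hV hV2 E
  have hqL : ∀ x, qE V E (x + L) = qE V E x := fun x => by simp only [qE, hL]
  set q := qE V E with hqd
  obtain ⟨u, v, hs, c, M, hc0, hk⟩ := exists_bounded_sol hq hqL hD
  obtain ⟨κ, hκ, Hκ⟩ := kappa ℝ hL0 (∫ t in (0:ℝ)..L, ‖q t‖ ^ 2)
  obtain ⟨B, hB, hχ⟩ := cutoff hL0
  have qper : ∀ k : ℕ, ∀ x, q (x + k * L) = q x := by
    intro k
    induction k with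
    | zero => simp
    | succ k ih => intro x; rw [← ih x, ← hqL (x + k * L)]; congr 1; push_cast; ring
  have cell : ∀ k : ℕ, κ * (u (k * L) ^ 2 + v (k * L) ^ 2) ≤ ∫ t in (k * L)..((k + 1 : ℕ) * L), u t ^ 2 := by
    intro k
    have e : ∫ t in (k * L)..(k * L + L), ‖q t‖ ^ 2 = ∫ t in (0:ℝ)..L, ‖q t‖ ^ 2 := by
      have hp : Function.Periodic (fun t => ‖q t‖ ^ 2) L := fun t => by simp only [hqL]
      have := hp.intervalIntegral_add_eq (k * L) 0
      rwa [zero_add] at this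
    have := Hκ q u v hq hq2 hs (k * L) e.le
    have e2 : ((k + 1 : ℕ) : ℝ) * L = k * L + L := by push_cast; ring
    rw [e2]
    simpa only [Real.norm_eq_abs, sq_abs] using this
  have cu := hs.cu
  have cv := hs.cv
  have low : ∀ m : ℕ, κ * c * m ≤ ∫ t in ((1 : ℕ) * L)..((2 * m + 1 : ℕ) * L), u t ^ 2 := by
    intro m
    induction m with
    | zero => simp
    | succ m ih =>
      have ii : ∀ x y, IntervalIntegrable (fun t => u t ^ 2) volume x y := fun x y =>
        Continuous.intervalIntegrable (by fun_prop) _ _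
      rw [show 2 * (m + 1) + 1 = 2 * m + 1 + 1 + 1 by ring,
        ← intervalIntegral.integral_add_adjacent_intervals (ii _ ((2 * m + 1 + 1 : ℕ) * L)) (ii _ _),
        ← intervalIntegral.integral_add_adjacent_intervals (ii _ ((2 * m + 1 : ℕ) * L)) (ii _ _)]
      have h1 := cell (2 * m + 1)
      have h2 := cell (2 * m + 1 + 1)
      have h3 := mul_le_mul_of_nonneg_left (hk (2 * m + 1)).2 hκ.le
      push_cast at *
      linarith
  -- Uniform bound for the solution on the right half line
  have hbd : ∃ W : ℝ, 0 ≤ W ∧ ∀ k : ℕ, ∀ x ∈ Icc (k * L) ((k + 1) * L), |u x| ≤ W ∧ |v x| ≤ W := by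
    have bc : ∀ w : ℝ → ℝ, Continuous w → ∃ C, 0 ≤ C ∧ ∀ x ∈ Icc 0 L, |w x| ≤ C := by
      intro w hw
      obtain ⟨C, hC⟩ := isCompact_Icc.exists_bound_of_continuousOn (s := Icc 0 L) hw.continuousOn
      exact ⟨|C|, abs_nonneg _, fun x hx => (hC x hx).trans (le_abs_self C)⟩
    obtain ⟨C1, p1, h1⟩ := bc _ (hc hq).cu
    obtain ⟨C2, p2, h2⟩ := bc _ (ThinSpec.hs hq).cu
    obtain ⟨C3, p3, h3⟩ := bc _ (hc hq).cv
    obtain ⟨C4, p4, h4⟩ := bc _ (ThinSpec.hs hq).cv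
    have m0 : 0 ≤ √M := Real.sqrt_nonneg _
    refine ⟨√M * (C1 + C2 + C3 + C4), by positivity, fun k x hx => ?_⟩
    have hy : x - k * L ∈ Icc 0 L := ⟨by linarith [hx.1], by linarith [hx.2]⟩
    have tr := hs.transfer hq (k * L) (x - k * L)
    rw [show (fun y => q (y + k * L)) = q from funext (qper k), sub_add_cancel] at tr
    have hu : |u (k * L)| ≤ √M := Real.abs_le_sqrt (by linarith [(hk k).1, sq_nonneg (v (k * L))])
    have hv : |v (k * L)| ≤ √M := Real.abs_le_sqrt (by linarith [(hk k).1, sq_nonneg (u (k * L))])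
    rw [tr.1, tr.2]
    constructor
    · calc _ ≤ |u (k * L)| * |cc q (x - k * L)| + |v (k * L)| * |ss q (x - k * L)| := by
            rw [← abs_mul, ← abs_mul]; exact abs_add_le _ _
        _ ≤ √M * C1 + √M * C2 := by gcongr; exact h1 _ hy; exact h2 _ hy
        _ ≤ _ := by nlinarith [mul_nonneg m0 p3, mul_nonneg m0 p4]
    · calc _ ≤ |u (k * L)| * |cd q (x - k * L)| + |v (k * L)| * |sd q (x - k * L)| := by
            rw [← abs_mul, ← abs_mul]; exact abs_add_le _ _
        _ ≤ √M * C3 + √M * C4 := by gcongr; exact h3 _ hy; exact h4 _ hy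
        _ ≤ _ := by nlinarith [mul_nonneg m0 p1, mul_nonneg m0 p2]
  obtain ⟨W, hW, hbd⟩ := hbd
  have main : ∀ m : ℕ, κ * c * m ≤ ‖T‖ ^ 2 * ((3 * B * W) ^ 2 * (2 * L)) := by
    intro m
    obtain ⟨χ, tχ, c1, c2, c3⟩ := hχ (2 * m)
    have cut := hs.cut hq tχ
    have c0 := tχ.cont
    have c01 := tχ.deriv.cont
    have c02 := tχ.deriv.deriv.cont
    set h : ℝ → ℝ := fun x => -(deriv (deriv χ) x * u x + 2 * (deriv χ x * v x)) with hh
    have ch : Continuous h := by fun_prop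
    have cg : Continuous (fun x => χ x * u x) := by fun_prop
    have mg : MemLp (fun x => χ x * u x) 2 volume := cg.memLp_of_hasCompactSupport tχ.cs.mul_right
    have sh : HasCompactSupport h :=
      (HasCompactSupport.add tχ.deriv.deriv.cs.mul_right tχ.deriv.cs.mul_right.mul_left).neg
    have mh : MemLp h 2 volume := ch.memLp_of_hasCompactSupport sh
    have hTg := hT _ _ (ae_coe_weak (V := V) (E := E) mg mh fun φ hφ => sol_weak cut hq ch.locallyIntegrable hφ)
    have n1 := T.le_opNorm (mh.toLp h)
    rw [hTg] at n1
    have n2 : ‖mg.toLp _‖ ^ 2 ≤ ‖T‖ ^ 2 * ‖mh.toLp h‖ ^ 2 := by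
      rw [← mul_pow]; gcongr
    have g2 : ‖mg.toLp _‖ ^ 2 = ∫ x, (χ x * u x) ^ 2 := by
      rw [norm_sq_L2]
      refine integral_congr_ae ?_
      filter_upwards [mg.coeFn_toLp] with x hx
      rw [hx]
    have h2 : ‖mh.toLp _‖ ^ 2 = ∫ x, h x ^ 2 := by
      rw [norm_sq_L2]
      refine integral_congr_ae ?_
      filter_upwards [mh.coeFn_toLp] with x hx
      rw [hx]
    rw [g2, h2] at n2
    have hle : ((1 : ℕ) : ℝ) * L ≤ (2 * m + 1 : ℕ) * L := by gcongr; omega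
    have lowg : ∫ t in ((1 : ℕ) * L)..((2 * m + 1 : ℕ) * L), u t ^ 2 ≤ ∫ x, (χ x * u x) ^ 2 := by
      have e : ∫ t in ((1 : ℕ) * L)..((2 * m + 1 : ℕ) * L), u t ^ 2 =
          ∫ t in ((1 : ℕ) * L)..((2 * m + 1 : ℕ) * L), (χ t * u t) ^ 2 := by
        refine intervalIntegral.integral_congr fun t ht => ?_
        rw [uIcc_of_le hle] at ht
        rw [c1 t ⟨by simpa using ht.1, by simpa using ht.2⟩, one_mul]
      rw [e, intervalIntegral.integral_of_le hle]
      exact setIntegral_le_integral mg.integrable_sq (Filter.Eventually.of_forall fun x => sq_nonneg _)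
    set A : Set ℝ := Icc 0 L ∪ Icc (((2 * m : ℕ) + 1) * L) (((2 * m : ℕ) + 2) * L) with hA
    have mA : MeasurableSet A := measurableSet_Icc.union measurableSet_Icc
    have vA : volume A ≤ ENNReal.ofReal (2 * L) := by
      refine (measure_union_le _ _).trans ?_
      rw [Real.volume_Icc, Real.volume_Icc, ← ENNReal.ofReal_add (by linarith) (by linarith)]
      exact ENNReal.ofReal_le_ofReal (by linarith)
    have vA' : volume.real A ≤ 2 * L := ENNReal.toReal_le_of_le_ofReal (by linarith) vA
    have bdA : ∀ x ∈ A, |u x| ≤ W ∧ |v x| ≤ W := by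
      rintro x (hx | hx)
      · exact hbd 0 x (by simpa using hx)
      · exact hbd (2 * m + 1) x ⟨by push_cast at *; linarith [hx.1], by push_cast at *; linarith [hx.2]⟩
    have uph : ∫ x, h x ^ 2 ≤ (3 * B * W) ^ 2 * (2 * L) := by
      have e : ∫ x, h x ^ 2 = ∫ x in A, h x ^ 2 := by
        refine (setIntegral_eq_integral_of_forall_compl_eq_zero fun x hx => ?_).symm
        simp only [hh, (c3 x hx).1, (c3 x hx).2]; ring
      rw [e]
      calc ∫ x in A, h x ^ 2 ≤ ∫ x in A, (3 * B * W) ^ 2 := by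
            refine setIntegral_mono_on mh.integrable_sq.integrableOn
              (integrableOn_const (ne_top_of_le_ne_top ENNReal.ofReal_ne_top vA)) mA fun x hx => ?_
            refine sq_le_sq' ?_ ?_ <;>
            · have k1 : |deriv (deriv χ) x * u x| ≤ B * W := by
                rw [abs_mul]; gcongr; exact (c2 x).2; exact (bdA x hx).1
              have k2 : |deriv χ x * v x| ≤ B * W := by
                rw [abs_mul]; gcongr; exact (c2 x).1; exact (bdA x hx).2
              simp only [hh]
              have := abs_le.1 k1
              have := abs_le.1 k2
              linarith
        _ ≤ _ := by
          rw [setIntegral_const, smul_eq_mul, mul_comm]; gcongr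
    calc _ ≤ _ := low m
      _ ≤ _ := lowg
      _ ≤ _ := n2
      _ ≤ _ := by gcongr
  obtain ⟨m, hm⟩ := exists_nat_gt ((‖T‖ ^ 2 * ((3 * B * W) ^ 2 * (2 * L))) / (κ * c))
  rw [div_lt_iff₀ (mul_pos hκ hc0)] at hm
  linarith [main m]

end ThinSpec

/-! ### Potentials built from pieces -/

namespace ThinSpec

lemma aggC_shift {a : ℝ} (ha : 0 < a) (y : ℤ → L2I a) (t : ℝ) (k : ℤ) :
    aggC a y (t + k * a) = aggC a (fun j => y (j + k)) t := by
  unfold aggC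
  have e : ⌊(t + k * a) / a⌋ = ⌊t / a⌋ + k := by
    rw [add_div, mul_div_assoc, div_self ha.ne', mul_one, Int.floor_add_intCast]
  rw [e]
  congr 1
  push_cast; ring

lemma aggC_cell {a : ℝ} (ha : 0 < a) (y : ℤ → L2I a) {t : ℝ} {j : ℤ} (ht : t ∈ Ico (j * a) ((j + 1) * a)) :
    aggC a y t = y j (t - j * a) := by
  unfold aggC
  have e : ⌊t / a⌋ = j := by
    rw [Int.floor_eq_iff, le_div_iff₀ ha, div_lt_iff₀ ha]; exact ht
  rw [e]

lemma aggC_measurable (a : ℝ) (y : ℤ → L2I a) : Measurable (aggC a y) := by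
  have h : Measurable (fun z : ℤ × ℝ => (y z.1 : ℝ → ℝ) z.2) :=
    measurable_from_prod_countable_right fun j => (Lp.stronglyMeasurable (y j)).measurable
  have h2 : Measurable (fun t : ℝ => ⌊t / a⌋) := Int.measurable_floor.comp (measurable_id.div_const a)
  have h3 : Measurable (fun t : ℝ => ((⌊t / a⌋ : ℤ) : ℝ)) := measurable_from_top.comp h2
  exact h.comp (h2.prodMk (measurable_id.sub (h3.mul_const a)))

lemma aggC_sq_cell {a : ℝ} (ha : 0 < a) (y : ℤ → L2I a) (j : ℤ) :
    IntegrableOn (fun t => aggC a y t ^ 2) (Ico (j * a) ((j + 1) * a)) ∧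
      ∫ t in Ico (j * a) ((j + 1) * a), aggC a y t ^ 2 = ‖y j‖ ^ 2 := by
  have hmp := (measurePreserving_sub_right (volume : Measure ℝ) (j * a)).restrict_preimage
    (measurableSet_Ico (a := (0:ℝ)) (b := a))
  have hpre : (fun x : ℝ => x - j * a) ⁻¹' Ico 0 a = Ico (j * a) ((j + 1) * a) := by
    ext t; simp only [mem_preimage, mem_Ico]
    constructor <;> rintro ⟨h1, h2⟩ <;> constructor <;> linarith
  rw [hpre] at hmp
  have hemb : MeasurableEmbedding (fun x : ℝ => x - j * a) := measurableEmbedding_subRight _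
  have i1 : IntegrableOn (fun t => (y j (t - j * a)) ^ 2) (Ico (j * a) ((j + 1) * a)) :=
    (hmp.integrable_comp_emb hemb).2 (int_sq_L2 (y j))
  have i2 := hmp.integral_comp hemb (fun t => (y j t) ^ 2)
  have hcongr : ∀ t ∈ Ico (j * a) ((j + 1) * a), (y j (t - j * a)) ^ 2 = aggC a y t ^ 2 := fun t ht => by
    rw [aggC_cell ha y ht]
  refine ⟨i1.congr_fun hcongr measurableSet_Ico, ?_⟩
  rw [← setIntegral_congr_fun measurableSet_Ico hcongr, i2, norm_sq_L2]

lemma aggC_sq_li {a : ℝ} (ha : 0 < a) (y : ℤ → L2I a) : LocallyIntegrable (fun t => aggC a y t ^ 2) volume := by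
  intro t
  set j := ⌊t / a⌋ with hj
  have h1 : (j : ℝ) * a ≤ t := by rw [← le_div_iff₀ ha]; exact Int.floor_le _
  have h2 : t < (j + 1) * a := by rw [← div_lt_iff₀ ha]; exact Int.lt_floor_add_one _
  refine ⟨Ioo ((j - 1 : ℤ) * a) ((j + 1) * a), Ioo_mem_nhds ?_ h2, ?_⟩
  · push_cast; linarith
  · refine ((aggC_sq_cell ha y (j - 1)).1.union (aggC_sq_cell ha y j).1).mono_set fun s hs => ?_
    rcases lt_or_ge s (j * a) with h | h
    · left; exact ⟨hs.1.le, by push_cast; linarith⟩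
    · right; exact ⟨h, hs.2⟩

lemma aggC_li {a : ℝ} (ha : 0 < a) (y : ℤ → L2I a) : LocallyIntegrable (aggC a y) volume := by
  have h1 : LocallyIntegrable (fun _ : ℝ => (1 : ℝ)) volume := continuous_const.locallyIntegrable
  refine ((aggC_sq_li ha y).add h1).mono (aggC_measurable a y).aestronglyMeasurable
    (Filter.Eventually.of_forall fun t => ?_)
  have h0 : 0 ≤ aggC a y t ^ 2 + 1 := by positivity
  simp only [Pi.add_apply]
  rw [Real.norm_of_nonneg h0, Real.norm_eq_abs, abs_le]
  constructor <;> nlinarith [sq_nonneg (aggC a y t - 1), sq_nonneg (aggC a y t + 1)]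

lemma aggC_int_sq {a : ℝ} (ha : 0 < a) (y : ℤ → L2I a) (j : ℤ) :
    ∫ t in (j * a)..(j * a + a), aggC a y t ^ 2 = ‖y j‖ ^ 2 := by
  rw [intervalIntegral.integral_of_le (by linarith), integral_Ioc_eq_integral_Ioo, ← integral_Ico_eq_integral_Ioo,
    ← (aggC_sq_cell ha y j).2]
  congr 3; ring

/-- The potential of the operator with coupling `lam` and pieces `y`. -/
abbrev pot (a : ℝ) (lam : ℝ) (y : ℤ → L2I a) : ℝ → ℝ := fun t => lam * aggC a y t

lemma pot_li {a : ℝ} (ha : 0 < a) (lam : ℝ) (y : ℤ → L2I a) : LocallyIntegrable (pot a lam y) volume :=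
  (aggC_li ha y).smul lam

lemma pot_sq_li {a : ℝ} (ha : 0 < a) (lam : ℝ) (y : ℤ → L2I a) :
    LocallyIntegrable (fun t => ‖pot a lam y t‖ ^ 2) volume := by
  have := (aggC_sq_li ha y).smul (lam ^ 2)
  refine this.congr (Filter.Eventually.of_forall fun t => ?_)
  simp only [pot, Pi.smul_apply, smul_eq_mul, Real.norm_eq_abs, sq_abs]; ring

lemma pot_per {a : ℝ} (ha : 0 < a) (lam : ℝ) {y : ℤ → L2I a} {l : ℕ} (hy : ∀ j : ℤ, y (j + l) = y j) (t : ℝ) :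
    pot a lam y (t + l * a) = pot a lam y t := by
  have := aggC_shift ha y t l
  simp only [hy] at this
  simp only [pot]
  rw [← this]; simp

lemma pot_int_sq {a : ℝ} (ha : 0 < a) {lam Λ R : ℝ} (hl : |lam| ≤ Λ) {y : ℤ → L2I a} (hy : ∀ j, ‖y j‖ ≤ R)
    (j : ℤ) : ∫ t in (j * a)..(j * a + a), ‖pot a lam y t‖ ^ 2 ≤ Λ ^ 2 * R ^ 2 := by
  have e : ∀ t, ‖pot a lam y t‖ ^ 2 = lam ^ 2 * aggC a y t ^ 2 := fun t => by
    simp only [pot, Real.norm_eq_abs, sq_abs]; ring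
  simp only [e]
  rw [intervalIntegral.integral_const_mul, aggC_int_sq ha, ← sq_abs lam]
  have := hy j
  gcongr

lemma pot_int_qE {a : ℝ} (ha : 0 < a) {lam Λ R : ℝ} (hl : |lam| ≤ Λ) {y : ℤ → L2I a} (hy : ∀ j, ‖y j‖ ≤ R)
    {E R' : ℝ} (hE : |E| ≤ R') (j : ℤ) :
    ∫ t in (j * a)..(j * a + a), ‖qE (pot a lam y) E t‖ ^ 2 ≤ 2 * (Λ ^ 2 * R ^ 2) + 2 * R' ^ 2 * a := by
  have h := pot_int_sq ha hl hy j
  have i1 := (pot_sq_li ha lam y).ii (a := j * a) (b := j * a + a)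
  have hle : ∫ t in (j * a)..(j * a + a), ‖qE (pot a lam y) E t‖ ^ 2 ≤
      ∫ t in (j * a)..(j * a + a), (2 * ‖pot a lam y t‖ ^ 2 + 2 * R' ^ 2) := by
    refine intervalIntegral.integral_mono_on (by linarith) (li_sq_qE (pot_li ha lam y) (pot_sq_li ha lam y) E).ii
      ((i1.const_mul 2).add (by simp)) fun t _ => ?_
    have h1 : E ^ 2 ≤ R' ^ 2 := by rw [← sq_abs E]; gcongr
    simp only [qE, Real.norm_eq_abs, sq_abs]
    nlinarith [sq_nonneg (pot a lam y t + E)]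
  refine hle.trans ?_
  rw [intervalIntegral.integral_add (i1.const_mul 2) (by simp), intervalIntegral.integral_const_mul,
    intervalIntegral.integral_const, smul_eq_mul]
  nlinarith

lemma pot_int_abs {a : ℝ} (ha : 0 < a) {lam Λ R : ℝ} (hl : |lam| ≤ Λ) {y : ℤ → L2I a} (hy : ∀ j, ‖y j‖ ≤ R)
    (n : ℕ) : ∫ t in (0:ℝ)..(n * a), ‖pot a lam y t‖ ≤ n * (Λ ^ 2 * R ^ 2 + a) := by
  have li := (pot_li ha lam y).nrm
  induction n with
  | zero => simp
  | succ n ih =>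
    have e : ((n + 1 : ℕ) : ℝ) * a = n * a + a := by push_cast; ring
    rw [e, ← intervalIntegral.integral_add_adjacent_intervals (b := n * a) li.ii li.ii]
    have h := pot_int_sq ha hl hy (n : ℤ)
    rw [Int.cast_natCast] at h
    have i1 := (pot_sq_li ha lam y).ii (a := n * a) (b := n * a + a)
    have hle : ∫ t in (n * a)..(n * a + a), ‖pot a lam y t‖ ≤
        ∫ t in (n * a)..(n * a + a), (‖pot a lam y t‖ ^ 2 + 1) := by
      refine intervalIntegral.integral_mono_on (by linarith) li.ii (i1.add (by simp)) fun t _ => ?_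
      nlinarith [sq_nonneg (‖pot a lam y t‖ - 1), norm_nonneg (pot a lam y t)]
    rw [intervalIntegral.integral_add i1 (by simp), intervalIntegral.integral_const, smul_eq_mul] at hle
    push_cast
    linarith

/-- The potential built from the pieces `lam • y j` is the multiple `lam` of the one built from `y`, up to a
null set. -/
lemma aggC_smul {a : ℝ} (ha : 0 < a) (lam : ℝ) (y : ℤ → L2I a) :
    ∀ᵐ t, aggC a (fun j => lam • y j) t = pot a lam y t := by
  have h : ∀ j : ℤ, ∀ᵐ t, t ∈ Ico (j * a) ((j + 1) * a) →
      aggC a (fun j => lam • y j) t = pot a lam y t := by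
    intro j
    have h1 := (ae_restrict_iff' measurableSet_Ico).1 (Lp.coeFn_smul lam (y j))
    have h2 := ae_shift h1 (-(j * a))
    filter_upwards [h2] with t ht hj
    rw [aggC_cell ha _ hj]
    simp only [pot]
    rw [aggC_cell ha _ hj, sub_eq_add_neg]
    exact ht ⟨by linarith [hj.1], by linarith [hj.2]⟩
  filter_upwards [ae_all_iff.2 h] with t ht
  refine ht ⌊t / a⌋ ⟨?_, ?_⟩
  · rw [← le_div_iff₀ ha]; exact Int.floor_le _
  · rw [← div_lt_iff₀ ha]; exact Int.lt_floor_add_one _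

/-- The discriminant depends continuously on coupling and energy. -/
lemma disc_continuous {a : ℝ} (ha : 0 < a) (y : ℤ → L2I a) {L : ℝ} (hL : 0 ≤ L) :
    Continuous (fun s : ℝ × ℝ => Disc (qE (pot a s.1 y) s.2) L) := by
  rw [continuous_iff_continuousAt]
  rintro ⟨lam, E⟩
  set q := qE (pot a lam y) E with hq
  have hqi : LocallyIntegrable q volume := li_qE (pot_li ha lam y) E
  obtain ⟨K, hK, H⟩ := disc_lip hqi L ((∫ t in (0:ℝ)..L, ‖q t‖) + 1) hL
  set I := ∫ t in (0:ℝ)..L, ‖aggC a y t‖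
  set G : ℝ × ℝ → ℝ := fun s => |s.1 - lam| * I + |s.2 - E| * L with hG
  have cG : Continuous G := by fun_prop
  have G0 : G (lam, E) = 0 := by simp [hG]
  have diff : ∀ s : ℝ × ℝ, ∫ t in (0:ℝ)..L, ‖qE (pot a s.1 y) s.2 t - q t‖ ≤ G s := by
    intro s
    have e : G s = ∫ t in (0:ℝ)..L, (|s.1 - lam| * ‖aggC a y t‖ + |s.2 - E|) := by
      rw [intervalIntegral.integral_add ((aggC_li ha y).nrm.ii.const_mul _) (by simp),
        intervalIntegral.integral_const_mul, intervalIntegral.integral_const, smul_eq_mul]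
      simp only [hG]; ring
    rw [e]
    refine intervalIntegral.integral_mono_on hL ((li_qE (pot_li ha s.1 y) s.2).sub hqi).nrm.ii
      (((aggC_li ha y).nrm.ii.const_mul _).add (by simp)) fun t _ => ?_
    have : qE (pot a s.1 y) s.2 t - q t = (s.1 - lam) * aggC a y t - (s.2 - E) := by
      simp only [hq, qE, pot]; ring
    rw [this]
    refine (norm_sub_le _ _).trans ?_
    rw [norm_mul]
    rfl
  have ev : ∀ᶠ s in nhds (lam, E), G s < 1 :=
    cG.continuousAt.eventually (Iio_mem_nhds (by rw [G0]; norm_num))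
  rw [ContinuousAt, tendsto_iff_norm_sub_tendsto_zero]
  refine squeeze_zero' (Filter.Eventually.of_forall fun _ => norm_nonneg _) (g := fun s => K * G s) ?_ ?_
  · filter_upwards [ev] with s hs
    have hqs := li_qE (pot_li ha s.1 y) s.2
    refine (H _ hqs ?_).trans (mul_le_mul_of_nonneg_left (diff s) hK)
    have : ∫ t in (0:ℝ)..L, ‖qE (pot a s.1 y) s.2 t‖ ≤
        ∫ t in (0:ℝ)..L, (‖q t‖ + ‖qE (pot a s.1 y) s.2 t - q t‖) := by
      refine intervalIntegral.integral_mono_on hL hqs.nrm.ii (hqi.nrm.ii.add (hqs.sub hqi).nrm.ii) fun t _ => ?_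
      have := norm_add_le (q t) (qE (pot a s.1 y) s.2 t - q t)
      rwa [add_sub_cancel] at this
    have hdi : IntervalIntegrable (fun t => ‖qE (pot a s.1 y) s.2 t - q t‖) volume 0 L :=
      (hqs.sub hqi).nrm.ii
    rw [intervalIntegral.integral_add hqi.nrm.ii hdi] at this
    have := diff s
    linarith
  · have : Filter.Tendsto (fun s => K * G s) (nhds (lam, E)) (nhds (K * G (lam, E))) :=
      (continuous_const.mul cG).continuousAt
    rwa [G0, mul_zero] at this

lemma perExt_spec {α : Type*} [Zero α] {m : ℕ} (hm : 0 < m) (w : Fin m → α) :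
    (∀ j : ℤ, perExt w (j + m) = perExt w j) ∧ ∀ j : ℤ, ∃ i, perExt w j = w i := by
  constructor
  · intro j; simp [perExt, hm]
  · intro j; simp only [perExt, hm, dif_pos]; exact ⟨_, rfl⟩

lemma per_emod {α : Type*} {x : ℤ → α} {p : ℕ} (h : ∀ j : ℤ, x (j + p) = x j) (j k : ℤ) :
    x (j + k * p) = x j := by
  have hp : Function.Periodic x (p : ℤ) := h
  exact hp.int_mul k j

/-- A sequence of period `p` is the periodic extension of its first `p` entries. -/
lemma perExt_word {α : Type*} [Zero α] {x : ℤ → α} {p : ℕ} (hp : 0 < p) (h : ∀ j : ℤ, x (j + p) = x j) :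
    perExt (fun i : Fin p => x i) = x := by
  ext j
  simp only [perExt, hp, dif_pos]
  have h1 : 0 ≤ j % (p : ℤ) := Int.emod_nonneg j (by exact_mod_cast hp.ne')
  rw [Int.toNat_of_nonneg h1]
  have := per_emod h (j % (p : ℤ)) (j / p)
  rwa [mul_comm, Int.emod_add_mul_ediv, eq_comm] at this

end ThinSpec

/-! ### Gap-rich approximants and the block construction -/

namespace ThinSpec

/-- `z` is a sequence in `Y` of period `l` which is uniformly `ε`-close to `x`. -/
structure Approx {a : ℝ} (Y : Set (L2I a)) (x : ℤ → L2I a) (ε : ℝ) (l : ℕ) (z : ℤ → L2I a) : Prop where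
  pos : 0 < l
  mem : ∀ j, z j ∈ Y
  per : ∀ j : ℤ, z (j + l) = z j
  close : ∀ j, ‖x j - z j‖ < ε

/-- Gap-richness yields an approximant whose spectrum omits `E`, and by `mem_spec` its discriminant at `E`
then lies outside `[-2, 2]`. -/
lemma local_gap {a : ℝ} (ha : 0 < a) {S : Set ℝ} {Y : Set (L2I a)} {lam : ℝ} (hlam : lam ≠ 0)
    (hGR : GapRichC a ((fun φ => lam • φ) '' Y) S) {x : ℤ → L2I a} (hxY : ∀ j, x j ∈ Y) {p : ℕ} (hp : 0 < p)
    (hper : ∀ j : ℤ, x (j + (p : ℤ)) = x j) {ε : ℝ} (hε : 0 < ε) {E : ℝ} (hE : E ∉ S) :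
    ∃ l z, Approx Y x ε l z ∧ 2 < |Disc (qE (pot a lam z) E) (l * a)| := by
  obtain ⟨l, hl, w, hw, hd, hEw⟩ := hGR.2 E hE p hp (fun i => lam • x i) (fun i => ⟨_, hxY _, rfl⟩)
    (|lam| * ε) (by positivity)
  obtain ⟨wper, wval⟩ := perExt_spec hl w
  have hx : perExt (fun i : Fin p => lam • x i) = fun j => lam • x j :=
    perExt_word (x := fun j => lam • x j) hp fun j => by simp only [hper]
  rw [hx] at hd
  set z : ℤ → L2I a := fun j => lam⁻¹ • perExt w j with hz
  have zw : perExt w = fun j => lam • z j := by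
    ext1 j; simp only [hz]; rw [smul_inv_smul₀ hlam]
  refine ⟨l, z, ⟨hl, fun j => ?_, fun j => by simp only [hz, wper], fun j => ?_⟩, ?_⟩
  · obtain ⟨i, hi⟩ := wval j
    obtain ⟨φ, hφ, hφi⟩ := hw i
    simp only at hφi
    simp only [hz]
    rw [hi, ← hφi, inv_smul_smul₀ hlam]; exact hφ
  · have := hd j
    rw [zw, dist_eq_norm, ← smul_sub, norm_smul, Real.norm_eq_abs] at this
    exact lt_of_mul_lt_mul_left this (abs_nonneg _)
  · have hla : 0 < (l : ℝ) * a := by have : (0:ℝ) < l := by exact_mod_cast hl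
                                     positivity
    have e1 : aggC a (perExt w) = pot a 1 (perExt w) := by ext t; simp [pot]
    rw [e1] at hEw
    by_contra hD
    refine hEw (mem_spec (pot_li ha 1 _) (pot_sq_li ha 1 _) hla (pot_per ha 1 wper) ?_)
    have : Disc (qE (pot a 1 (perExt w)) E) (l * a) = Disc (qE (pot a lam z) E) (l * a) := by
      refine disc_congr (li_qE (pot_li ha _ _) E) (li_qE (pot_li ha _ _) E) hla.le ?_
      filter_upwards [aggC_smul ha lam z] with t ht _
      rw [← e1, zw]
      simp only [qE, ht]
    rw [this]; exact not_lt.1 hD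

/-- By continuity of the discriminant in coupling and energy, finitely many approximants have a discriminant
uniformly outside `[-2, 2]` somewhere at each point of the compact set `C`. -/
lemma cover {a : ℝ} (ha : 0 < a) {Y : Set (L2I a)} {x : ℤ → L2I a} {ε : ℝ} {C : Set (ℝ × ℝ)} (hC : IsCompact C)
    (h : ∀ s ∈ C, ∃ l z, Approx Y x ε l z ∧ 2 < |Disc (qE (pot a s.1 z) s.2) (l * a)|) :
    ∃ F : List (ℕ × (ℤ → L2I a)), ∃ δ : ℝ, 0 < δ ∧ (∀ d ∈ F, Approx Y x ε d.1 d.2) ∧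
      ∀ s ∈ C, ∃ d ∈ F, 2 * (1 + δ) ≤ |Disc (qE (pot a s.1 d.2) s.2) (d.1 * a)| := by
  refine hC.induction_on (p := fun C => ∃ F : List (ℕ × (ℤ → L2I a)), ∃ δ : ℝ, 0 < δ ∧
      (∀ d ∈ F, Approx Y x ε d.1 d.2) ∧
      ∀ s ∈ C, ∃ d ∈ F, 2 * (1 + δ) ≤ |Disc (qE (pot a s.1 d.2) s.2) (d.1 * a)|) ?_ ?_ ?_ ?_
  · exact ⟨[], 1, one_pos, by simp, by simp⟩
  · rintro s t hst ⟨F, δ, hδ, h1, h2⟩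
    exact ⟨F, δ, hδ, h1, fun r hr => h2 r (hst hr)⟩
  · rintro s t ⟨F, δ, hδ, h1, h2⟩ ⟨F', δ', hδ', h1', h2'⟩
    refine ⟨F ++ F', min δ δ', lt_min hδ hδ', fun d hd => ?_, fun r hr => ?_⟩
    · rcases List.mem_append.1 hd with hd | hd
      exacts [h1 d hd, h1' d hd]
    · rcases hr with hr | hr
      · obtain ⟨d, hd, hb⟩ := h2 r hr
        exact ⟨d, List.mem_append_left _ hd, le_trans (by linarith [min_le_left δ δ']) hb⟩
      · obtain ⟨d, hd, hb⟩ := h2' r hr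
        exact ⟨d, List.mem_append_right _ hd, le_trans (by linarith [min_le_right δ δ']) hb⟩
  · intro s hs
    obtain ⟨l, z, hz, hD⟩ := h s hs
    have hc := (disc_continuous ha z (L := l * a) (by positivity)).abs
    set D := |Disc (qE (pot a s.1 z) s.2) (l * a)|
    refine ⟨_, mem_nhdsWithin_of_mem_nhds (hc.continuousAt.eventually (Ioi_mem_nhds
      (show 2 * (1 + (D - 2) / 4) < D by linarith))), [(l, z)], (D - 2) / 4, by linarith, ?_, ?_⟩
    · simpa using hz
    · intro r hr
      exact ⟨(l, z), by simp, le_of_lt hr⟩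

/-- The finitely many approximants of `cover`, indexed by natural numbers, with a common multiple `ℓ` of
their periods. -/
lemma cover' {a : ℝ} (ha : 0 < a) {Y : Set (L2I a)} {x : ℤ → L2I a} (hxY : ∀ j, x j ∈ Y) {ε : ℝ} (hε : 0 < ε)
    {C : Set (ℝ × ℝ)} (hC : IsCompact C)
    (h : ∀ s ∈ C, ∃ l z, Approx Y x ε l z ∧ 2 < |Disc (qE (pot a s.1 z) s.2) (l * a)|) :
    ∃ (m ℓ : ℕ) (l : ℕ → ℕ) (z : ℕ → ℤ → L2I a) (δ : ℝ), 0 < δ ∧ 0 < ℓ ∧ (∀ i j, z i j ∈ Y) ∧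
      (∀ i j, ‖x j - z i j‖ < ε) ∧ (∀ i < m, 0 < l i ∧ l i ∣ ℓ ∧ ∀ j : ℤ, z i (j + l i) = z i j) ∧
      ∀ s ∈ C, ∃ i < m, 2 * (1 + δ) ≤ |Disc (qE (pot a s.1 (z i)) s.2) (l i * a)| := by
  obtain ⟨F, δ, hδ, h1, h2⟩ := cover ha hC h
  have hmem : ∀ i (hi : i < F.length), Approx Y x ε F[i].1 F[i].2 := fun i hi => h1 _ (List.getElem_mem hi)
  refine ⟨F.length, (F.map Prod.fst).prod, fun i => if h : i < F.length then F[i].1 else 1,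
    fun i => if h : i < F.length then F[i].2 else x, δ, hδ, ?_, fun i j => ?_, fun i j => ?_, fun i hi => ?_,
    fun s hs => ?_⟩
  · refine List.prod_pos ?_
    intro b hb
    obtain ⟨d, hd, rfl⟩ := List.mem_map.1 hb
    exact (h1 d hd).pos
  · by_cases hi : i < F.length
    · simp only [hi, dif_pos]; exact (hmem i hi).mem j
    · simp only [hi, dif_neg, not_false_iff]; exact hxY j
  · by_cases hi : i < F.length
    · simp only [hi, dif_pos]; exact (hmem i hi).close j
    · simp only [hi, dif_neg, not_false_iff]; simpa using hε
  · simp only [hi, dif_pos]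
    exact ⟨(hmem i hi).pos, List.dvd_prod (List.mem_map.2 ⟨_, List.getElem_mem hi, rfl⟩), (hmem i hi).per⟩
  · obtain ⟨d, hd, hb⟩ := h2 s hs
    obtain ⟨i, hi, rfl⟩ := List.mem_iff_getElem.1 hd
    refine ⟨i, hi, ?_⟩
    simpa only [hi, dif_pos] using hb

/-- If at every energy of `K` some stretch of the period from cell `k0` to cell `k1` has a transfer matrix with
trace at least `G`, then the part of the spectrum in `K` has measure at most `B M² / G`, where `M` is the
period and `B` depends only on the bounds for energies, couplings and pieces. -/
lemma measure_bound {a : ℝ} (ha : 0 < a) {K : Set ℝ} (hK : MeasurableSet K) {R' : ℝ} (hR' : 0 ≤ R')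
    (hKR : ∀ E ∈ K, |E| ≤ R') (Λ R : ℝ) : ∃ B : ℝ, 0 ≤ B ∧ ∀ lam, |lam| ≤ Λ → ∀ y : ℤ → L2I a,
      (∀ j, ‖y j‖ ≤ R) → ∀ M : ℕ, 0 < M → (∀ j : ℤ, y (j + M) = y j) → ∀ G : ℝ, 0 < G →
      (∀ E ∈ K, ∃ k0 k1 : ℕ, k0 + 1 ≤ M ∧ k1 + 1 ≤ M ∧
        G ≤ |Disc (fun t => qE (pot a lam y) E (t + k0 * a)) (k1 * a - k0 * a)|) →
      volume (K ∩ ContSpectrum (pot a lam y)) ≤ ENNReal.ofReal (B * M ^ 2 / G) := by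
  obtain ⟨κ, hκ, Hκ⟩ := deriv_lower ha (2 * (Λ ^ 2 * R ^ 2) + 2 * R' ^ 2 * a)
  obtain ⟨C, HC⟩ := count ha (Λ ^ 2 * R ^ 2)
  set A1 := Λ ^ 2 * R ^ 2 + a + (Real.exp 1 * (R' + 1) + 1) * a with hA1
  have hA1p : 0 ≤ A1 := by positivity
  set B0 := |C| + A1 + a + A1 * a with hB0
  have hB0p : 0 ≤ B0 := by positivity
  refine ⟨Real.pi * B0 / κ, by positivity, fun lam hlam y hy M hM hper G hG hblock => ?_⟩
  have hM1 : (1 : ℝ) ≤ M := by exact_mod_cast hM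
  have hV := pot_li ha lam y
  have hV2 := pot_sq_li ha lam y
  have hL0 : 0 < (M : ℝ) * a := by positivity
  have haL : a ≤ M * a := by nlinarith
  have sub : K ∩ ContSpectrum (pot a lam y) ⊆ K ∩ {E | |Disc (qE (pot a lam y) E) (M * a)| ≤ 2} := by
    rintro E ⟨h1, h2⟩
    refine ⟨h1, ?_⟩
    show |Disc (qE (pot a lam y) E) (M * a)| ≤ 2
    by_contra h3
    exact not_mem_spec hV hV2 hL0 (pot_per ha lam hper) (not_le.1 h3) h2
  refine (measure_mono sub).trans ?_
  have hb := band_measure (D := fun E => Disc (qE (pot a lam y) E) (M * a)) (m := κ * G) (S := K)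
    (n := B0 * M ^ 2)
    (fun E => (disc_deriv hV E hL0.le)) hK (by positivity) (fun E hE hD => by
      obtain ⟨k0, k1, h0, h1, hG'⟩ := hblock E hE
      have c0 : (k0 : ℝ) + 1 ≤ M := by exact_mod_cast h0
      have c1 : (k1 : ℝ) + 1 ≤ M := by exact_mod_cast h1
      have q0 := pot_int_qE ha hlam hy (hKR E hE) (k0 : ℤ)
      have q1 := pot_int_qE ha hlam hy (hKR E hE) (k1 : ℤ)
      rw [Int.cast_natCast] at q0 q1
      have := Hκ (pot a lam y) hV E (li_sq_qE hV hV2 E) (M * a) (k0 * a) (k1 * a) (by positivity) (by nlinarith)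
        (by positivity) (by nlinarith) q0 q1 hD
      rw [(disc_deriv hV E hL0.le).deriv] at this
      refine le_trans ?_ this
      gcongr)
    (fun τ hτ T hT => by
      have i0 := pot_int_sq ha hlam hy 0
      simp only [Int.cast_zero, zero_mul, zero_add] at i0
      have i1 := pot_int_abs ha hlam hy M
      have := HC (pot a lam y) hV hV2 i0 (M * a) R' (M * A1) haL hR' (by rw [hA1]; linarith) τ hτ T
        (fun E hE => ⟨hKR E (hT E hE).1, (hT E hE).2⟩)
      refine this.trans ?_
      have hMM : (M : ℝ) ≤ M ^ 2 := by nlinarith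
      have h1M : (1 : ℝ) ≤ M ^ 2 := by nlinarith
      have t1 : C ≤ |C| * M ^ 2 := (le_abs_self C).trans (by nlinarith [abs_nonneg C])
      have t2 : M * A1 ≤ A1 * M ^ 2 := by nlinarith
      have t3 : M * a ≤ a * M ^ 2 := by nlinarith
      rw [hB0]
      nlinarith)
  refine hb.trans (ENNReal.ofReal_le_ofReal (le_of_eq ?_))
  field_simp

/-- The polynomial factor is absorbed by the exponential one; `m` is the number of cells used up per repetition. -/
lemma final_arith {B δ : ℝ} (hB : 0 ≤ B) (hδ : 0 < δ) {m : ℕ} (hm : 0 < m) (p : ℕ) :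
    ∃ N₀ : ℕ, ∃ c₀ : ℝ, 0 < c₀ ∧ ∀ N : ℕ, N₀ ≤ N → m ≤ N ∧
      B * ((N * p : ℕ) : ℝ) ^ 2 / (2 * (1 + δ) ^ (N / m)) ≤ Real.exp (-(c₀ * N)) := by
  set ρ := Real.log (1 + δ) with hρ
  have hρ0 : 0 < ρ := Real.log_pos (by linarith)
  have hm0 : (0 : ℝ) < m := by exact_mod_cast hm
  set c₀ := ρ / (2 * m) with hc
  have hc0 : 0 < c₀ := by positivity
  have hlo := (isLittleO_pow_exp_pos_mul_atTop 2 hc0).comp_tendsto tendsto_natCast_atTop_atTop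
  set W := B * p ^ 2 * Real.exp ρ / 2 + 1 with hW
  have hW0 : 0 < W := by positivity
  obtain ⟨N1, hN1⟩ := Filter.eventually_atTop.1 (hlo.bound (inv_pos.2 hW0))
  refine ⟨max m N1, c₀, hc0, fun N hN => ⟨(le_max_left _ _).trans hN, ?_⟩⟩
  have h1 := hN1 N ((le_max_right _ _).trans hN)
  simp only [Function.comp, Real.norm_eq_abs] at h1
  rw [abs_of_nonneg (by positivity), abs_of_pos (Real.exp_pos _), inv_mul_eq_div, le_div_iff₀ hW0] at h1
  have hn : (N : ℝ) / m - 1 ≤ ((N / m : ℕ) : ℝ) := by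
    have := Nat.lt_div_mul_add (a := N) hm
    have : (N : ℝ) < (N / m : ℕ) * m + m := by exact_mod_cast this
    rw [sub_le_iff_le_add, div_le_iff₀ hm0]
    linarith
  have hp : Real.exp (2 * c₀ * N - ρ) ≤ (1 + δ) ^ (N / m) := by
    have e : (1 + δ) ^ (N / m) = Real.exp (ρ * (N / m : ℕ)) := by
      rw [mul_comm, Real.exp_nat_mul, hρ, Real.exp_log (by linarith)]
    rw [e, Real.exp_le_exp]
    have : 2 * c₀ * N - ρ = ρ * (N / m - 1) := by rw [hc]; field_simp
    rw [this]
    gcongr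
  have hX : (0:ℝ) < (1 + δ) ^ (N / m) := by positivity
  rw [div_le_iff₀ (by positivity)]
  have h2 : Real.exp (-(c₀ * N)) * (2 * Real.exp (2 * c₀ * N - ρ)) ≤
      Real.exp (-(c₀ * N)) * (2 * (1 + δ) ^ (N / m)) := by gcongr
  refine le_trans ?_ h2
  have e3 : Real.exp (-(c₀ * N)) * (2 * Real.exp (2 * c₀ * N - ρ)) = 2 * (Real.exp (c₀ * N) / Real.exp ρ) := by
    rw [← Real.exp_sub, mul_left_comm, ← Real.exp_add]; congr 2; ring
  rw [e3, ← mul_div_assoc, le_div_iff₀ (Real.exp_pos _)]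
  push_cast
  have : (N:ℝ) ^ 2 * W = B * (N * p) ^ 2 * Real.exp ρ / 2 + N ^ 2 := by rw [hW]; ring
  nlinarith [sq_nonneg (N : ℝ)]

/-- The sequence of period `M` whose fundamental domain `[0, M)` is cut into blocks of length `b`, the
`i`-th block being filled with the corresponding entries of `z i`. -/
def blocks {a : ℝ} (M b : ℕ) (z : ℕ → ℤ → L2I a) (j : ℤ) : L2I a :=
  z ((j % M) / b).toNat (j % M)

lemma blocks_apply {a : ℝ} {M b : ℕ} {z : ℕ → ℤ → L2I a} {i : ℕ} {l : ℕ}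
    (hz : ∀ j : ℤ, z i (j + l) = z i j) (hlb : l ∣ b) {j : ℤ} (h0 : 0 ≤ j) (hj : j < b)
    (hM : (i + 1) * b ≤ M) : blocks M b z (j + (i * b : ℕ)) = z i j := by
  have hb : (0 : ℤ) < b := by omega
  have hM' : ((i : ℤ) + 1) * b ≤ M := by exact_mod_cast hM
  have h1 : (j + (i * b : ℕ)) % (M : ℤ) = j + (i * b : ℕ) := by
    refine Int.emod_eq_of_lt (by positivity) ?_
    push_cast; linarith
  have h2 : (j + (i * b : ℕ)) / (b : ℤ) = i := by
    push_cast
    rw [Int.add_mul_ediv_right _ _ hb.ne', Int.ediv_eq_zero_of_lt h0 hj, zero_add]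
  unfold blocks
  rw [h1, h2, Int.toNat_natCast]
  obtain ⟨k, rfl⟩ := hlb
  have := per_emod hz j (i * k)
  rw [← this]
  congr 1; push_cast; ring

/-- Over the `i`-th block, which repeats the approximant `z i` at least `n` times, the transfer matrix has trace
at least `2 (1 + δ) ^ n`. -/
lemma block_disc {a : ℝ} (ha : 0 < a) {M n ℓ : ℕ} {z : ℕ → ℤ → L2I a} {i : ℕ} {l : ℕ} (hℓ : 0 < ℓ) (hl : 0 < l)
    (hz : ∀ j : ℤ, z i (j + l) = z i j) (hlb : l ∣ ℓ) (hM : (i + 1) * (n * ℓ) ≤ M) {lam E δ : ℝ} (hδ : 0 < δ)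
    (hD : 2 * (1 + δ) ≤ |Disc (qE (pot a lam (z i)) E) (l * a)|) :
    2 * (1 + δ) ^ n ≤ |Disc (fun t => qE (pot a lam (blocks M (n * ℓ) z)) E (t + (i * (n * ℓ) : ℕ) * a))
      (((i + 1) * (n * ℓ) : ℕ) * a - (i * (n * ℓ) : ℕ) * a)| := by
  set y := blocks M (n * ℓ) z with hy
  have hL : (((i + 1) * (n * ℓ) : ℕ) : ℝ) * a - (i * (n * ℓ) : ℕ) * a = (n * ℓ : ℕ) * a := by push_cast; ring
  rw [hL]
  have hlm : ∀ x, qE (pot a lam (z i)) E (x + l * a) = qE (pot a lam (z i)) E x := fun x => by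
    simp only [qE]; rw [pot_per ha lam hz]
  have e : Disc (fun t => qE (pot a lam y) E (t + (i * (n * ℓ) : ℕ) * a)) ((n * ℓ : ℕ) * a) =
      Disc (qE (pot a lam (z i)) E) ((n * ℓ : ℕ) * a) := by
    refine disc_congr (li_qE (pot_li ha _ _) E) (li_shift (li_qE (pot_li ha _ _) E) _) (by positivity)
      (Filter.Eventually.of_forall fun t ht => ?_)
    have := aggC_shift ha y t ((i * (n * ℓ) : ℕ) : ℤ)
    simp only [qE, pot]
    rw [Int.cast_natCast] at this
    rw [this]
    congr 2
    unfold aggC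
    have f0 : 0 ≤ ⌊t / a⌋ := Int.floor_nonneg.2 (div_nonneg ht.1.le ha.le)
    have f1 : ⌊t / a⌋ < ((n * ℓ : ℕ) : ℤ) := by
      rw [Int.floor_lt, div_lt_iff₀ ha]; exact_mod_cast ht.2
    simp only [hy]
    rw [blocks_apply hz (hlb.mul_left n) f0 f1 hM]
  rw [e]
  obtain ⟨k, rfl⟩ := hlb
  have hk : 0 < k := Nat.pos_of_mul_pos_left hℓ
  have := disc_pow (li_qE (pot_li ha lam (z i)) E) hlm hδ.le hD (n * k)
  have e2 : ((n * (l * k) : ℕ) : ℝ) * a = (n * k : ℕ) * (l * a) := by push_cast; ring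
  rw [e2]
  refine le_trans ?_ this
  gcongr
  · linarith
  · exact Nat.le_mul_of_pos_right n hk

end ThinSpec

/-- Thin spectra for continuum periodic approximants, uniformly in a compact set
`Z` of coupling constants: if `λY` is gap-rich with exceptional set `S` for all
`λ ∈ Z`, then any periodic `x ∈ per(ℤ,Y)` of minimal period `p` can be
`ε`-approximated by `Np`-periodic `y` with `Leb(K ∩ σ(L_{λy})) ≤ e^{-c₀N}` for
all `λ ∈ Z` and all large `N`, for compact `K ⊆ ℝ∖S`. -/
theorem continuum_thin_spectrum_periodic_coupling (a : ℝ) (ha : 0 < a)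
    (S : Set ℝ) (hS : IsDiscreteSet S)
    (Y : Set (L2I a)) (hY : Perfect Y)
    (Z : Set ℝ) (hZ0 : ∀ lam ∈ Z, lam ≠ 0) (hZc : IsCompact Z)
    (hGR : ∀ lam ∈ Z, GapRichC a ((fun φ => lam • φ) '' Y) S)
    (x : ℤ → L2I a) (hxY : ∀ j, x j ∈ Y)
    (p : ℕ) (hp : 0 < p) (hper : ∀ j : ℤ, x (j + (p : ℤ)) = x j)
    (hmin : ∀ q : ℕ, 0 < q → (∀ j : ℤ, x (j + (q : ℤ)) = x j) → p ≤ q)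
    (ε : ℝ) (hε : 0 < ε) (K : Set ℝ) (hKc : IsCompact K) (hKS : K ⊆ Sᶜ) :
    ∃ N₀ : ℕ, ∃ c₀ : ℝ, 0 < c₀ ∧
      ∀ N : ℕ, N₀ ≤ N →
        ∃ y : ℤ → L2I a,
          (∀ j, y j ∈ Y) ∧
          (∀ j : ℤ, y (j + ((N * p : ℕ) : ℤ)) = y j) ∧
          (∀ j : ℤ, ‖x j - y j‖ < ε) ∧
          ∀ lam ∈ Z,
            volume (K ∩ ContSpectrum (fun t => lam * aggC a y t)) ≤
              ENNReal.ofReal (Real.exp (-(c₀ * N))) := by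
  obtain ⟨m, ℓ, l, z, δ, hδ, hℓ, zY, zc, zl, zD⟩ := ThinSpec.cover' ha hxY hε (hZc.prod hKc)
    (fun s hs => ThinSpec.local_gap ha (hZ0 _ hs.1) (hGR _ hs.1) hxY hp hper hε (hKS hs.2))
  obtain ⟨Λ, hΛ⟩ := hZc.exists_bound_of_continuousOn (f := fun t : ℝ => t) continuousOn_id
  obtain ⟨R', hR'⟩ := hKc.exists_bound_of_continuousOn (f := fun t : ℝ => t) continuousOn_id
  -- A common bound for the pieces of `x` and of all its `ε`-approximants.
  set R := (∑ r ∈ Finset.range p, ‖x r‖) + ε with hR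
  have hmod : ∀ (q : ℕ) (j : ℤ), x (j % ((q * p : ℕ) : ℤ)) = x j := by
    intro q j
    have := ThinSpec.per_emod hper (j % ((q * p : ℕ) : ℤ)) (j / ((q * p : ℕ) : ℤ) * q)
    rw [← this]
    congr 1
    have := Int.emod_add_mul_ediv j ((q * p : ℕ) : ℤ)
    push_cast at *
    linarith
  have hxR : ∀ j, ‖x j‖ ≤ ∑ r ∈ Finset.range p, ‖x r‖ := by
    intro j
    have h0 : 0 ≤ j % (p : ℤ) := Int.emod_nonneg j (by exact_mod_cast hp.ne')
    have h1 : j % (p : ℤ) < p := Int.emod_lt_of_pos j (by exact_mod_cast hp)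
    have e := hmod 1 j
    rw [one_mul] at e
    obtain ⟨r, hr⟩ := Int.eq_ofNat_of_zero_le h0
    rw [← e, hr]
    exact Finset.single_le_sum (f := fun r : ℕ => ‖x r‖) (fun _ _ => norm_nonneg _)
      (Finset.mem_range.2 (by omega))
  obtain ⟨B, hB, HB⟩ := ThinSpec.measure_bound ha hKc.measurableSet (abs_nonneg R')
    (fun E hE => (hR' E hE).trans (le_abs_self R')) Λ R
  obtain ⟨N₀, c₀, hc₀, HN⟩ := ThinSpec.final_arith hB hδ (Nat.succ_pos (m * ℓ)) p
  refine ⟨N₀, c₀, hc₀, fun N hN => ?_⟩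
  obtain ⟨hmN, hfin⟩ := HN N hN
  -- `n` is the number of repetitions per block; the extra `+ 1` leaves a free cell at the end of the period,
  -- as `measure_bound` requires `k1 + 1 ≤ M`.
  set n := N / (m * ℓ).succ with hn
  have hn1 : 1 ≤ n := (Nat.one_le_div_iff (Nat.succ_pos _)).2 hmN
  have hnN : n * (m * ℓ + 1) ≤ N := Nat.div_mul_le_self N (m * ℓ).succ
  have hNp : N ≤ N * p := Nat.le_mul_of_pos_right N hp
  have hM : 0 < N * p := Nat.mul_pos (by nlinarith) hp
  set y := ThinSpec.blocks (N * p) (n * ℓ) z with hy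
  have yper : ∀ j : ℤ, y (j + ((N * p : ℕ) : ℤ)) = y j := fun j => by
    simp only [hy, ThinSpec.blocks, Int.add_emod_right]
  have yc : ∀ j, ‖x j - y j‖ < ε := fun j => by
    rw [← hmod N j]; exact zc _ _
  refine ⟨y, fun j => zY _ _, yper, yc, fun lam hlam => ?_⟩
  refine (HB lam (hΛ lam hlam) y (fun j => ?_) (N * p) hM yper (2 * (1 + δ) ^ n) (by positivity)
    fun E hE => ?_).trans (ENNReal.ofReal_le_ofReal hfin)
  · have := norm_sub_norm_le (y j) (x j)
    rw [norm_sub_rev] at this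
    linarith [yc j, hxR j]
  · obtain ⟨i, hi, hD⟩ := zD (lam, E) ⟨hlam, hE⟩
    obtain ⟨l0, ldvd, lper⟩ := zl i hi
    have hbl : (i + 1) * (n * ℓ) + 1 ≤ N * p := by
      have : (i + 1) * (n * ℓ) ≤ m * (n * ℓ) := Nat.mul_le_mul_right _ hi
      nlinarith
    exact ⟨i * (n * ℓ), (i + 1) * (n * ℓ), by nlinarith [Nat.zero_le (n * ℓ)], hbl,
      ThinSpec.block_disc ha hℓ l0 lper ldvd (by omega) hδ hD⟩
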